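/- Let λ_i^{(a)} (i,a ∈ {1,2,3}) be nine nonnegative real numbers satisfying λ_1^{(a)} ≤ λ_2^{(a)} ≤ λ_3^{(a)} and λ_1^{(a)} + λ_2^{(a)} + λ_3^{(a)} = 1 for each a. Then there exists a pure three-qutrit state whose three one-particle reduced density matrices have (increasingly ordered) eigenvalues λ_1^{(a)} ≤ λ_2^{(a)} ≤ λ_3^{(a)} for a = 1,2,3 if and only if for every permutation (a,b,c) of (1,2,3) the following seven inequalities hold: (1) λ_2^{(a)}+λ_1^{(a)} ≤ λ_2^{(b)}+λ_1^{(b)}+λ_2^{(c)}+λ_1^{(c)}; (2) λ_3^{(a)}+λ_1^{(a)} ≤ λ_2^{(b)}+λ_1^{(b)}+λ_3^{(c)}+λ_1^{(c)}; (3) λ_2^{(a)}+λ_3^{(a)} ≤ λ_2^{(b)}+λ_1^{(b)}+λ_2^{(c)}+λ_3^{(c)}; (4) 2λ_2^{(a)}+λ_1^{(a)} ≤ 2λ_2^{(b)}+λ_1^{(b)}+2λ_2^{(c)}+λ_1^{(c)}; (5) 2λ_1^{(a)}+λ_2^{(a)} ≤ 2λ_2^{(b)}+λ_1^{(b)}+2λ_1^{(c)}+λ_2^{(c)};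 (6) 2λ_2^{(a)}+λ_3^{(a)} ≤ 2λ_2^{(b)}+λ_1^{(b)}+2λ_2^{(c)}+λ_3^{(c)}; (7) 2λ_2^{(a)}+λ_3^{(a)} ≤ 2λ_1^{(b)}+λ_2^{(b)}+2λ_3^{(c)}+λ_2^{(c)}. -/

import Mathlib

open scoped BigOperators

/-- The one-particle reduced density matrix of the first qutrit. -/
noncomputable def rho1 (c : Fin 3 → Fin 3 → Fin 3 → ℂ) : Matrix (Fin 3) (Fin 3) ℂ :=
  Matrix.of fun i i' => ∑ j : Fin 3, ∑ k : Fin 3, c i j k * (starRingEnd ℂ) (c i' j k)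

/-- The one-particle reduced density matrix of the second qutrit. -/
noncomputable def rho2 (c : Fin 3 → Fin 3 → Fin 3 → ℂ) : Matrix (Fin 3) (Fin 3) ℂ :=
  Matrix.of fun j j' => ∑ i : Fin 3, ∑ k : Fin 3, c i j k * (starRingEnd ℂ) (c i j' k)

/-- The one-particle reduced density matrix of the third qutrit. -/
noncomputable def rho3 (c : Fin 3 → Fin 3 → Fin 3 → ℂ) : Matrix (Fin 3) (Fin 3) ℂ :=
  Matrix.of fun k k' => ∑ i : Fin 3, ∑ j : Fin 3, c i j k * (starRingEnd ℂ) (c i j k')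

/-- `l` lists the eigenvalues of the Hermitian matrix `M` in increasing order. -/
def IsOrderedSpectrum (M : Matrix (Fin 3) (Fin 3) ℂ) (l : Fin 3 → ℝ) : Prop :=
  Monotone l ∧ ∃ hM : M.IsHermitian, ∃ σ : Equiv.Perm (Fin 3),
    ∀ i, l i = hM.eigenvalues (σ i)


namespace TQ

open Matrix

/-- Three-qutrit tensors. -/
abbrev Ten := Fin 3 → Fin 3 → Fin 3 → ℂ
/-- Complex three by three matrices. -/
abbrev Mat := Matrix (Fin 3) (Fin 3) ℂ

/-- Swap of the first two factors. -/
def sw12 (c : Ten) : Ten := fun i j k => c j i k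
/-- Swap of the last two factors. -/
def sw23 (c : Ten) : Ten := fun i j k => c i k j

/-- Action on the first factor. -/
def act1 (A : Mat) (c : Ten) : Ten := fun i j k => ∑ a, A i a * c a j k
/-- Action on the second factor. -/
def act2 (A : Mat) (c : Ten) : Ten := fun i j k => ∑ a, A j a * c i a k
/-- Action on the third factor. -/
def act3 (A : Mat) (c : Ten) : Ten := fun i j k => ∑ a, A k a * c i j a

/-- Simultaneous action on the three factors. -/
def act (A B C : Mat) (c : Ten) : Ten := act1 A (act2 B (act3 C c))

/-- Squared norm. -/
noncomputable def nsq (c : Ten) : ℝ := ∑ i, ∑ j, ∑ k, ‖c i j k‖ ^ 2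

@[simp] lemma sw12_sw12 (c : Ten) : sw12 (sw12 c) = c := rfl
@[simp] lemma sw23_sw23 (c : Ten) : sw23 (sw23 c) = c := rfl

lemma nsq_sw12 (c : Ten) : nsq (sw12 c) = nsq c := by
  unfold nsq sw12; rw [Finset.sum_comm]
lemma nsq_sw23 (c : Ten) : nsq (sw23 c) = nsq c := by
  unfold nsq sw23
  refine Finset.sum_congr rfl fun i _ => ?_
  rw [Finset.sum_comm]

lemma act1_act1 (A A' : Mat) (c : Ten) : act1 A (act1 A' c) = act1 (A * A') c := by
  funext i j k
  simp only [act1, Matrix.mul_apply, Finset.mul_sum, Finset.sum_mul]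
  rw [Finset.sum_comm]
  simp only [mul_assoc]

lemma sw12_act1 (A : Mat) (c : Ten) : sw12 (act1 A c) = act2 A (sw12 c) := rfl
lemma sw12_act2 (A : Mat) (c : Ten) : sw12 (act2 A c) = act1 A (sw12 c) := rfl
lemma sw12_act3 (A : Mat) (c : Ten) : sw12 (act3 A c) = act3 A (sw12 c) := rfl
lemma sw23_act1 (A : Mat) (c : Ten) : sw23 (act1 A c) = act1 A (sw23 c) := rfl
lemma sw23_act2 (A : Mat) (c : Ten) : sw23 (act2 A c) = act3 A (sw23 c) := rfl
lemma sw23_act3 (A : Mat) (c : Ten) : sw23 (act3 A c) = act2 A (sw23 c) := rfl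

lemma act2_act2 (A A' : Mat) (c : Ten) : act2 A (act2 A' c) = act2 (A * A') c := by
  have := congrArg sw12 (act1_act1 A A' (sw12 c))
  simpa [sw12_act1] using this
lemma act3_act3 (A A' : Mat) (c : Ten) : act3 A (act3 A' c) = act3 (A * A') c := by
  have := congrArg sw23 (act2_act2 A A' (sw23 c))
  simpa [sw23_act2] using this

lemma act1_act2 (A B : Mat) (c : Ten) : act1 A (act2 B c) = act2 B (act1 A c) := by
  funext i j k
  simp only [act1, act2, Finset.mul_sum]
  rw [Finset.sum_comm]
  simp only [mul_left_comm]
lemma act1_act3 (A B : Mat) (c : Ten) : act1 A (act3 B c) = act3 B (act1 A c) := by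
  have := congrArg sw23 (act1_act2 A B (sw23 c))
  simpa [sw23_act1, sw23_act2] using this
lemma act2_act3 (A B : Mat) (c : Ten) : act2 A (act3 B c) = act3 B (act2 A c) := by
  have := congrArg sw12 (act1_act3 A B (sw12 c))
  simpa [sw12_act1, sw12_act3] using this

lemma act1_one (c : Ten) : act1 1 c = c := by
  funext i j k; simp [act1, Matrix.one_apply]
lemma act2_one (c : Ten) : act2 1 c = c := by
  funext i j k; simp [act2, Matrix.one_apply]
lemma act3_one (c : Ten) : act3 1 c = c := by
  funext i j k; simp [act3, Matrix.one_apply]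

lemma act_act (A B C A' B' C' : Mat) (c : Ten) :
    act A B C (act A' B' C' c) = act (A * A') (B * B') (C * C') c := by
  unfold act
  rw [← act1_act1, ← act2_act2, ← act3_act3]
  simp only [act1_act2, act1_act3, act2_act3]

lemma act_one (c : Ten) : act 1 1 1 c = c := by
  simp [act, act1_one, act2_one, act3_one]

lemma sw12_act (A B C : Mat) (c : Ten) : sw12 (act A B C c) = act B A C (sw12 c) := by
  unfold act
  rw [sw12_act1, sw12_act2, sw12_act3, act1_act2]
lemma sw23_act (A B C : Mat) (c : Ten) : sw23 (act A B C c) = act A C B (sw23 c) := by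
  unfold act
  rw [sw23_act1, sw23_act2, sw23_act3, act2_act3]

lemma rho2_eq (c : Ten) : rho2 c = rho1 (sw12 c) := rfl
lemma rho3_eq (c : Ten) : rho3 c = rho2 (sw23 c) := rfl
lemma rho1_sw23 (c : Ten) : rho1 (sw23 c) = rho1 c := by
  unfold rho1 sw23
  congr 1; funext i i'
  rw [Finset.sum_comm]
lemma rho1_sw12 (c : Ten) : rho1 (sw12 c) = rho2 c := rfl
lemma rho2_sw12 (c : Ten) : rho2 (sw12 c) = rho1 c := rfl
lemma rho2_sw23 (c : Ten) : rho2 (sw23 c) = rho3 c := rfl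
lemma rho3_sw23 (c : Ten) : rho3 (sw23 c) = rho2 c := rfl
lemma rho3_sw12 (c : Ten) : rho3 (sw12 c) = rho3 c := by
  unfold rho3 sw12
  congr 1; funext i i'
  rw [Finset.sum_comm]

lemma rho1_act1 (A : Mat) (c : Ten) : rho1 (act1 A c) = A * rho1 c * Aᴴ := by
  ext i i'
  simp only [rho1, act1, Matrix.of_apply, Matrix.mul_apply, Matrix.conjTranspose_apply, map_sum,
    map_mul, Finset.sum_mul_sum, Finset.sum_mul, Finset.mul_sum, Fin.sum_univ_three,
    RCLike.star_def, map_add]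
  ring

lemma rho1_act2 (U : Mat) (hU : Uᴴ * U = 1) (c : Ten) : rho1 (act2 U c) = rho1 c := by
  have h : ∀ a b, ∑ j, star (U j a) * U j b = if a = b then 1 else 0 := by
    intro a b
    have := congrFun (congrFun hU a) b
    simpa [Matrix.mul_apply, Matrix.one_apply] using this
  ext i i'
  simp only [rho1, act2, Matrix.of_apply, map_sum, map_mul, Finset.sum_mul_sum]
  have : ∀ j k, ∑ a, ∑ b, U j a * c i a k * ((starRingEnd ℂ) (U j b) * (starRingEnd ℂ) (c i' b k))
      = ∑ a, ∑ b, (star (U j b) * U j a) * (c i a k * (starRingEnd ℂ) (c i' b k)) := by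
    intro j k
    refine Finset.sum_congr rfl fun a _ => Finset.sum_congr rfl fun b _ => ?_
    simp only [starRingEnd_apply]; ring
  simp only [this]
  rw [Finset.sum_comm]
  conv_rhs => rw [Finset.sum_comm]
  refine Finset.sum_congr rfl fun k _ => ?_
  rw [Finset.sum_comm]
  refine Finset.sum_congr rfl fun a _ => ?_
  rw [Finset.sum_comm]
  simp only [← Finset.sum_mul, h]
  simp

lemma rho1_act3 (U : Mat) (hU : Uᴴ * U = 1) (c : Ten) : rho1 (act3 U c) = rho1 c := by
  rw [← rho1_sw23, sw23_act3, rho1_act2 U hU, rho1_sw23]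

lemma rho1_act (A U V : Mat) (hU : Uᴴ * U = 1) (hV : Vᴴ * V = 1) (c : Ten) :
    rho1 (act A U V c) = A * rho1 c * Aᴴ := by
  unfold act
  rw [rho1_act1, rho1_act2 U hU, rho1_act3 V hV]
lemma rho2_act (A U V : Mat) (hU : Uᴴ * U = 1) (hV : Vᴴ * V = 1) (c : Ten) :
    rho2 (act U A V c) = A * rho2 c * Aᴴ := by
  rw [rho2_eq, sw12_act, rho1_act _ _ _ hU hV, rho1_sw12]
lemma rho3_act (A U V : Mat) (hU : Uᴴ * U = 1) (hV : Vᴴ * V = 1) (c : Ten) :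
    rho3 (act U V A c) = A * rho3 c * Aᴴ := by
  rw [rho3_eq, sw23_act, rho2_act _ _ _ hU hV, rho2_sw23]

lemma rho1_diag (c : Ten) (i : Fin 3) : rho1 c i i = ((∑ j, ∑ k, ‖c i j k‖ ^ 2 : ℝ) : ℂ) := by
  simp only [rho1, Matrix.of_apply, Complex.mul_conj, Complex.normSq_eq_norm_sq]
  push_cast; rfl

lemma rho2_diag (c : Ten) (j : Fin 3) : rho2 c j j = ((∑ i, ∑ k, ‖c i j k‖ ^ 2 : ℝ) : ℂ) := by
  rw [rho2_eq, rho1_diag]; rfl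
lemma rho3_diag (c : Ten) (k : Fin 3) : rho3 c k k = ((∑ i, ∑ j, ‖c i j k‖ ^ 2 : ℝ) : ℂ) := by
  rw [rho3_eq, rho2_diag]; rfl

lemma nsq_eq_trace (c : Ten) : (nsq c : ℂ) = (rho1 c).trace := by
  simp only [Matrix.trace, Matrix.diag, rho1_diag, nsq]
  push_cast; rfl

lemma nsq_act_unitary (U V W : Mat) (hU : Uᴴ * U = 1) (hV : Vᴴ * V = 1) (hW : Wᴴ * W = 1)
    (c : Ten) : nsq (act U V W c) = nsq c := by
  have : (nsq (act U V W c) : ℂ) = nsq c := by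
    rw [nsq_eq_trace, nsq_eq_trace, rho1_act _ _ _ hV hW, Matrix.trace_mul_comm, ← mul_assoc, hU,
      one_mul]
  exact_mod_cast this

lemma nsq_nonneg (c : Ten) : 0 ≤ nsq c := by unfold nsq; positivity

set_option linter.unusedVariables false
set_option linter.unusedSimpArgs false

/-! ### Necessity -/

/-- Three-vectors. -/
abbrev Vec := Fin 3 → ℂ

/-- Bilinear pairing. -/
def dt (f x : Vec) : ℂ := f 0 * x 0 + f 1 * x 1 + f 2 * x 2
/-- Entrywise conjugation. -/
noncomputable def cj (x : Vec) : Vec := fun i => (starRingEnd ℂ) (x i)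
/-- Squared norm of a vector. -/
noncomputable def nv (x : Vec) : ℝ := ‖x 0‖ ^ 2 + ‖x 1‖ ^ 2 + ‖x 2‖ ^ 2
/-- Weighted squared norm. -/
noncomputable def wt (l : Fin 3 → ℝ) (x : Vec) : ℝ :=
  ‖x 0‖ ^ 2 * l 0 + ‖x 1‖ ^ 2 * l 1 + ‖x 2‖ ^ 2 * l 2
/-- Orthonormal triples. -/
def ON (u v n : Vec) : Prop :=
  nv u = 1 ∧ nv v = 1 ∧ nv n = 1 ∧ dt (cj u) v = 0 ∧ dt (cj u) n = 0 ∧ dt (cj v) n = 0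

/-- Standard basis. -/
def E0 : Vec := ![1, 0, 0]
/-- Standard basis. -/
def E1 : Vec := ![0, 1, 0]
/-- Standard basis. -/
def E2 : Vec := ![0, 0, 1]

lemma nv_E0 : nv E0 = 1 := by simp [nv, E0]
lemma nv_E1 : nv E1 = 1 := by simp [nv, E1]
lemma nv_E2 : nv E2 = 1 := by simp [nv, E2]

lemma nv_cj (x : Vec) : nv (cj x) = nv x := by simp [nv, cj]

lemma dt_cj_comm (x y : Vec) (h : dt (cj x) y = 0) : dt (cj y) x = 0 := by
  have := congrArg (starRingEnd ℂ) h
  simp only [dt, cj, map_add, map_mul, Complex.conj_conj, map_zero] at this ⊢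
  linear_combination this

lemma dt_cj_self (x : Vec) : dt (cj x) x = nv x := by
  simp only [dt, cj, nv, Complex.conj_mul']
  push_cast; ring

lemma nv_smul (a : ℂ) (x : Vec) : nv (a • x) = ‖a‖ ^ 2 * nv x := by
  simp [nv, mul_pow]; ring

lemma dt_smul (a : ℂ) (f x : Vec) : dt f (a • x) = a * dt f x := by
  simp [dt]; ring

lemma nv_pos (x : Vec) (h : x ≠ 0) : 0 < nv x := by
  by_contra hc
  apply h
  unfold nv at hc
  have h0 := sq_nonneg ‖x 0‖
  have h1 := sq_nonneg ‖x 1‖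
  have h2 := sq_nonneg ‖x 2‖
  have e0 : ‖x 0‖ ^ 2 = 0 := by linarith
  have e1 : ‖x 1‖ ^ 2 = 0 := by linarith
  have e2 : ‖x 2‖ ^ 2 = 0 := by linarith
  funext i
  fin_cases i
  · simpa using e0
  · simpa using e1
  · simpa using e2

/-- Normalization. -/
lemma exists_normalize (x : Vec) (h : x ≠ 0) : ∃ a : ℂ, a ≠ 0 ∧ nv (a • x) = 1 := by
  have hp := nv_pos x h
  have hs : 0 < Real.sqrt (nv x) := Real.sqrt_pos.2 hp
  refine ⟨((Real.sqrt (nv x))⁻¹ : ℝ), by exact_mod_cast (inv_pos.2 hs).ne', ?_⟩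
  rw [nv_smul, Complex.norm_real, Real.norm_eq_abs, sq_abs, inv_pow, Real.sq_sqrt hp.le]
  exact inv_mul_cancel₀ hp.ne'

/-- Two linear functionals on `ℂ³` have a common unit zero. -/
lemma ex2 (f g : Vec) : ∃ x : Vec, nv x = 1 ∧ dt f x = 0 ∧ dt g x = 0 := by
  have hdet : (Matrix.of ![f, g, 0] : Mat).det = 0 :=
    Matrix.det_eq_zero_of_row_eq_zero 2 (fun j => by simp)
  obtain ⟨v, hv, hM⟩ := Matrix.exists_mulVec_eq_zero_iff.2 hdet
  obtain ⟨a, -, ha⟩ := exists_normalize v hv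
  have h0 := congrFun hM 0
  have h1 := congrFun hM 1
  simp [Matrix.mulVec, dotProduct, Fin.sum_univ_three] at h0 h1
  refine ⟨a • v, ha, ?_, ?_⟩
  · rw [dt_smul, dt, h0, mul_zero]
  · rw [dt_smul, dt, h1, mul_zero]

lemma ex_third (u v : Vec) (hu : nv u = 1) (hv : nv v = 1) (h : dt (cj u) v = 0) :
    ∃ n, ON u v n := by
  obtain ⟨n, h1, h2, h3⟩ := ex2 (cj u) (cj v)
  exact ⟨n, hu, hv, h1, h, h2, h3⟩

lemma ex_mid (u n : Vec) (hu : nv u = 1) (hv : nv n = 1) (h : dt (cj u) n = 0) :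
    ∃ v, ON u v n := by
  obtain ⟨v, h1, h2, h3⟩ := ex2 (cj u) (cj n)
  exact ⟨v, hu, h1, hv, h2, h, dt_cj_comm _ _ h3⟩

/-- Given a unit `u` and a functional, complete `u` with the second vector in the kernel. -/
lemma ex_flag (u f : Vec) (hu : nv u = 1) : ∃ v n, ON u v n ∧ dt f v = 0 := by
  obtain ⟨v, h1, h2, h3⟩ := ex2 (cj u) f
  obtain ⟨n, hn⟩ := ex_third u v hu h1 h2
  exact ⟨v, n, hn, h3⟩

/-- If `m` kills `w` and `e`, there is a unit `n` orthogonal to both whose orthogonal complement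
is killed by `m`. -/
lemma ex3 (m w e : Vec) (hw : dt m w = 0) (he : dt m e = 0) :
    ∃ n, nv n = 1 ∧ dt (cj n) w = 0 ∧ dt (cj n) e = 0 ∧ ∀ x, dt (cj n) x = 0 → dt m x = 0 := by
  by_cases hm : m = 0
  · obtain ⟨n, h1, h2, h3⟩ := ex2 (cj w) (cj e)
    refine ⟨n, h1, dt_cj_comm _ _ h2, dt_cj_comm _ _ h3, fun x _ => ?_⟩
    simp [hm, dt]
  · obtain ⟨a, ha, h1⟩ := exists_normalize m hm
    have key : ∀ x, dt (cj (cj (a • m))) x = a * dt m x := by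
      intro x; simp [dt, cj]; ring
    refine ⟨cj (a • m), by rw [nv_cj, h1], by rw [key, hw, mul_zero], by rw [key, he, mul_zero],
      fun x hx => ?_⟩
    rw [key] at hx
    exact (mul_eq_zero.1 hx).resolve_left ha

/-- Contraction over the last two factors. -/
def fA (c : Ten) (y z : Vec) : Vec := fun i => ∑ j, ∑ k, y j * z k * c i j k
/-- Contraction over the outer factors. -/
def fB (c : Ten) (x z : Vec) : Vec := fun j => ∑ i, ∑ k, x i * z k * c i j k
/-- Contraction over the first two factors. -/
def fC (c : Ten) (x y : Vec) : Vec := fun k => ∑ i, ∑ j, x i * y j * c i j k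
/-- Full contraction. -/
def tri (c : Ten) (x y z : Vec) : ℂ := dt (fA c y z) x

lemma tri_B (c : Ten) (x y z : Vec) : tri c x y z = dt (fB c x z) y := by
  simp only [tri, dt, fA, fB, Fin.sum_univ_three]; ring
lemma tri_C (c : Ten) (x y z : Vec) : tri c x y z = dt (fC c x y) z := by
  simp only [tri, dt, fA, fC, Fin.sum_univ_three]; ring

lemma ON_unitary {u v n : Vec} (h : ON u v n) :
    (Matrix.of ![u, v, n] : Mat)ᴴ * Matrix.of ![u, v, n] = 1 := by
  rw [mul_eq_one_comm]
  obtain ⟨h1, h2, h3, h4, h5, h6⟩ := h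
  have h4' := dt_cj_comm _ _ h4
  have h5' := dt_cj_comm _ _ h5
  have h6' := dt_cj_comm _ _ h6
  have h1' := dt_cj_self u
  have h2' := dt_cj_self v
  have h3' := dt_cj_self n
  rw [h1] at h1'; rw [h2] at h2'; rw [h3] at h3'
  simp only [dt, cj, Complex.ofReal_one] at *
  ext i j
  fin_cases i <;> fin_cases j <;>
    simp [Matrix.mul_apply, Fin.sum_univ_three] <;>
    first
      | linear_combination h1' | linear_combination h2' | linear_combination h3'
      | linear_combination h4 | linear_combination h5 | linear_combination h6
      | linear_combination h4' | linear_combination h5' | linear_combination h6'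

/-- Spectral data realized by a tensor in its eigenbases. -/
structure IsR (c : Ten) (la lb lc : Fin 3 → ℝ) : Prop where
  n : nsq c = 1
  r1 : rho1 c = Matrix.diagonal (fun i => (la i : ℂ))
  r2 : rho2 c = Matrix.diagonal (fun i => (lb i : ℂ))
  r3 : rho3 c = Matrix.diagonal (fun i => (lc i : ℂ))

lemma IsR.sw12 {c : Ten} {la lb lc} (h : IsR c la lb lc) : IsR (sw12 c) lb la lc :=
  ⟨by rw [nsq_sw12, h.n], by rw [rho1_sw12, h.r2], by rw [rho2_sw12, h.r1],
    by rw [rho3_sw12, h.r3]⟩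
lemma IsR.sw23 {c : Ten} {la lb lc} (h : IsR c la lb lc) : IsR (sw23 c) la lc lb :=
  ⟨by rw [nsq_sw23, h.n], by rw [rho1_sw23, h.r1], by rw [rho2_sw23, h.r3],
    by rw [rho3_sw23, h.r2]⟩

lemma conj_diag (Q : Mat) (l : Fin 3 → ℝ) (i : Fin 3) :
    (Q * Matrix.diagonal (fun i => (l i : ℂ)) * Qᴴ) i i = (wt l (Q i) : ℂ) := by
  simp only [Matrix.mul_apply, Matrix.diagonal_apply, Matrix.conjTranspose_apply,
    Fin.sum_univ_three, wt, RCLike.star_def]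
  push_cast
  simp only [← Complex.mul_conj']
  simp
  ring

lemma act_apply (A B C : Mat) (c : Ten) (i j k : Fin 3) :
    act A B C c i j k = tri c (A i) (B j) (C k) := by
  simp only [act, act1, act2, act3, tri, dt, fA, Fin.sum_univ_three]; ring

/-- The squared entries of a tensor in three orthonormal bases. -/
lemma entries {c : Ten} {la lb lc} (h : IsR c la lb lc) {A B C : Mat}
    (hA : Aᴴ * A = 1) (hB : Bᴴ * B = 1) (hC : Cᴴ * C = 1) :
    (∑ i, ∑ j, ∑ k, ‖tri c (A i) (B j) (C k)‖ ^ 2 = 1) ∧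
    (∀ i, ∑ j, ∑ k, ‖tri c (A i) (B j) (C k)‖ ^ 2 = wt la (A i)) ∧
    (∀ j, ∑ i, ∑ k, ‖tri c (A i) (B j) (C k)‖ ^ 2 = wt lb (B j)) ∧
    (∀ k, ∑ i, ∑ j, ‖tri c (A i) (B j) (C k)‖ ^ 2 = wt lc (C k)) := by
  simp only [← act_apply]
  refine ⟨?_, fun i => ?_, fun i => ?_, fun i => ?_⟩
  · have := nsq_act_unitary A B C hA hB hC c
    rw [h.n] at this; exact this
  · have := rho1_diag (act A B C c) i
    rw [rho1_act _ _ _ hB hC, h.r1, conj_diag] at this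
    exact_mod_cast this.symm
  · have := rho2_diag (act A B C c) i
    rw [rho2_act _ _ _ hA hC, h.r2, conj_diag] at this
    exact_mod_cast this.symm
  · have := rho3_diag (act A B C c) i
    rw [rho3_act _ _ _ hA hB, h.r3, conj_diag] at this
    exact_mod_cast this.symm

lemma row0 (u v n : Vec) : (Matrix.of ![u, v, n] : Mat) 0 = u := rfl
lemma row1 (u v n : Vec) : (Matrix.of ![u, v, n] : Mat) 1 = v := rfl
lemma row2 (u v n : Vec) : (Matrix.of ![u, v, n] : Mat) 2 = n := rfl

lemma core {c : Ten} {la lb lc} (h : IsR c la lb lc) {u v n x y z p q r : Vec}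
    (ha : ON u v n) (hb : ON x y z) (hc : ON p q r)
    (h1 : tri c u x p = 0) (h2 : tri c v x p = 0) (h3 : tri c u y p = 0) (h4 : tri c u x q = 0) :
    (wt la u - wt la n) + (wt lb x - wt lb z) + (wt lc p - wt lc r) ≤ 1 := by
  obtain ⟨e, e1, e2, e3⟩ := entries h (ON_unitary ha) (ON_unitary hb) (ON_unitary hc)
  have a0 := e1 0
  have a2 := e1 2
  have b0 := e2 0
  have b2 := e2 2
  have c0 := e3 0
  have c2 := e3 2
  simp [Fin.sum_univ_three, row0, row1, row2, h1, h2, h3, h4] at a0 a2 b0 b2 c0 c2 e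
  have N : ∀ x y z, 0 ≤ ‖tri c x y z‖ ^ 2 := fun x y z => sq_nonneg _
  linarith [N u x r, N u y q, N u y r, N u z p, N u z q, N u z r, N v x q, N v x r, N v y p,
    N v y q, N v y r, N v z p, N v z q, N v z r, N n x p, N n x q, N n x r, N n y p, N n y q,
    N n y r, N n z p, N n z q, N n z r]

lemma core' {c : Ten} {la lb lc} (h : IsR c la lb lc) {u v n x y z p q r : Vec}
    (ha : ON u v n) (hb : ON x y z) (hc : ON p q r)
    (h1 : tri c u x p = 0) (h2 : tri c v x p = 0) :
    - wt la n + wt lb x + wt lc p ≤ 1 := by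
  obtain ⟨e, e1, e2, e3⟩ := entries h (ON_unitary ha) (ON_unitary hb) (ON_unitary hc)
  have a2 := e1 2
  have b0 := e2 0
  have c0 := e3 0
  simp [Fin.sum_univ_three, row0, row1, row2, h1, h2] at a2 b0 c0 e
  have N : ∀ x y z, 0 ≤ ‖tri c x y z‖ ^ 2 := fun x y z => sq_nonneg _
  linarith [N u x q, N u y p, N v x q, N v y p, N u x r, N u y q, N u y r, N u z p, N u z q,
    N u z r, N v x r,
    N v y q, N v y r, N v z p, N v z q, N v z r, N n x p, N n x q, N n x r, N n y p, N n y q,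
    N n y r, N n z p, N n z q, N n z r]

lemma wt_E0 {l : Fin 3 → ℝ} : wt l E0 = l 0 := by simp [wt, E0]
lemma wt_E2 {l : Fin 3 → ℝ} : wt l E2 = l 2 := by simp [wt, E2]
lemma wt_ge {l : Fin 3 → ℝ} (h0 : l 0 ≤ l 1) (h1 : l 1 ≤ l 2) {x : Vec} (hx : nv x = 1)
    : l 0 ≤ wt l x := by
  unfold wt; unfold nv at hx
  have hx' := congrArg (l 0 * ·) hx
  nlinarith [mul_nonneg (sq_nonneg ‖x 1‖) (sub_nonneg.2 h0),
    mul_nonneg (sq_nonneg ‖x 2‖) (sub_nonneg.2 (h0.trans h1))]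
lemma wt_le {l : Fin 3 → ℝ} (h0 : l 0 ≤ l 1) (h1 : l 1 ≤ l 2) {x : Vec} (hx : nv x = 1)
    : wt l x ≤ l 2 := by
  unfold wt; unfold nv at hx
  have hx' := congrArg (l 2 * ·) hx
  nlinarith [mul_nonneg (sq_nonneg ‖x 1‖) (sub_nonneg.2 h1),
    mul_nonneg (sq_nonneg ‖x 0‖) (sub_nonneg.2 (h0.trans h1))]
lemma wt_ge1 {l : Fin 3 → ℝ} (h0 : l 0 ≤ l 1) (h1 : l 1 ≤ l 2) {x : Vec} (hx : nv x = 1)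
    (h : dt (cj E0) x = 0) : l 1 ≤ wt l x := by
  unfold wt; unfold nv at hx
  simp [dt, cj, E0] at h
  simp [h] at hx ⊢
  have hx' := congrArg (l 1 * ·) hx
  nlinarith [mul_nonneg (sq_nonneg ‖x 2‖) (sub_nonneg.2 h1)]
lemma wt_le1 {l : Fin 3 → ℝ} (h0 : l 0 ≤ l 1) (h1 : l 1 ≤ l 2) {x : Vec} (hx : nv x = 1)
    (h : dt (cj E2) x = 0) : wt l x ≤ l 1 := by
  unfold wt; unfold nv at hx
  simp [dt, cj, E2] at h
  simp [h] at hx ⊢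
  have hx' := congrArg (l 1 * ·) hx
  nlinarith [mul_nonneg (sq_nonneg ‖x 0‖) (sub_nonneg.2 h0)]

lemma E0_E1 : dt (cj E0) E1 = 0 := by simp [dt, cj, E0, E1]
lemma E0_E2 : dt (cj E0) E2 = 0 := by simp [dt, cj, E0, E2]
lemma E2_E1 : dt (cj E2) E1 = 0 := by simp [dt, cj, E2, E1]
lemma E2_E0 : dt (cj E2) E0 = 0 := by simp [dt, cj, E2, E0]
lemma E1_E0 : dt (cj E1) E0 = 0 := by simp [dt, cj, E1, E0]

lemma ON_std : ON E2 E1 E0 := ⟨nv_E2, nv_E1, nv_E0, E2_E1, E2_E0, E1_E0⟩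

/-- A functional killing the last two basis vectors kills everything with vanishing first entry. -/
lemma dt_span {f x : Vec} (h1 : dt f E1 = 0) (h2 : dt f E2 = 0) (hx : dt (cj E0) x = 0) :
    dt f x = 0 := by
  simp [dt, cj, E0, E1, E2] at *
  simp [h1, h2, hx]

lemma fC_fA {c : Ten} {x y z : Vec} (h : dt (fC c x y) z = 0) : dt (fA c y z) x = 0 := by
  rw [← tri_C] at h; exact h

lemma nec1 {c : Ten} {la lb lc : Fin 3 → ℝ} (h : IsR c la lb lc)
    (a0 : la 0 ≤ la 1) (a1 : la 1 ≤ la 2) (b0 : lb 0 ≤ lb 1) (b1 : lb 1 ≤ lb 2)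
    (c0 : lc 0 ≤ lc 1) (c1 : lc 1 ≤ lc 2) :
    lc 2 + lb 2 ≤ la 2 + 1 := by
  obtain ⟨u, hu, hu1, -⟩ := ex2 (fA c E2 E2) 0
  obtain ⟨v, n, ho, hv⟩ := ex_flag u (fA c E2 E2) hu
  have := core' h ho ON_std ON_std hu1 hv
  rw [wt_E2, wt_E2] at this
  linarith [wt_le a0 a1 ho.2.2.1]

lemma nec2 {c : Ten} {la lb lc : Fin 3 → ℝ} (h : IsR c la lb lc)
    (a0 : la 0 ≤ la 1) (a1 : la 1 ≤ la 2) (b0 : lb 0 ≤ lb 1) (b1 : lb 1 ≤ lb 2)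
    (c0 : lc 0 ≤ lc 1) (c1 : lc 1 ≤ lc 2) :
    lc 1 + lb 2 ≤ la 1 + 1 := by
  obtain ⟨p, hp, hp1, hp2⟩ := ex2 (fC c E2 E2) (cj E0)
  obtain ⟨q, r, hc, -⟩ := ex_flag p 0 hp
  have hk : dt (fA c E2 p) E2 = 0 := fC_fA hp1
  obtain ⟨n, hn, hn1, -, hn2⟩ := ex3 _ _ _ hk hk
  obtain ⟨u, hu, hu1, -⟩ := ex2 (cj n) 0
  obtain ⟨v, hv⟩ := ex_mid u n hu hn (dt_cj_comm _ _ hu1)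
  have := core' h hv ON_std hc (hn2 _ hu1) (hn2 _ (dt_cj_comm _ _ hv.2.2.2.2.2))
  rw [wt_E2] at this
  linarith [wt_le1 a0 a1 hn (dt_cj_comm _ _ hn1), wt_ge1 c0 c1 hp hp2]

lemma nec3 {c : Ten} {la lb lc : Fin 3 → ℝ} (h : IsR c la lb lc)
    (a0 : la 0 ≤ la 1) (a1 : la 1 ≤ la 2) (b0 : lb 0 ≤ lb 1) (b1 : lb 1 ≤ lb 2)
    (c0 : lc 0 ≤ lc 1) (c1 : lc 1 ≤ lc 2) :
    lc 0 + lb 2 ≤ la 0 + 1 := by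
  obtain ⟨p, hp, hp1, hp2⟩ := ex2 (fC c E2 E2) (fC c E1 E2)
  obtain ⟨q, r, hc, -⟩ := ex_flag p 0 hp
  have := core' h ON_std ON_std hc (fC_fA hp1) (fC_fA hp2)
  rw [wt_E2, wt_E0] at this
  linarith [wt_ge c0 c1 hp]

lemma nec4 {c : Ten} {la lb lc : Fin 3 → ℝ} (h : IsR c la lb lc)
    (a0 : la 0 ≤ la 1) (a1 : la 1 ≤ la 2) (b0 : lb 0 ≤ lb 1) (b1 : lb 1 ≤ lb 2)
    (c0 : lc 0 ≤ lc 1) (c1 : lc 1 ≤ lc 2) :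
    (lb 2 - lb 1) + (lc 2 - lc 1) + (la 1 - la 2) ≤ 1 := by
  obtain ⟨u, hu, hu1, hu2⟩ := ex2 (fA c E2 E2) (cj E0)
  obtain ⟨v, n, ho, hv⟩ := ex_flag u (fA c E2 E2) hu
  obtain ⟨y, z, hb, hy⟩ := ex_flag E2 (fB c u E2) nv_E2
  obtain ⟨q, r, hc, hq⟩ := ex_flag E2 (fC c u E2) nv_E2
  rw [← tri_B] at hy
  rw [← tri_C] at hq
  have := core h ho hb hc hu1 hv hy hq
  rw [wt_E2, wt_E2] at this
  linarith [wt_ge1 a0 a1 hu hu2, wt_le a0 a1 ho.2.2.1, wt_le1 b0 b1 hb.2.2.1 hb.2.2.2.2.1,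
    wt_le1 c0 c1 hc.2.2.1 hc.2.2.2.2.1]

lemma nec5 {c : Ten} {la lb lc : Fin 3 → ℝ} (h : IsR c la lb lc)
    (a0 : la 0 ≤ la 1) (a1 : la 1 ≤ la 2) (b0 : lb 0 ≤ lb 1) (b1 : lb 1 ≤ lb 2)
    (c0 : lc 0 ≤ lc 1) (c1 : lc 1 ≤ lc 2) :
    (lb 2 - lb 1) + (lc 2 - lc 0) + (la 0 - la 2) ≤ 1 := by
  obtain ⟨u, hu, hu1, hu2⟩ := ex2 (fA c E2 E2) (fA c E2 E1)
  obtain ⟨v, n, ho, hv⟩ := ex_flag u (fA c E2 E2) hu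
  obtain ⟨y, z, hb, hy⟩ := ex_flag E2 (fB c u E2) nv_E2
  rw [← tri_B] at hy
  have := core h ho hb ON_std hu1 hv hy hu2
  rw [wt_E2, wt_E2, wt_E0] at this
  linarith [wt_ge a0 a1 hu, wt_le a0 a1 ho.2.2.1, wt_le1 b0 b1 hb.2.2.1 hb.2.2.2.2.1]

lemma nec6 {c : Ten} {la lb lc : Fin 3 → ℝ} (h : IsR c la lb lc)
    (a0 : la 0 ≤ la 1) (a1 : la 1 ≤ la 2) (b0 : lb 0 ≤ lb 1) (b1 : lb 1 ≤ lb 2)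
    (c0 : lc 0 ≤ lc 1) (c1 : lc 1 ≤ lc 2) :
    (lb 2 - lb 1) + (lc 0 - lc 1) + (la 1 - la 0) ≤ 1 := by
  obtain ⟨w, hw, hw1, hw2⟩ := ex2 (fC c E1 E2) (fC c E2 E2)
  have k : ∀ x, dt (cj E0) x = 0 → tri c x E2 w = 0 := fun x hx =>
    dt_span (fC_fA hw1) (fC_fA hw2) hx
  obtain ⟨u, hu, hu1, hu2⟩ := ex2 (fA c E2 E2) (cj E0)
  obtain ⟨v, ho⟩ := ex_mid u E0 hu nv_E0 (dt_cj_comm _ _ hu2)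
  have m1 : dt (fC c u E2) w = 0 := by rw [← tri_C]; exact k u hu2
  have m2 : dt (fC c u E2) E2 = 0 := by rw [← tri_C]; exact hu1
  obtain ⟨r, hr, hr1, hr2, hr3⟩ := ex3 _ _ _ m1 m2
  obtain ⟨q, hc⟩ := ex_mid w r hw hr (dt_cj_comm _ _ hr1)
  obtain ⟨y, z, hb, hy⟩ := ex_flag E2 (fB c u w) nv_E2
  rw [← tri_B] at hy
  have hq := hr3 q (dt_cj_comm _ _ hc.2.2.2.2.2)
  rw [← tri_C] at hq
  have := core h ho hb hc (k u hu2) (k v (dt_cj_comm _ _ ho.2.2.2.2.2)) hy hq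
  rw [wt_E2, wt_E0] at this
  linarith [wt_ge1 a0 a1 hu hu2, wt_le1 b0 b1 hb.2.2.1 hb.2.2.2.2.1, wt_ge c0 c1 hw,
    wt_le1 c0 c1 hr (dt_cj_comm _ _ hr2)]

lemma nec7 {c : Ten} {la lb lc : Fin 3 → ℝ} (h : IsR c la lb lc)
    (a0 : la 0 ≤ la 1) (a1 : la 1 ≤ la 2) (b0 : lb 0 ≤ lb 1) (b1 : lb 1 ≤ lb 2)
    (c0 : lc 0 ≤ lc 1) (c1 : lc 1 ≤ lc 2) :
    (lb 2 - lb 0) + (lc 0 - lc 2) + (la 1 - la 0) ≤ 1 := by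
  obtain ⟨w, hw, hw1, hw2⟩ := ex2 (fC c E1 E2) (fC c E2 E2)
  have k : ∀ x, dt (cj E0) x = 0 → tri c x E2 w = 0 := fun x hx =>
    dt_span (fC_fA hw1) (fC_fA hw2) hx
  obtain ⟨u, hu, hu1, hu2⟩ := ex2 (fA c E1 w) (cj E0)
  obtain ⟨v, ho⟩ := ex_mid u E0 hu nv_E0 (dt_cj_comm _ _ hu2)
  obtain ⟨q, r, hc, hq⟩ := ex_flag w (fC c u E2) hw
  rw [← tri_C] at hq
  have := core h ho ON_std hc (k u hu2) (k v (dt_cj_comm _ _ ho.2.2.2.2.2)) hu1 hq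
  rw [wt_E2, wt_E0, wt_E0] at this
  linarith [wt_ge1 a0 a1 hu hu2, wt_ge c0 c1 hw, wt_le c0 c1 hc.2.2.1]

/-- Spectral theorem in the form needed here. -/
lemma diag_of_spectrum {M : Mat} {l : Fin 3 → ℝ} (h : IsOrderedSpectrum M l) :
    ∃ U : Mat, Uᴴ * U = 1 ∧ U * M * Uᴴ = Matrix.diagonal (fun i => (l i : ℂ)) := by
  obtain ⟨-, hM, σ, hσ⟩ := h
  set W : Mat := (hM.eigenvectorUnitary : Mat) with hW
  have hWW : Wᴴ * W = 1 := by
    have := Matrix.mem_unitaryGroup_iff'.1 hM.eigenvectorUnitary.2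
    simpa [Matrix.star_eq_conjTranspose] using this
  have hWW' : W * Wᴴ = 1 := mul_eq_one_comm.1 hWW
  have hs : M = W * Matrix.diagonal (fun i => ((hM.eigenvalues i : ℝ) : ℂ)) * Wᴴ := by
    have := hM.spectral_theorem
    rw [Unitary.conjStarAlgAut_apply] at this
    simpa [Matrix.star_eq_conjTranspose, Function.comp_def] using this
  have hD : Wᴴ * M * W = Matrix.diagonal (fun i => ((hM.eigenvalues i : ℝ) : ℂ)) := by
    conv_lhs => rw [hs]
    calc _ = (Wᴴ * W) * Matrix.diagonal (fun i => ((hM.eigenvalues i : ℝ) : ℂ)) * (Wᴴ * W) := by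
          simp only [mul_assoc]
      _ = _ := by rw [hWW, one_mul, mul_one]
  refine ⟨(Wᴴ).submatrix σ id, ?_, ?_⟩
  · rw [mul_eq_one_comm]
    have : (Wᴴ).submatrix σ id * ((Wᴴ).submatrix σ id)ᴴ = (Wᴴ * W).submatrix σ σ := by
      ext i j
      simp [Matrix.mul_apply]
    rw [this, hWW, Matrix.submatrix_one_equiv]
  · have : (Wᴴ).submatrix σ id * M * ((Wᴴ).submatrix σ id)ᴴ = (Wᴴ * M * W).submatrix σ σ := by
      ext i j
      simp [Matrix.mul_apply]
    rw [this, hD]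
    ext i j
    simp [Matrix.diagonal_apply, hσ]

lemma IsR_of {c : Ten} {la lb lc : Fin 3 → ℝ} (hn : nsq c = 1) (h1 : IsOrderedSpectrum (rho1 c) la)
    (h2 : IsOrderedSpectrum (rho2 c) lb) (h3 : IsOrderedSpectrum (rho3 c) lc) :
    ∃ c', IsR c' la lb lc := by
  obtain ⟨U, hU, hU'⟩ := diag_of_spectrum h1
  obtain ⟨V, hV, hV'⟩ := diag_of_spectrum h2
  obtain ⟨W, hW, hW'⟩ := diag_of_spectrum h3
  refine ⟨act U V W c, ?_, ?_, ?_, ?_⟩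
  · rw [nsq_act_unitary _ _ _ hU hV hW, hn]
  · rw [rho1_act _ _ _ hV hW, hU']
  · rw [rho2_act _ _ _ hU hW, hV']
  · rw [rho3_act _ _ _ hU hV, hW']

/-- The seven inequalities for a fixed ordering. -/
def Seven (la lb lc : Fin 3 → ℝ) : Prop :=
  (la 1 + la 0 ≤ lb 1 + lb 0 + lc 1 + lc 0) ∧
  (la 2 + la 0 ≤ lb 1 + lb 0 + lc 2 + lc 0) ∧
  (la 1 + la 2 ≤ lb 1 + lb 0 + lc 1 + lc 2) ∧
  (2 * la 1 + la 0 ≤ 2 * lb 1 + lb 0 + 2 * lc 1 + lc 0) ∧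
  (2 * la 0 + la 1 ≤ 2 * lb 1 + lb 0 + 2 * lc 0 + lc 1) ∧
  (2 * la 1 + la 2 ≤ 2 * lb 1 + lb 0 + 2 * lc 1 + lc 2) ∧
  (2 * la 1 + la 2 ≤ 2 * lb 0 + lb 1 + 2 * lc 2 + lc 1)

lemma seven_of_IsR {c : Ten} {la lb lc : Fin 3 → ℝ} (h : IsR c la lb lc)
    (a0 : la 0 ≤ la 1) (a1 : la 1 ≤ la 2) (b0 : lb 0 ≤ lb 1) (b1 : lb 1 ≤ lb 2)
    (c0 : lc 0 ≤ lc 1) (c1 : lc 1 ≤ lc 2) (sa : la 0 + la 1 + la 2 = 1)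
    (sb : lb 0 + lb 1 + lb 2 = 1) (sc : lc 0 + lc 1 + lc 2 = 1) : Seven la lb lc := by
  have n1 := nec1 h a0 a1 b0 b1 c0 c1
  have n2 := nec2 h a0 a1 b0 b1 c0 c1
  have n3 := nec3 h a0 a1 b0 b1 c0 c1
  have n4 := nec4 h a0 a1 b0 b1 c0 c1
  have n5 := nec5 h a0 a1 b0 b1 c0 c1
  have n6 := nec6 h a0 a1 b0 b1 c0 c1
  have n7 := nec7 h a0 a1 b0 b1 c0 c1
  refine ⟨?_, ?_, ?_, ?_, ?_, ?_, ?_⟩ <;> linarith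

lemma necessity (l : Fin 3 → Fin 3 → ℝ)
    (hord : ∀ a, l a 0 ≤ l a 1 ∧ l a 1 ≤ l a 2)
    (hsum : ∀ a, l a 0 + l a 1 + l a 2 = 1) {c : Ten} (h : IsR c (l 0) (l 1) (l 2))
    (a b d : Fin 3) (hab : a ≠ b) (had : a ≠ d) (hbd : b ≠ d) : Seven (l a) (l b) (l d) := by
  have key : ∀ {c' : Ten}, IsR c' (l a) (l b) (l d) → Seven (l a) (l b) (l d) := fun h' =>
    seven_of_IsR h' (hord a).1 (hord a).2 (hord b).1 (hord b).2 (hord d).1 (hord d).2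
      (hsum a) (hsum b) (hsum d)
  fin_cases a <;> fin_cases b <;> fin_cases d <;> simp at hab had hbd
  · exact key h
  · exact key h.sw23
  · exact key h.sw12
  · exact key h.sw12.sw23
  · exact key h.sw23.sw12
  · exact key h.sw23.sw12.sw23
set_option linter.unusedVariables false
set_option linter.unusedSimpArgs false

/-! ### Capacity argument -/

/-- Upper triangular with prescribed positive diagonal. -/
def UT (M : Mat) (t : Fin 3 → ℝ) : Prop :=
  (∀ i j, j < i → M i j = 0) ∧ ∀ i, M i i = (Real.exp (t i) : ℂ)

lemma UT.one : UT 1 0 := by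
  refine ⟨fun i j h => by simp [Matrix.one_apply, h.ne'], fun i => by simp⟩

lemma UT.mul {M N : Mat} {t s : Fin 3 → ℝ} (hM : UT M t) (hN : UT N s) : UT (M * N) (t + s) := by
  obtain ⟨a, b⟩ := hM
  obtain ⟨a', b'⟩ := hN
  have a10 := a 1 0 (by decide)
  have a20 := a 2 0 (by decide)
  have a21 := a 2 1 (by decide)
  have b10 := a' 1 0 (by decide)
  have b20 := a' 2 0 (by decide)
  have b21 := a' 2 1 (by decide)
  constructor
  · intro i j h
    fin_cases i <;> fin_cases j <;> simp at h <;>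
      simp [Matrix.mul_apply, Fin.sum_univ_three, a10, a20, a21, b10, b20, b21]
  · intro i
    have h1 := b i
    have h2 := b' i
    simp only [Pi.add_apply, Real.exp_add]
    push_cast
    push_cast at h1 h2
    rw [← h1, ← h2]
    fin_cases i <;>
      simp [Matrix.mul_apply, Fin.sum_univ_three, a10, a20, a21, b10, b20, b21]

lemma UT.det_ne {M : Mat} {t : Fin 3 → ℝ} (h : UT M t) : IsUnit M.det := by
  have : M.det = M 0 0 * M 1 1 * M 2 2 := by
    rw [Matrix.det_fin_three, h.1 1 0 (by decide), h.1 2 0 (by decide), h.1 2 1 (by decide)]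
    ring
  rw [this, h.2, h.2, h.2, isUnit_iff_ne_zero]
  have h0 := fun i => (Real.exp_pos (t i)).ne'
  refine mul_ne_zero (mul_ne_zero ?_ ?_) ?_ <;> exact_mod_cast h0 _

/-- Triples of upper triangular matrices. -/
def UT3 (M : Fin 3 → Mat) (t : Fin 3 → Fin 3 → ℝ) : Prop := ∀ a, UT (M a) (t a)

/-- The pairing of weights. -/
def pair (y t : Fin 3 → Fin 3 → ℝ) : ℝ := ∑ a, ∑ i, y a i * t a i

/-- Action of a triple. -/
def ac (M : Fin 3 → Mat) (c : Ten) : Ten := act (M 0) (M 1) (M 2) c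

lemma ac_ac (M N : Fin 3 → Mat) (c : Ten) : ac M (ac N c) = ac (fun a => M a * N a) c :=
  act_act _ _ _ _ _ _ _

lemma UT3.mul {M N : Fin 3 → Mat} {t s} (hM : UT3 M t) (hN : UT3 N s) :
    UT3 (fun a => M a * N a) (t + s) := fun a => (hM a).mul (hN a)

lemma UT3.one : UT3 1 0 := fun _ => UT.one

lemma pair_add_right (y t s) : pair y (t + s) = pair y t + pair y s := by
  simp only [pair, Pi.add_apply, mul_add, Finset.sum_add_distrib]
lemma pair_add_left (y z t) : pair (y + z) t = pair y t + pair z t := by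
  simp only [pair, Pi.add_apply, add_mul, Finset.sum_add_distrib]
lemma pair_smul_left (r : ℝ) (y t) : pair (r • y) t = r * pair y t := by
  simp only [pair, Pi.smul_apply, smul_eq_mul, Finset.mul_sum, mul_assoc]

lemma act1_smul (a : ℂ) (A : Mat) (c : Ten) : act1 A (a • c) = a • act1 A c := by
  funext i j k; simp only [act1, Pi.smul_apply, smul_eq_mul, Finset.mul_sum]
  exact Finset.sum_congr rfl fun _ _ => by ring
lemma act2_smul (a : ℂ) (A : Mat) (c : Ten) : act2 A (a • c) = a • act2 A c := by
  funext i j k; simp only [act2, Pi.smul_apply, smul_eq_mul, Finset.mul_sum]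
  exact Finset.sum_congr rfl fun _ _ => by ring
lemma act3_smul (a : ℂ) (A : Mat) (c : Ten) : act3 A (a • c) = a • act3 A c := by
  funext i j k; simp only [act3, Pi.smul_apply, smul_eq_mul, Finset.mul_sum]
  exact Finset.sum_congr rfl fun _ _ => by ring
lemma act_smul (a : ℂ) (A B C : Mat) (c : Ten) : act A B C (a • c) = a • act A B C c := by
  simp only [act, act1_smul, act2_smul, act3_smul]

lemma nsq_smul (a : ℂ) (c : Ten) : nsq (a • c) = ‖a‖ ^ 2 * nsq c := by
  simp only [nsq, Pi.smul_apply, smul_eq_mul, norm_mul, mul_pow, Finset.mul_sum]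

lemma norm_sq_le_nsq (c : Ten) (i j k : Fin 3) : ‖c i j k‖ ^ 2 ≤ nsq c := by
  unfold nsq
  calc ‖c i j k‖ ^ 2 ≤ ∑ k, ‖c i j k‖ ^ 2 :=
        Finset.single_le_sum (f := fun k => ‖c i j k‖ ^ 2) (fun _ _ => sq_nonneg _)
          (Finset.mem_univ k)
    _ ≤ ∑ j, ∑ k, ‖c i j k‖ ^ 2 :=
        Finset.single_le_sum (f := fun j => ∑ k, ‖c i j k‖ ^ 2)
          (fun _ _ => Finset.sum_nonneg fun _ _ => sq_nonneg _) (Finset.mem_univ j)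
    _ ≤ _ := Finset.single_le_sum (f := fun i => ∑ j, ∑ k, ‖c i j k‖ ^ 2)
          (fun _ _ => Finset.sum_nonneg fun _ _ => Finset.sum_nonneg fun _ _ => sq_nonneg _)
          (Finset.mem_univ i)

lemma nsq_pos {c : Ten} (h : c ≠ 0) : 0 < nsq c := by
  by_contra hc
  apply h
  funext i j k
  have h1 := norm_sq_le_nsq c i j k
  have h2 : ‖c i j k‖ ^ 2 = 0 := le_antisymm (by linarith) (sq_nonneg _)
  simpa using h2

lemma ac_ne_zero {M t} (h : UT3 M t) {c : Ten} (hc : c ≠ 0) : ac M c ≠ 0 := by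
  intro h0
  apply hc
  have : ac (fun a => (M a)⁻¹) (ac M c) = c := by
    rw [ac_ac]
    have e : ∀ a, (M a)⁻¹ * M a = 1 := fun a => Matrix.nonsing_inv_mul _ (h a).det_ne
    simp only [ac, e]
    exact act_one c
  rw [h0] at this
  rw [← this]
  have e := act_smul 0 (M 0)⁻¹ (M 1)⁻¹ (M 2)⁻¹ 0
  simp only [zero_smul] at e
  exact e

/-- A capacity bound with mass `m` and weights `y`. -/
def Good (c : Ten) (m : ℝ) (y : Fin 3 → Fin 3 → ℝ) : Prop :=
  ∃ K : ℝ, ∀ M t, UT3 M t → 2 * pair y t ≤ m * Real.log (nsq (ac M c)) + K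

lemma Good.zero (c : Ten) : Good c 0 0 := ⟨0, fun M t _ => by simp [pair]⟩

lemma Good.add {c : Ten} {m m' y y'} (h : Good c m y) (h' : Good c m' y') :
    Good c (m + m') (y + y') := by
  obtain ⟨K, hK⟩ := h
  obtain ⟨K', hK'⟩ := h'
  refine ⟨K + K', fun M t hM => ?_⟩
  rw [pair_add_left]
  linarith [hK M t hM, hK' M t hM]

lemma Good.smul {c : Ten} {m y} (h : Good c m y) {r : ℝ} (hr : 0 ≤ r) :
    Good c (r * m) (r • y) := by
  obtain ⟨K, hK⟩ := h
  refine ⟨r * K, fun M t hM => ?_⟩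
  rw [pair_smul_left]
  nlinarith [mul_le_mul_of_nonneg_left (hK M t hM) hr]

lemma continuous_nsq : Continuous nsq := by
  unfold nsq; fun_prop
lemma continuous_ac (M : Fin 3 → Mat) : Continuous (ac M) := by
  unfold ac act act1 act2 act3; fun_prop

lemma isCompact_sphere : IsCompact {c : Ten | nsq c = 1} := by
  refine Metric.isCompact_of_isClosed_isBounded (isClosed_eq continuous_nsq continuous_const) ?_
  refine (Metric.isBounded_closedBall (x := (0 : Ten)) (r := 1)).subset ?_
  intro c hc
  rw [mem_closedBall_zero_iff]
  have h : ∀ i j k, ‖c i j k‖ ≤ 1 := by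
    intro i j k
    have := norm_sq_le_nsq c i j k
    rw [show nsq c = 1 from hc] at this
    exact (sq_le_one_iff₀ (norm_nonneg _)).1 this
  refine (pi_norm_le_iff_of_nonneg zero_le_one).2 fun i => ?_
  refine (pi_norm_le_iff_of_nonneg zero_le_one).2 fun j => ?_
  exact (pi_norm_le_iff_of_nonneg zero_le_one).2 fun k => h i j k

/-- Minimizers of the capacity. -/
lemma exists_extremal {c : Ten} (hc : c ≠ 0) {l : Fin 3 → Fin 3 → ℝ} (h : Good c 1 l) :
    ∃ φ : Ten, nsq φ = 1 ∧ ∀ M t, UT3 M t → Real.exp (2 * pair l t) ≤ nsq (ac M φ) := by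
  obtain ⟨K, hK⟩ := h
  let S : Set ℝ := {r | ∃ M t, UT3 M t ∧ r = nsq (ac M c) * Real.exp (-(2 * pair l t))}
  have hpos : ∀ M t, UT3 M t → 0 < nsq (ac M c) := fun M t h => nsq_pos (ac_ne_zero h hc)
  have hlow : ∀ r ∈ S, Real.exp (-K) ≤ r := by
    rintro r ⟨M, t, hM, rfl⟩
    have h1 := hK M t hM
    have h2 := hpos M t hM
    rw [← Real.exp_log h2, ← Real.exp_add]
    apply Real.exp_le_exp.2
    linarith
  have hne : S.Nonempty := ⟨_, 1, 0, UT3.one, rfl⟩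
  have hbdd : BddBelow S := ⟨_, fun r hr => hlow r hr⟩
  set I := sInf S with hI
  have hIpos : 0 < I := lt_of_lt_of_le (Real.exp_pos _) (le_csInf hne hlow)
  have hseq : ∀ n : ℕ, ∃ φ : Ten, nsq φ = 1 ∧ ∀ M t, UT3 M t →
      (1 / (1 + 1 / ((n : ℝ) + 1))) * Real.exp (2 * pair l t) ≤ nsq (ac M φ) := by
    intro n
    have hn : 0 < 1 / ((n : ℝ) + 1) := by positivity
    have hlt : I < I * (1 + 1 / ((n : ℝ) + 1)) := by nlinarith
    obtain ⟨r, ⟨M, t, hM, rfl⟩, hr⟩ := exists_lt_of_csInf_lt hne hlt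
    have hp := hpos M t hM
    have hs : 0 < Real.sqrt (nsq (ac M c)) := Real.sqrt_pos.2 hp
    have hnorm : ‖(((Real.sqrt (nsq (ac M c)))⁻¹ : ℝ) : ℂ)‖ ^ 2 = (nsq (ac M c))⁻¹ := by
      rw [Complex.norm_real, Real.norm_eq_abs, sq_abs, inv_pow, Real.sq_sqrt hp.le]
    refine ⟨(((Real.sqrt (nsq (ac M c)))⁻¹ : ℝ) : ℂ) • ac M c, ?_, ?_⟩
    · rw [nsq_smul, hnorm, inv_mul_cancel₀ hp.ne']
    · intro N s hN
      have hmem : nsq (ac (fun a => N a * M a) c) * Real.exp (-(2 * pair l (s + t))) ∈ S :=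
        ⟨_, _, hN.mul hM, rfl⟩
      have hle := csInf_le hbdd hmem
      rw [← hI, ← ac_ac, pair_add_right] at hle
      have : ac N ((((Real.sqrt (nsq (ac M c)))⁻¹ : ℝ) : ℂ) • ac M c) =
          (((Real.sqrt (nsq (ac M c)))⁻¹ : ℝ) : ℂ) • ac N (ac M c) := act_smul _ _ _ _ _
      rw [this, nsq_smul, hnorm]
      set A := nsq (ac M c)
      set B := nsq (ac N (ac M c))
      set q := 1 + 1 / ((n : ℝ) + 1) with hq
      have hqpos : 0 < q := by positivity
      have e1 : Real.exp (-(2 * (pair l s + pair l t))) =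
          Real.exp (-(2 * pair l t)) * (Real.exp (2 * pair l s))⁻¹ := by
        rw [← Real.exp_neg, ← Real.exp_add]; congr 1; ring
      rw [e1] at hle
      have hEt := Real.exp_pos (-(2 * pair l t))
      have hEs := Real.exp_pos (2 * pair l s)
      set X := Real.exp (-(2 * pair l t))
      set Y := Real.exp (2 * pair l s)
      -- A * X < I * q and I ≤ B * X / Y
      have h3 : A * X < B * (X * Y⁻¹) * q := lt_of_lt_of_le hr
        (mul_le_mul_of_nonneg_right hle hqpos.le)
      have h4 : A * Y < B * q := by
        have : A * X * Y < B * (X * Y⁻¹) * q * Y := mul_lt_mul_of_pos_right h3 hEs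
        have e : B * (X * Y⁻¹) * q * Y = B * q * X := by field_simp
        rw [e] at this
        nlinarith
      rw [one_div, inv_mul_eq_div, inv_mul_eq_div, div_le_div_iff₀ hqpos hp]
      linarith
  choose φ hφ1 hφ2 using hseq
  obtain ⟨ψ, hψ, f, hf, hlim⟩ := isCompact_sphere.tendsto_subseq (x := φ) hφ1
  refine ⟨ψ, hψ, fun M t hM => ?_⟩
  have l1 : Filter.Tendsto (fun n => nsq (ac M (φ (f n)))) Filter.atTop (nhds (nsq (ac M ψ))) :=
    ((continuous_nsq.comp (continuous_ac M)).tendsto ψ).comp hlim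
  have l2 : Filter.Tendsto (fun n : ℕ => (1 / (1 + 1 / ((n : ℝ) + 1))) * Real.exp (2 * pair l t))
      Filter.atTop (nhds ((1 / (1 + 0)) * Real.exp (2 * pair l t))) := by
    refine Filter.Tendsto.mul_const _ ?_
    refine Filter.Tendsto.div tendsto_const_nhds ?_ (by norm_num)
    exact tendsto_const_nhds.add tendsto_one_div_add_atTop_nhds_zero_nat
  have l3 := l2.comp hf.tendsto_atTop
  have := le_of_tendsto_of_tendsto' l3 l1 (fun n => hφ2 (f n) M t hM)
  simpa using this

lemma nsq_act1 (M : Mat) (c : Ten) : nsq (act1 M c) = ((M * rho1 c * Mᴴ).trace).re := by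
  rw [← rho1_act1, ← nsq_eq_trace, Complex.ofReal_re]

lemma rho1_herm (c : Ten) (i j : Fin 3) : (starRingEnd ℂ) (rho1 c i j) = rho1 c j i := by
  simp only [rho1, Matrix.of_apply, map_sum, map_mul, Complex.conj_conj]
  exact Finset.sum_congr rfl fun _ _ => Finset.sum_congr rfl fun _ _ => mul_comm _ _

lemma rho1_re_diag (c : Ten) (i : Fin 3) : rho1 c i i = ((rho1 c i i).re : ℂ) := by
  rw [rho1_diag, Complex.ofReal_re]

lemma rho1_diag_nonneg (c : Ten) (i : Fin 3) : 0 ≤ (rho1 c i i).re := by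
  rw [rho1_diag, Complex.ofReal_re]; positivity

lemma sum_rho1 (c : Ten) : (rho1 c 0 0).re + (rho1 c 1 1).re + (rho1 c 2 2).re = nsq c := by
  have := congrArg Complex.re (nsq_eq_trace c)
  simp [Matrix.trace, Fin.sum_univ_three] at this
  linarith


lemma offdiag_aux (w : ℂ) (r : ℝ) (hr : r ≤ 1)
    (h : ∀ z : ℂ, 0 ≤ 2 * (z * w).re + ‖z‖ ^ 2 * r) : w = 0 := by
  have := h (-(starRingEnd ℂ) w)
  have e : (-(starRingEnd ℂ) w * w).re = - ‖w‖ ^ 2 := by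
    rw [neg_mul, Complex.conj_mul']
    norm_cast
  rw [e, norm_neg, RCLike.norm_conj] at this
  have h2 : ‖w‖ ^ 2 = 0 := le_antisymm (by nlinarith [sq_nonneg ‖w‖]) (sq_nonneg _)
  simpa using h2

lemma diag_aux (r l : ℝ) (h : ∀ s : ℝ, Real.exp (2 * (l * s)) ≤ 1 - r + Real.exp s ^ 2 * r) :
    r = l := by
  let g : ℝ → ℝ := fun s => (1 - r + Real.exp (2 * s) * r) - Real.exp (2 * (l * s))
  have hd : HasDerivAt g (2 * r - 2 * l) 0 := by
    have h1 : HasDerivAt (fun s : ℝ => Real.exp (2 * s)) (Real.exp (2 * 0) * (2 * 1)) 0 :=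
      ((hasDerivAt_id (0 : ℝ)).const_mul 2).exp
    have h2 : HasDerivAt (fun s : ℝ => Real.exp (2 * (l * s)))
        (Real.exp (2 * (l * 0)) * (2 * (l * 1))) 0 :=
      (((hasDerivAt_id (0 : ℝ)).const_mul l).const_mul 2).exp
    have h3 := ((h1.mul_const r).const_add (1 - r)).sub h2
    refine h3.congr_deriv ?_
    simp only [mul_zero, Real.exp_zero]
    ring
  have hmin : IsLocalMin g 0 := by
    refine Filter.Eventually.of_forall fun s => ?_
    have := h s
    have e : Real.exp s ^ 2 = Real.exp (2 * s) := by rw [two_mul, Real.exp_add, sq]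
    rw [e] at this
    simp only [g, mul_zero, Real.exp_zero]
    linarith
  have := hmin.hasDerivAt_eq_zero hd
  linarith

lemma trace_expand (M R : Mat) : (M * R * Mᴴ).trace =
    ∑ i, ∑ b, ∑ a, M i a * R a b * (starRingEnd ℂ) (M i b) := by
  simp only [Matrix.trace, Matrix.diag, Matrix.mul_apply, Matrix.conjTranspose_apply,
    Finset.sum_mul, RCLike.star_def]

/-- Extremality in the first factor pins down the reduced density matrix. -/
lemma rho1_of_extremal {φ : Ten} (hn : nsq φ = 1) {l : Fin 3 → ℝ}
    (h : ∀ M t, UT M t → Real.exp (2 * ∑ i, l i * t i) ≤ nsq (act1 M φ)) :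
    rho1 φ = Matrix.diagonal (fun i => (l i : ℂ)) := by
  have hs := sum_rho1 φ
  rw [hn] at hs
  have n0 := rho1_diag_nonneg φ 0
  have n1 := rho1_diag_nonneg φ 1
  have n2 := rho1_diag_nonneg φ 2
  have hdiag : ∀ t : Fin 3 → ℝ, Real.exp (2 * (l 0 * t 0 + l 1 * t 1 + l 2 * t 2)) ≤
      Real.exp (t 0) ^ 2 * (rho1 φ 0 0).re + Real.exp (t 1) ^ 2 * (rho1 φ 1 1).re +
      Real.exp (t 2) ^ 2 * (rho1 φ 2 2).re := by
    intro t
    have hU : UT (Matrix.diagonal fun i => (Real.exp (t i) : ℂ)) t :=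
      ⟨fun i j hij => Matrix.diagonal_apply_ne _ hij.ne', fun i => Matrix.diagonal_apply_eq _ _⟩
    have := h _ t hU
    rw [nsq_act1] at this
    have e : (Matrix.trace ((Matrix.diagonal fun i => (Real.exp (t i) : ℂ)) * rho1 φ *
        (Matrix.diagonal fun i => (Real.exp (t i) : ℂ))ᴴ)) =
        ((Real.exp (t 0) ^ 2 * (rho1 φ 0 0).re + Real.exp (t 1) ^ 2 * (rho1 φ 1 1).re +
      Real.exp (t 2) ^ 2 * (rho1 φ 2 2).re : ℝ) : ℂ) := by
      rw [Matrix.diagonal_conjTranspose]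
      simp only [Matrix.trace, Matrix.diag, Fin.sum_univ_three, Matrix.mul_diagonal,
        Matrix.diagonal_mul, Pi.star_apply, RCLike.star_def, Complex.conj_ofReal]
      push_cast
      rw [← rho1_re_diag, ← rho1_re_diag, ← rho1_re_diag]
      ring
    rw [e, Complex.ofReal_re, Fin.sum_univ_three] at this
    exact this
  have d0 : (rho1 φ 0 0).re = l 0 := by
    refine diag_aux _ _ fun s => ?_
    have := hdiag ![s, 0, 0]
    simp at this
    linarith
  have d1 : (rho1 φ 1 1).re = l 1 := by
    refine diag_aux _ _ fun s => ?_
    have := hdiag ![0, s, 0]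
    simp at this
    linarith
  have d2 : (rho1 φ 2 2).re = l 2 := by
    refine diag_aux _ _ fun s => ?_
    have := hdiag ![0, 0, s]
    simp at this
    linarith
  have hoff : ∀ M, UT M 0 → 1 ≤ ((M * rho1 φ * Mᴴ).trace).re := by
    intro M hM
    have := h M 0 hM
    rw [nsq_act1] at this
    simpa using this
  have hcr : ∀ (z w : ℂ), (z * w).re = ((starRingEnd ℂ) z * (starRingEnd ℂ) w).re := by
    intro z w; rw [← map_mul, Complex.conj_re]
  have hdd : ∀ (z : ℂ) i, (z * (starRingEnd ℂ) z * rho1 φ i i).re = ‖z‖ ^ 2 * (rho1 φ i i).re := by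
    intro z i
    rw [Complex.mul_conj', ← Complex.ofReal_pow, Complex.re_ofReal_mul]
  have o10 : rho1 φ 1 0 = 0 := by
    refine offdiag_aux _ (rho1 φ 1 1).re (by linarith) fun z => ?_
    have := hoff !![1, z, 0; 0, 1, 0; 0, 0, 1] ⟨by
      intro i j hij; fin_cases i <;> fin_cases j <;> simp at hij <;> simp, by
      intro i; fin_cases i <;> simp⟩
    have e : (!![1, z, 0; 0, 1, 0; 0, 0, 1] * rho1 φ * (!![1, z, 0; 0, 1, 0; 0, 0, 1] : Mat)ᴴ).trace
        = (rho1 φ 0 0 + rho1 φ 1 1 + rho1 φ 2 2) + (z * rho1 φ 1 0) +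
          ((starRingEnd ℂ) z * (starRingEnd ℂ) (rho1 φ 1 0)) +
          z * (starRingEnd ℂ) z * rho1 φ 1 1 := by
      rw [rho1_herm]
      rw [trace_expand]
      simp [Fin.sum_univ_three]
      ring
    rw [e] at this
    simp only [Complex.add_re, ← hcr, hdd] at this
    linarith
  have o20 : rho1 φ 2 0 = 0 := by
    refine offdiag_aux _ (rho1 φ 2 2).re (by linarith) fun z => ?_
    have := hoff !![1, 0, z; 0, 1, 0; 0, 0, 1] ⟨by
      intro i j hij; fin_cases i <;> fin_cases j <;> simp at hij <;> simp, by
      intro i; fin_cases i <;> simp⟩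
    have e : (!![1, 0, z; 0, 1, 0; 0, 0, 1] * rho1 φ * (!![1, 0, z; 0, 1, 0; 0, 0, 1] : Mat)ᴴ).trace
        = (rho1 φ 0 0 + rho1 φ 1 1 + rho1 φ 2 2) + (z * rho1 φ 2 0) +
          ((starRingEnd ℂ) z * (starRingEnd ℂ) (rho1 φ 2 0)) +
          z * (starRingEnd ℂ) z * rho1 φ 2 2 := by
      rw [rho1_herm]
      rw [trace_expand]
      simp [Fin.sum_univ_three]
      ring
    rw [e] at this
    simp only [Complex.add_re, ← hcr, hdd] at this
    linarith
  have o21 : rho1 φ 2 1 = 0 := by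
    refine offdiag_aux _ (rho1 φ 2 2).re (by linarith) fun z => ?_
    have := hoff !![1, 0, 0; 0, 1, z; 0, 0, 1] ⟨by
      intro i j hij; fin_cases i <;> fin_cases j <;> simp at hij <;> simp, by
      intro i; fin_cases i <;> simp⟩
    have e : (!![1, 0, 0; 0, 1, z; 0, 0, 1] * rho1 φ * (!![1, 0, 0; 0, 1, z; 0, 0, 1] : Mat)ᴴ).trace
        = (rho1 φ 0 0 + rho1 φ 1 1 + rho1 φ 2 2) + (z * rho1 φ 2 1) +
          ((starRingEnd ℂ) z * (starRingEnd ℂ) (rho1 φ 2 1)) +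
          z * (starRingEnd ℂ) z * rho1 φ 2 2 := by
      rw [rho1_herm]
      rw [trace_expand]
      simp [Fin.sum_univ_three]
      ring
    rw [e] at this
    simp only [Complex.add_re, ← hcr, hdd] at this
    linarith
  have o01 : rho1 φ 0 1 = 0 := by rw [← rho1_herm, o10, map_zero]
  have o02 : rho1 φ 0 2 = 0 := by rw [← rho1_herm, o20, map_zero]
  have o12 : rho1 φ 1 2 = 0 := by rw [← rho1_herm, o21, map_zero]
  have e0 := rho1_re_diag φ 0
  have e1 := rho1_re_diag φ 1
  have e2 := rho1_re_diag φ 2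
  rw [d0] at e0; rw [d1] at e1; rw [d2] at e2
  ext i j
  fin_cases i <;> fin_cases j <;> simp [o01, o02, o12, o10, o20, o21, e0, e1, e2]

/-- The capacity bound yields a state. -/
lemma exists_state {c : Ten} (hc : c ≠ 0) {l : Fin 3 → Fin 3 → ℝ} (h : Good c 1 l) :
    ∃ φ : Ten, IsR φ (l 0) (l 1) (l 2) := by
  obtain ⟨φ, hn, hφ⟩ := exists_extremal hc h
  refine ⟨φ, hn, ?_, ?_, ?_⟩
  · refine rho1_of_extremal hn fun M t hM => ?_
    have := hφ ![M, 1, 1] ![t, 0, 0] (by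
      intro a; fin_cases a
      · exact hM
      · exact UT.one
      · exact UT.one)
    simpa [pair, Fin.sum_univ_three, ac, act, act2_one, act3_one] using this
  · rw [rho2_eq]
    refine rho1_of_extremal (by rw [nsq_sw12, hn]) fun M t hM => ?_
    have := hφ ![1, M, 1] ![0, t, 0] (by
      intro a; fin_cases a
      · exact UT.one
      · exact hM
      · exact UT.one)
    rw [← nsq_sw12, ac, sw12_act] at this
    simpa [pair, Fin.sum_univ_three, ac, act, act2_one, act3_one] using this
  · rw [rho3_eq, rho2_eq]
    refine rho1_of_extremal (by rw [nsq_sw12, nsq_sw23, hn]) fun M t hM => ?_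
    have := hφ ![1, 1, M] ![0, 0, t] (by
      intro a; fin_cases a
      · exact UT.one
      · exact UT.one
      · exact hM)
    rw [← nsq_sw23, ← nsq_sw12, ac, sw23_act, sw12_act] at this
    simpa [pair, Fin.sum_univ_three, ac, act, act2_one, act3_one] using this
/-! ### Spectra of diagonal matrices -/

lemma spectrum_diag (l : Fin 3 → ℝ) (h : Monotone l) {ρ : Mat}
    (e : ρ = Matrix.diagonal (fun i => (l i : ℂ))) : IsOrderedSpectrum ρ l := by
  subst e
  have hA : (Matrix.diagonal (fun i => (l i : ℂ))).IsHermitian := by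
    refine Matrix.isHermitian_diagonal_of_self_adjoint _ ?_
    rw [isSelfAdjoint_iff]
    funext i
    simp
  have h1 := hA.roots_charpoly_eq_eigenvalues
  have h2 : (Matrix.diagonal (fun i => (l i : ℂ))).charpoly.roots =
      Multiset.map (fun i => (l i : ℂ)) Finset.univ.val := by
    rw [Matrix.charpoly_diagonal, Polynomial.roots_prod _ _ (Finset.prod_ne_zero_iff.2 fun i _ => Polynomial.X_sub_C_ne_zero _)]
    simp
  rw [h2] at h1
  have h3 : Multiset.map l Finset.univ.val = Multiset.map hA.eigenvalues Finset.univ.val := by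
    have := congrArg (Multiset.map Complex.re) h1
    simpa using this
  have h4 : hA.eigenvalues ∘ Tuple.sort hA.eigenvalues = l := by
    have p : List.Perm (List.ofFn (hA.eigenvalues ∘ Tuple.sort hA.eigenvalues)) (List.ofFn l) := by
      refine (Equiv.Perm.ofFn_comp_perm _ _).trans ?_
      rw [← Multiset.coe_eq_coe, List.ofFn_eq_map, List.ofFn_eq_map, ← Multiset.map_coe, ← Multiset.map_coe]
      exact h3.symm
    apply List.ofFn_injective
    refine p.eq_of_pairwise (le := (· ≤ ·)) (fun a b _ _ h1 h2 => le_antisymm h1 h2) ?_ ?_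
    · exact (Tuple.monotone_sort _).sortedLE_ofFn.pairwise
    · exact h.sortedLE_ofFn.pairwise
  exact ⟨h, hA, Tuple.sort hA.eigenvalues, fun i => (congrFun h4 i).symm⟩
set_option linter.unusedSimpArgs false

/-! ### Covariant polynomials -/

/-- Tensors over a ring. -/
abbrev TenR (R : Type) := Fin 3 → Fin 3 → Fin 3 → R

/-- Three by three determinant of rows. -/
def D3 {R : Type} [CommRing R] (u v w : Fin 3 → R) : R :=
  u 0 * (v 1 * w 2 - v 2 * w 1) - u 1 * (v 0 * w 2 - v 2 * w 0) + u 2 * (v 0 * w 1 - v 1 * w 0)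

/-- Discriminant of a binary cubic. -/
def disc3 {R : Type} [CommRing R] (a b c d : R) : R :=
  b ^ 2 * c ^ 2 - 4 * a * c ^ 3 - 4 * b ^ 3 * d - 27 * a ^ 2 * d ^ 2 + 18 * a * b * c * d

section
variable {R : Type} [CommRing R] (c : TenR R)

/-- Covariant of weight (001)(001)(001). -/
def q1 : R := c 2 2 2
/-- Covariant of weight (002)(011)(011). -/
def q2 : R := c 2 1 1 * c 2 2 2 - c 2 1 2 * c 2 2 1
/-- Covariant of weight (022)(022)(022). -/
def q3 : R := (c 1 1 1 * c 2 2 2 - c 1 1 2 * c 2 2 1 - c 1 2 1 * c 2 1 2 + c 1 2 2 * c 2 1 1) ^ 2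
  - 4 * (c 1 1 1 * c 1 2 2 - c 1 1 2 * c 1 2 1) * (c 2 1 1 * c 2 2 2 - c 2 1 2 * c 2 2 1)
/-- Covariant of weight (003)(111)(111). -/
def q4 : R := D3 (c 2 0) (c 2 1) (c 2 2)
/-- Covariant of weight (012)(012)(111). -/
def q5 : R := D3 (c 2 2) (c 2 1) (c 1 2)
/-- Covariant of weight (013)(022)(112). -/
def q7 : R := D3 (c 2 2) (c 2 1) (c 1 2) * c 2 1 2 - D3 (c 2 2) (c 2 1) (c 1 1) * c 2 2 2
/-- Covariant of weight (033)(033)(222). -/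
def q8 : R := D3 (c 1 2) (c 2 1) (c 2 2) * D3 (c 1 1) (c 1 2) (c 2 1)
  - D3 (c 1 1) (c 2 1) (c 2 2) * D3 (c 1 1) (c 1 2) (c 2 2)
/-- Covariant of weight (033)(114)(114). -/
def q9 : R := D3 (fun k => c 1 2 2 * c 2 0 k - c 2 2 2 * c 1 0 k)
  (fun k => c 1 2 2 * c 2 1 k - c 2 2 2 * c 1 1 k) (fun k => c 1 2 2 * c 2 2 k - c 2 2 2 * c 1 2 k)
/-- Covariant of weight (033)(114)(222). -/
def q10 : R := D3 (c 1 2) (c 2 2) (c 1 0) * D3 (c 1 2) (c 2 2) (c 2 1)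
  - D3 (c 1 2) (c 2 2) (c 1 1) * D3 (c 1 2) (c 2 2) (c 2 0)
/-- Mixed determinant. -/
def mix (u0 u1 u2 v0 v1 v2 : Fin 3 → R) : R := D3 u0 u1 v2 + D3 u0 v1 u2 + D3 v0 u1 u2
/-- Covariant of weight (066)(444)(444). -/
def q11 : R := disc3 (D3 (c 1 0) (c 1 1) (c 1 2))
  (mix (c 1 0) (c 1 1) (c 1 2) (c 2 0) (c 2 1) (c 2 2))
  (mix (c 2 0) (c 2 1) (c 2 2) (c 1 0) (c 1 1) (c 1 2)) (D3 (c 2 0) (c 2 1) (c 2 2))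
end

/-- Covariance under upper triangular matrices on each factor. -/
structure Cov (p : Ten → ℂ) (d : ℕ) (w : Fin 3 → Fin 3 → ℕ) : Prop where
  cont : Continuous p
  hom : ∀ (a : ℂ) c, p (a • c) = a ^ d * p c
  c1 : ∀ (M : Mat), M 1 0 = 0 → M 2 0 = 0 → M 2 1 = 0 → ∀ c,
    p (act1 M c) = M 0 0 ^ w 0 0 * M 1 1 ^ w 0 1 * M 2 2 ^ w 0 2 * p c
  c2 : ∀ (M : Mat), M 1 0 = 0 → M 2 0 = 0 → M 2 1 = 0 → ∀ c,
    p (act2 M c) = M 0 0 ^ w 1 0 * M 1 1 ^ w 1 1 * M 2 2 ^ w 1 2 * p c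
  c3 : ∀ (M : Mat), M 1 0 = 0 → M 2 0 = 0 → M 2 1 = 0 → ∀ c,
    p (act3 M c) = M 0 0 ^ w 2 0 * M 1 1 ^ w 2 1 * M 2 2 ^ w 2 2 * p c

lemma exp_aux {M : Mat} {t : Fin 3 → ℝ} (h : UT M t) (w : Fin 3 → ℕ) :
    M 0 0 ^ w 0 * M 1 1 ^ w 1 * M 2 2 ^ w 2 = (Real.exp (∑ i, (w i : ℝ) * t i) : ℂ) := by
  rw [h.2, h.2, h.2, Fin.sum_univ_three, Real.exp_add, Real.exp_add, Real.exp_nat_mul,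
    Real.exp_nat_mul, Real.exp_nat_mul]
  push_cast
  rfl

lemma Cov.ac {p d w} (h : Cov p d w) {M t} (hM : UT3 M t) (c : Ten) :
    p (ac M c) = (Real.exp (pair (fun a i => (w a i : ℝ)) t) : ℂ) * p c := by
  unfold TQ.ac act
  have z := fun a => (hM a).1
  rw [h.c1 _ (z 0 1 0 (by decide)) (z 0 2 0 (by decide)) (z 0 2 1 (by decide)),
    h.c2 _ (z 1 1 0 (by decide)) (z 1 2 0 (by decide)) (z 1 2 1 (by decide)),
    h.c3 _ (z 2 1 0 (by decide)) (z 2 2 0 (by decide)) (z 2 2 1 (by decide)),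
    exp_aux (hM 0), exp_aux (hM 1), exp_aux (hM 2)]
  simp only [pair, Fin.sum_univ_three (f := fun a => ∑ i, (w a i : ℝ) * t a i)]
  rw [Real.exp_add, Real.exp_add]
  push_cast
  ring

lemma Cov.good {p d w} (h : Cov p d w) {c : Ten} (hc : p c ≠ 0) (hc0 : c ≠ 0) :
    Good c d (fun a i => (w a i : ℝ)) := by
  obtain ⟨B, hB⟩ := isCompact_sphere.exists_bound_of_continuousOn h.cont.continuousOn
  have hbound : ∀ c : Ten, c ≠ 0 → ‖p c‖ ≤ Real.sqrt (nsq c) ^ d * B := by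
    intro c hc
    have hp := nsq_pos hc
    set s := Real.sqrt (nsq c) with hs
    have hspos : 0 < s := Real.sqrt_pos.2 hp
    have e : c = (s : ℂ) • (((s⁻¹ : ℝ) : ℂ) • c) := by
      rw [smul_smul, ← Complex.ofReal_mul, mul_inv_cancel₀ hspos.ne', Complex.ofReal_one, one_smul]
    have hu : nsq (((s⁻¹ : ℝ) : ℂ) • c) = 1 := by
      rw [nsq_smul, Complex.norm_real, Real.norm_eq_abs, sq_abs, inv_pow, Real.sq_sqrt hp.le,
        inv_mul_cancel₀ hp.ne']
    have := hB _ hu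
    rw [e, h.hom, norm_mul, norm_pow, Complex.norm_real, Real.norm_eq_abs, abs_of_pos hspos]
    exact mul_le_mul_of_nonneg_left this (by positivity)
  refine ⟨2 * Real.log B - 2 * Real.log ‖p c‖, fun M t hM => ?_⟩
  have hne := ac_ne_zero hM hc0
  have h1 := hbound _ hne
  have hp := nsq_pos hne
  rw [h.ac hM, norm_mul, Complex.norm_real, Real.norm_eq_abs, Real.abs_exp] at h1
  have hpc : 0 < ‖p c‖ := norm_pos_iff.2 hc
  have hs : 0 < Real.sqrt (nsq (TQ.ac M c)) ^ d := pow_pos (Real.sqrt_pos.2 hp) _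
  have hBpos : 0 < B := by
    by_contra hneg
    have : 0 < Real.exp (pair (fun a i => (w a i : ℝ)) t) * ‖p c‖ := by positivity
    nlinarith
  have h2 := Real.log_le_log (by positivity) h1
  rw [Real.log_mul (Real.exp_pos _).ne' hpc.ne', Real.log_exp, Real.log_mul hs.ne' hBpos.ne',
    Real.log_pow, Real.log_sqrt hp.le] at h2
  linarith

lemma D3_mul (M : Mat) (h1 : M 1 0 = 0) (h2 : M 2 0 = 0) (h3 : M 2 1 = 0) (u v w u' v' w' : Fin 3 → ℂ)
    (hu : ∀ k, u' k = ∑ a, M k a * u a) (hv : ∀ k, v' k = ∑ a, M k a * v a)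
    (hw : ∀ k, w' k = ∑ a, M k a * w a) :
    D3 u' v' w' = M 0 0 * M 1 1 * M 2 2 * D3 u v w := by
  simp only [D3, hu, hv, hw, Fin.sum_univ_three, h1, h2, h3]
  ring

lemma cov1 : Cov q1 1 ![![0,0,1],![0,0,1],![0,0,1]] where
  cont := by unfold q1; fun_prop
  hom a c := by simp [q1]
  c1 M h1 h2 h3 c := by simp [q1, act1, Fin.sum_univ_three, h1, h2, h3]
  c2 M h1 h2 h3 c := by simp [q1, act2, Fin.sum_univ_three, h1, h2, h3]
  c3 M h1 h2 h3 c := by simp [q1, act3, Fin.sum_univ_three, h1, h2, h3]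

lemma cov2 : Cov q2 2 ![![0,0,2],![0,1,1],![0,1,1]] where
  cont := by unfold q2; fun_prop
  hom a c := by simp [q2]; ring
  c1 M h1 h2 h3 c := by simp [q2, act1, Fin.sum_univ_three, h1, h2, h3]; ring
  c2 M h1 h2 h3 c := by simp [q2, act2, Fin.sum_univ_three, h1, h2, h3]; ring
  c3 M h1 h2 h3 c := by simp [q2, act3, Fin.sum_univ_three, h1, h2, h3]; ring

lemma cov3 : Cov q3 4 ![![0,2,2],![0,2,2],![0,2,2]] where
  cont := by unfold q3; fun_prop
  hom a c := by simp [q3]; ring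
  c1 M h1 h2 h3 c := by simp [q3, act1, Fin.sum_univ_three, h1, h2, h3]; ring
  c2 M h1 h2 h3 c := by simp [q3, act2, Fin.sum_univ_three, h1, h2, h3]; ring
  c3 M h1 h2 h3 c := by simp [q3, act3, Fin.sum_univ_three, h1, h2, h3]; ring

lemma cov4 : Cov q4 3 ![![0,0,3],![1,1,1],![1,1,1]] where
  cont := by unfold q4 D3; fun_prop
  hom a c := by simp [q4, D3]; ring
  c1 M h1 h2 h3 c := by simp [q4, D3, act1, Fin.sum_univ_three, h1, h2, h3]; ring
  c2 M h1 h2 h3 c := by simp [q4, D3, act2, Fin.sum_univ_three, h1, h2, h3]; ring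
  c3 M h1 h2 h3 c := by simp [q4, D3, act3, Fin.sum_univ_three, h1, h2, h3]; ring

lemma cov5 : Cov q5 3 ![![0,1,2],![0,1,2],![1,1,1]] where
  cont := by unfold q5 D3; fun_prop
  hom a c := by simp [q5, D3]; ring
  c1 M h1 h2 h3 c := by simp [q5, D3, act1, Fin.sum_univ_three, h1, h2, h3]; ring
  c2 M h1 h2 h3 c := by simp [q5, D3, act2, Fin.sum_univ_three, h1, h2, h3]; ring
  c3 M h1 h2 h3 c := by simp [q5, D3, act3, Fin.sum_univ_three, h1, h2, h3]; ring

lemma cov7 : Cov q7 4 ![![0,1,3],![0,2,2],![1,1,2]] where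
  cont := by unfold q7 D3; fun_prop
  hom a c := by simp [q7, D3]; ring
  c1 M h1 h2 h3 c := by simp [q7, D3, act1, Fin.sum_univ_three, h1, h2, h3]; ring
  c2 M h1 h2 h3 c := by simp [q7, D3, act2, Fin.sum_univ_three, h1, h2, h3]; ring
  c3 M h1 h2 h3 c := by simp [q7, D3, act3, Fin.sum_univ_three, h1, h2, h3]; ring
set_option linter.unusedSimpArgs false

lemma act1_two {M : Mat} (h2 : M 2 0 = 0) (h3 : M 2 1 = 0) (c : Ten) (j) :
    act1 M c 2 j = M 2 2 • c 2 j := by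
  funext k; simp [act1, Fin.sum_univ_three, h2, h3]
lemma act1_mid {M : Mat} (h1 : M 1 0 = 0) (c : Ten) (j) :
    act1 M c 1 j = M 1 1 • c 1 j + M 1 2 • c 2 j := by
  funext k; simp [act1, Fin.sum_univ_three, h1]
lemma act2_two {M : Mat} (h2 : M 2 0 = 0) (h3 : M 2 1 = 0) (c : Ten) (i) :
    act2 M c i 2 = M 2 2 • c i 2 := by
  funext k; simp [act2, Fin.sum_univ_three, h2, h3]
lemma act2_mid {M : Mat} (h1 : M 1 0 = 0) (c : Ten) (i) :
    act2 M c i 1 = M 1 1 • c i 1 + M 1 2 • c i 2 := by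
  funext k; simp [act2, Fin.sum_univ_three, h1]
lemma act2_bot {M : Mat} (c : Ten) (i) :
    act2 M c i 0 = M 0 0 • c i 0 + M 0 1 • c i 1 + M 0 2 • c i 2 := by
  funext k; simp [act2, Fin.sum_univ_three]

lemma D3_act3 (M : Mat) (h1 : M 1 0 = 0) (h2 : M 2 0 = 0) (h3 : M 2 1 = 0) (c : Ten)
    (i j i' j' i'' j'' : Fin 3) :
    D3 (act3 M c i j) (act3 M c i' j') (act3 M c i'' j'') =
      M 0 0 * M 1 1 * M 2 2 * D3 (c i j) (c i' j') (c i'' j'') :=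
  D3_mul M h1 h2 h3 _ _ _ _ _ _ (fun _ => rfl) (fun _ => rfl) (fun _ => rfl)

lemma D3_smul1 (a : ℂ) (u v w) : D3 (a • u) v w = a * D3 u v w := by
  simp only [D3, Pi.smul_apply, smul_eq_mul]; ring
lemma D3_smul2 (a : ℂ) (u v w) : D3 u (a • v) w = a * D3 u v w := by
  simp only [D3, Pi.smul_apply, smul_eq_mul]; ring
lemma D3_smul3 (a : ℂ) (u v w) : D3 u v (a • w) = a * D3 u v w := by
  simp only [D3, Pi.smul_apply, smul_eq_mul]; ring
lemma D3_add1 (u u' v w : Fin 3 → ℂ) : D3 (u + u') v w = D3 u v w + D3 u' v w := by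
  simp only [D3, Pi.add_apply]; ring
lemma D3_add2 (u v v' w : Fin 3 → ℂ) : D3 u (v + v') w = D3 u v w + D3 u v' w := by
  simp only [D3, Pi.add_apply]; ring
lemma D3_add3 (u v w w' : Fin 3 → ℂ) : D3 u v (w + w') = D3 u v w + D3 u v w' := by
  simp only [D3, Pi.add_apply]; ring
lemma D3_s12 (u w : Fin 3 → ℂ) : D3 u u w = 0 := by simp only [D3]; ring
lemma D3_s13 (u w : Fin 3 → ℂ) : D3 u w u = 0 := by simp only [D3]; ring
lemma D3_s23 (u w : Fin 3 → ℂ) : D3 w u u = 0 := by simp only [D3]; ring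
lemma D3_t23 (u v w : Fin 3 → ℂ) : D3 u v w = - D3 u w v := by simp only [D3]; ring
lemma D3_t12 (u v w : Fin 3 → ℂ) : D3 u v w = - D3 v u w := by simp only [D3]; ring

lemma cov8 : Cov q8 6 ![![0,3,3],![0,3,3],![2,2,2]] where
  cont := by unfold q8 D3; fun_prop
  hom a c := by
    simp only [q8, Pi.smul_apply, D3_smul1, D3_smul2, D3_smul3]; ring
  c1 M h1 h2 h3 c := by
    simp only [q8, act1_two h2 h3, act1_mid h1, D3_smul1, D3_smul2, D3_smul3, D3_add1, D3_add2,
      D3_add3, D3_s12, D3_s13, D3_s23]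
    rw [D3_t23 (c 1 1) (c 2 2) (c 2 1), D3_t12 (c 2 1) (c 1 2) (c 2 2)]
    simp
    ring
  c2 M h1 h2 h3 c := by
    simp only [q8, act2_two h2 h3, act2_mid h1, D3_smul1, D3_smul2, D3_smul3, D3_add1, D3_add2,
      D3_add3, D3_s12, D3_s13, D3_s23]
    simp
    ring
  c3 M h1 h2 h3 c := by
    simp only [q8, D3_act3 M h1 h2 h3]
    simp
    ring

lemma cov10 : Cov q10 6 ![![0,3,3],![1,1,4],![2,2,2]] where
  cont := by unfold q10 D3; fun_prop
  hom a c := by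
    simp only [q10, Pi.smul_apply, D3_smul1, D3_smul2, D3_smul3]; ring
  c1 M h1 h2 h3 c := by
    simp only [q10, act1_two h2 h3, act1_mid h1, D3_smul1, D3_smul2, D3_smul3, D3_add1, D3_add2,
      D3_add3, D3_s12, D3_s13, D3_s23]
    simp
    ring
  c2 M h1 h2 h3 c := by
    simp only [q10, act2_two h2 h3, act2_mid h1, act2_bot, D3_smul1, D3_smul2, D3_smul3, D3_add1,
      D3_add2, D3_add3, D3_s12, D3_s13, D3_s23]
    simp
    ring
  c3 M h1 h2 h3 c := by
    simp only [q10, D3_act3 M h1 h2 h3]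
    simp
    ring

/-- The rows of the pencil matrix in `q9`. -/
def rw9 (c : Ten) (j : Fin 3) : Fin 3 → ℂ := fun k => c 1 2 2 * c 2 j k - c 2 2 2 * c 1 j k

lemma cov9 : Cov q9 6 ![![0,3,3],![1,1,4],![1,1,4]] where
  cont := by unfold q9 D3; fun_prop
  hom a c := by
    change D3 (rw9 _ 0) (rw9 _ 1) (rw9 _ 2) = _ * D3 (rw9 c 0) (rw9 c 1) (rw9 c 2)
    have : ∀ j, rw9 (a • c) j = a ^ 2 • rw9 c j := by
      intro j; funext k; simp [rw9]; ring
    simp only [this, D3_smul1, D3_smul2, D3_smul3]; ring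
  c1 M h1 h2 h3 c := by
    change D3 (rw9 _ 0) (rw9 _ 1) (rw9 _ 2) = _ * D3 (rw9 c 0) (rw9 c 1) (rw9 c 2)
    have : ∀ j, rw9 (act1 M c) j = (M 1 1 * M 2 2) • rw9 c j := by
      intro j; funext k; simp [rw9, act1, Fin.sum_univ_three, h1, h2, h3]; ring
    simp only [this, D3_smul1, D3_smul2, D3_smul3]
    simp
    ring
  c2 M h1 h2 h3 c := by
    change D3 (rw9 _ 0) (rw9 _ 1) (rw9 _ 2) = _ * D3 (rw9 c 0) (rw9 c 1) (rw9 c 2)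
    have e2 : rw9 (act2 M c) 2 = (M 2 2 * M 2 2) • rw9 c 2 := by
      funext k; simp [rw9, act2, Fin.sum_univ_three, h1, h2, h3]; ring
    have e1 : rw9 (act2 M c) 1 = (M 2 2 * M 1 1) • rw9 c 1 + (M 2 2 * M 1 2) • rw9 c 2 := by
      funext k; simp [rw9, act2, Fin.sum_univ_three, h1, h2, h3]; ring
    have e0 : rw9 (act2 M c) 0 = (M 2 2 * M 0 0) • rw9 c 0 + (M 2 2 * M 0 1) • rw9 c 1
        + (M 2 2 * M 0 2) • rw9 c 2 := by
      funext k; simp [rw9, act2, Fin.sum_univ_three, h1, h2, h3]; ring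
    simp only [e0, e1, e2, D3_smul1, D3_smul2, D3_smul3, D3_add1, D3_add2, D3_s12, D3_s13, D3_s23]
    simp
    ring
  c3 M h1 h2 h3 c := by
    change D3 (rw9 _ 0) (rw9 _ 1) (rw9 _ 2) = _ * D3 (rw9 c 0) (rw9 c 1) (rw9 c 2)
    have e : ∀ j k, rw9 (act3 M c) j k = ∑ a, M k a * (M 2 2 • rw9 c j) a := by
      intro j k; simp [rw9, act3, Fin.sum_univ_three, h2, h3]; ring
    rw [D3_mul M h1 h2 h3 _ _ _ _ _ _ (e 0) (e 1) (e 2)]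
    simp only [D3_smul1, D3_smul2, D3_smul3]
    simp
    ring

lemma disc3_smul (s a b c d : ℂ) :
    disc3 (s * a) (s * b) (s * c) (s * d) = s ^ 4 * disc3 a b c d := by
  simp only [disc3]; ring

lemma cov11 : Cov q11 12 ![![0,6,6],![4,4,4],![4,4,4]] where
  cont := by unfold q11 disc3 mix D3; fun_prop
  hom a c := by
    simp only [q11, mix, Pi.smul_apply, D3_smul1, D3_smul2, D3_smul3]
    rw [show a ^ 12 = (a ^ 3) ^ 4 by ring, ← disc3_smul]
    congr 1 <;> ring
  c1 M h1 h2 h3 c := by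
    simp only [q11, mix, act1_two h2 h3, act1_mid h1, D3_smul1, D3_smul2, D3_smul3, D3_add1,
      D3_add2, D3_add3]
    set a := D3 (c 1 0) (c 1 1) (c 1 2)
    set d := D3 (c 2 0) (c 2 1) (c 2 2)
    simp only [disc3]
    simp
    ring
  c2 M h1 h2 h3 c := by
    simp only [q11]
    rw [show (![![0,6,6],![4,4,4],![4,4,4]] : Fin 3 → Fin 3 → ℕ) 1 0 = 4 from rfl,
      show (![![0,6,6],![4,4,4],![4,4,4]] : Fin 3 → Fin 3 → ℕ) 1 1 = 4 from rfl,
      show (![![0,6,6],![4,4,4],![4,4,4]] : Fin 3 → Fin 3 → ℕ) 1 2 = 4 from rfl,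
      ← mul_pow, ← mul_pow, ← disc3_smul]
    congr 1 <;>
    · simp only [mix, act2_two h2 h3, act2_mid h1, act2_bot]
      simp only [D3, Pi.smul_apply, Pi.add_apply, smul_eq_mul]
      ring
  c3 M h1 h2 h3 c := by
    simp only [q11]
    rw [show (![![0,6,6],![4,4,4],![4,4,4]] : Fin 3 → Fin 3 → ℕ) 2 0 = 4 from rfl,
      show (![![0,6,6],![4,4,4],![4,4,4]] : Fin 3 → Fin 3 → ℕ) 2 1 = 4 from rfl,
      show (![![0,6,6],![4,4,4],![4,4,4]] : Fin 3 → Fin 3 → ℕ) 2 2 = 4 from rfl,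
      ← mul_pow, ← mul_pow, ← disc3_smul]
    simp only [mix, D3_act3 M h1 h2 h3, mul_add]
set_option linter.unusedSimpArgs false

/-! ### The base tensor -/

/-- An integer tensor of rank three in general position. -/
def psiZ : TenR ℤ := ![![![0, 1, 1], ![0, 0, 0], ![0, 1, 1]],
    ![![2, 2, 1], ![2, 2, 0], ![4, 4, 3]],
    ![![2, 3, 2], ![2, 2, 3], ![4, 5, 1]]]

/-- The base tensor. -/
noncomputable def psi : Ten := fun i j k => (psiZ i j k : ℂ)

/-- Swap of the first two factors over any ring. -/
def tw12 {R : Type} (c : TenR R) : TenR R := fun i j k => c j i k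
/-- Swap of the last two factors over any ring. -/
def tw23 {R : Type} (c : TenR R) : TenR R := fun i j k => c i k j

lemma psi_ne : psi ≠ 0 := by
  intro h
  have := congrFun (congrFun (congrFun h 2) 2) 2
  simp [psi, psiZ] at this

lemma Good.sw12 {c m y} (h : Good (sw12 c) m y) : Good c m ![y 1, y 0, y 2] := by
  obtain ⟨K, hK⟩ := h
  refine ⟨K, fun M t hM => ?_⟩
  have := hK ![M 1, M 0, M 2] ![t 1, t 0, t 2] (by
    intro a; fin_cases a
    · exact hM 1
    · exact hM 0
    · exact hM 2)
  have e : nsq (ac ![M 1, M 0, M 2] (TQ.sw12 c)) = nsq (ac M c) := by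
    rw [← nsq_sw12 (ac M c)]
    unfold ac
    rw [sw12_act]
    rfl
  rw [e] at this
  refine le_trans (le_of_eq ?_) this
  simp [pair, Fin.sum_univ_three]
  ring

lemma Good.sw23 {c m y} (h : Good (sw23 c) m y) : Good c m ![y 0, y 2, y 1] := by
  obtain ⟨K, hK⟩ := h
  refine ⟨K, fun M t hM => ?_⟩
  have := hK ![M 0, M 2, M 1] ![t 0, t 2, t 1] (by
    intro a; fin_cases a
    · exact hM 0
    · exact hM 2
    · exact hM 1)
  have e : nsq (ac ![M 0, M 2, M 1] (TQ.sw23 c)) = nsq (ac M c) := by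
    rw [← nsq_sw23 (ac M c)]
    unfold ac
    rw [sw23_act]
    rfl
  rw [e] at this
  refine le_trans (le_of_eq ?_) this
  simp [pair, Fin.sum_univ_three]
  ring

/-- A rescaled weight is good in all six orders. -/
def Sy (m : ℝ) (u v w : Fin 3 → ℝ) : Prop :=
  Good psi m ![u, v, w] ∧ Good psi m ![v, u, w] ∧ Good psi m ![u, w, v] ∧
  Good psi m ![w, u, v] ∧ Good psi m ![v, w, u] ∧ Good psi m ![w, v, u]

lemma rep_good {p : Ten → ℂ} {pZ : TenR ℤ → ℤ} {d : ℕ} {w : Fin 3 → Fin 3 → ℕ} (h : Cov p d w)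
    (hmap : ∀ c : TenR ℤ, p (fun i j k => (c i j k : ℂ)) = (pZ c : ℂ))
    (h0 : pZ psiZ ≠ 0) (h1 : pZ (tw12 psiZ) ≠ 0) (h2 : pZ (tw23 psiZ) ≠ 0)
    (h3 : pZ (tw12 (tw23 psiZ)) ≠ 0) (h4 : pZ (tw23 (tw12 psiZ)) ≠ 0)
    (h5 : pZ (tw12 (tw23 (tw12 psiZ))) ≠ 0) :
    Sy d (fun i => (w 0 i : ℝ)) (fun i => (w 1 i : ℝ)) (fun i => (w 2 i : ℝ)) := by
  have key : ∀ c : TenR ℤ, pZ c ≠ 0 → ∀ c' : Ten, c' = (fun i j k => (c i j k : ℂ)) →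
      c' ≠ 0 → Good c' d ![fun i => (w 0 i : ℝ), fun i => (w 1 i : ℝ), fun i => (w 2 i : ℝ)] := by
    intro c hc c' e hne
    have : (![fun i => (w 0 i : ℝ), fun i => (w 1 i : ℝ), fun i => (w 2 i : ℝ)] : Fin 3 → Fin 3 → ℝ)
        = fun a i => (w a i : ℝ) := by
      funext a; fin_cases a <;> rfl
    rw [this]
    refine h.good ?_ hne
    rw [e, hmap]
    exact_mod_cast hc
  have n12 : ∀ c : Ten, c ≠ 0 → sw12 c ≠ 0 := fun c hc h => hc (by
    rw [← sw12_sw12 c, h]; rfl)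
  have n23 : ∀ c : Ten, c ≠ 0 → sw23 c ≠ 0 := fun c hc h => hc (by
    rw [← sw23_sw23 c, h]; rfl)
  refine ⟨key _ h0 _ rfl psi_ne, ?_, ?_, ?_, ?_, ?_⟩
  · exact (key _ h1 (sw12 psi) rfl (n12 _ psi_ne)).sw12
  · exact (key _ h2 (sw23 psi) rfl (n23 _ psi_ne)).sw23
  · exact (key _ h4 (sw23 (sw12 psi)) rfl (n23 _ (n12 _ psi_ne))).sw23.sw12
  · exact (key _ h3 (sw12 (sw23 psi)) rfl (n12 _ (n23 _ psi_ne))).sw12.sw23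
  · exact (key _ h5 (sw12 (sw23 (sw12 psi))) rfl (n12 _ (n23 _ (n12 _ psi_ne)))).sw12.sw23.sw12

lemma good1 : Sy 1 ![0, 0, 1] ![0, 0, 1] ![0, 0, 1] := by
  have h := rep_good cov1 (pZ := q1) (fun c => by simp [q1, D3, mix, disc3])
    (by decide) (by decide) (by decide) (by decide) (by decide) (by decide)
  convert h using 1
  all_goals first
    | (funext a; fin_cases a <;> simp)
    | norm_num
lemma good2 : Sy 2 ![0, 0, 2] ![0, 1, 1] ![0, 1, 1] := by
  have h := rep_good cov2 (pZ := q2) (fun c => by simp [q2, D3, mix, disc3])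
    (by decide) (by decide) (by decide) (by decide) (by decide) (by decide)
  convert h using 1
  all_goals first
    | (funext a; fin_cases a <;> simp)
    | norm_num
lemma good3 : Sy 4 ![0, 2, 2] ![0, 2, 2] ![0, 2, 2] := by
  have h := rep_good cov3 (pZ := q3) (fun c => by simp [q3, D3, mix, disc3])
    (by decide) (by decide) (by decide) (by decide) (by decide) (by decide)
  convert h using 1
  all_goals first
    | (funext a; fin_cases a <;> simp)
    | norm_num
lemma good4 : Sy 3 ![0, 0, 3] ![1, 1, 1] ![1, 1, 1] := by
  have h := rep_good cov4 (pZ := q4) (fun c => by simp [q4, D3, mix, disc3])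
    (by decide) (by decide) (by decide) (by decide) (by decide) (by decide)
  convert h using 1
  all_goals first
    | (funext a; fin_cases a <;> simp)
    | norm_num
lemma good5 : Sy 3 ![0, 1, 2] ![0, 1, 2] ![1, 1, 1] := by
  have h := rep_good cov5 (pZ := q5) (fun c => by simp [q5, D3, mix, disc3])
    (by decide) (by decide) (by decide) (by decide) (by decide) (by decide)
  convert h using 1
  all_goals first
    | (funext a; fin_cases a <;> simp)
    | norm_num
lemma good7 : Sy 4 ![0, 1, 3] ![0, 2, 2] ![1, 1, 2] := by
  have h := rep_good cov7 (pZ := q7) (fun c => by simp [q7, D3, mix, disc3])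
    (by decide) (by decide) (by decide) (by decide) (by decide) (by decide)
  convert h using 1
  all_goals first
    | (funext a; fin_cases a <;> simp)
    | norm_num
lemma good8 : Sy 6 ![0, 3, 3] ![0, 3, 3] ![2, 2, 2] := by
  have h := rep_good cov8 (pZ := q8) (fun c => by simp [q8, D3, mix, disc3])
    (by decide) (by decide) (by decide) (by decide) (by decide) (by decide)
  convert h using 1
  all_goals first
    | (funext a; fin_cases a <;> simp)
    | norm_num
lemma good9 : Sy 6 ![0, 3, 3] ![1, 1, 4] ![1, 1, 4] := by
  have h := rep_good cov9 (pZ := q9) (fun c => by simp [q9, D3, mix, disc3])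
    (by decide) (by decide) (by decide) (by decide) (by decide) (by decide)
  convert h using 1
  all_goals first
    | (funext a; fin_cases a <;> simp)
    | norm_num
lemma good10 : Sy 6 ![0, 3, 3] ![1, 1, 4] ![2, 2, 2] := by
  have h := rep_good cov10 (pZ := q10) (fun c => by simp [q10, D3, mix, disc3])
    (by decide) (by decide) (by decide) (by decide) (by decide) (by decide)
  convert h using 1
  all_goals first
    | (funext a; fin_cases a <;> simp)
    | norm_num
lemma good11 : Sy 12 ![0, 6, 6] ![4, 4, 4] ![4, 4, 4] := by
  have h := rep_good cov11 (pZ := q11) (fun c => by simp [q11, D3, mix, disc3])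
    (by decide) (by decide) (by decide) (by decide) (by decide) (by decide)
  convert h using 1
  all_goals first
    | (funext a; fin_cases a <;> simp)
    | norm_num

/-! ### The maximally mixed vertex -/

/-- The GHZ tensor. -/
def ghz : Ten := fun i j k => if i = j ∧ j = k then 1 else 0

lemma act_ghz (A B C : Mat) (i j k : Fin 3) :
    act A B C ghz i j k = ∑ s, A i s * B j s * C k s := by
  simp [act, act1, act2, act3, ghz, Fin.sum_univ_three]
  ring

lemma psi_eq : psi = act !![0,1,0;1,0,-1;1,1,2] !![1,1,0;1,0,1;2,1,-1] !![2,0,0;2,1,0;1,1,1] ghz := by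
  funext i j k
  rw [act_ghz, Fin.sum_univ_three]
  fin_cases i <;> fin_cases j <;> fin_cases k <;> simp [psi, psiZ] <;> norm_num

lemma rho1_ghz : rho1 ghz = 1 := by
  ext i j
  fin_cases i <;> fin_cases j <;> simp [rho1, ghz, Fin.sum_univ_three]
lemma rho2_ghz : rho2 ghz = 1 := by
  ext i j
  fin_cases i <;> fin_cases j <;> simp [rho2, ghz, Fin.sum_univ_three]
lemma rho3_ghz : rho3 ghz = 1 := by
  ext i j
  fin_cases i <;> fin_cases j <;> simp [rho3, ghz, Fin.sum_univ_three]

lemma nsq_act1_congr {X X' : Mat} (h : Xᴴ * X = X'ᴴ * X') (c : Ten) :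
    nsq (act1 X c) = nsq (act1 X' c) := by
  rw [nsq_act1, nsq_act1, Matrix.trace_mul_comm, ← Matrix.mul_assoc, h, Matrix.mul_assoc,
    Matrix.trace_mul_comm]
lemma nsq_act2_congr {X X' : Mat} (h : Xᴴ * X = X'ᴴ * X') (c : Ten) :
    nsq (act2 X c) = nsq (act2 X' c) := by
  rw [← nsq_sw12, ← nsq_sw12 (act2 X' c), sw12_act2, sw12_act2, nsq_act1_congr h]
lemma nsq_act3_congr {X X' : Mat} (h : Xᴴ * X = X'ᴴ * X') (c : Ten) :
    nsq (act3 X c) = nsq (act3 X' c) := by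
  rw [← nsq_sw23, ← nsq_sw23 (act3 X' c), sw23_act3, sw23_act3, nsq_act2_congr h]

lemma nsq_act_congr {X X' Y Y' Z Z' : Mat} (hX : Xᴴ * X = X'ᴴ * X') (hY : Yᴴ * Y = Y'ᴴ * Y')
    (hZ : Zᴴ * Z = Z'ᴴ * Z') (c : Ten) : nsq (act X Y Z c) = nsq (act X' Y' Z' c) := by
  unfold act
  rw [nsq_act1_congr hX, act1_act2, nsq_act2_congr hY, ← act1_act2, act2_act3, act1_act3,
    nsq_act3_congr hZ, ← act1_act3, ← act2_act3]

/-- The diagonal matrix of exponentials. -/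
noncomputable def ed (d : Fin 3 → ℝ) : Mat := Matrix.diagonal fun i => (Real.exp (d i) : ℂ)

open scoped ComplexOrder in
lemma polar (X : Mat) (hX : X.det ≠ 0) : ∃ (U : Mat) (d : Fin 3 → ℝ), Uᴴ * U = 1 ∧
    Xᴴ * X = (ed d * U)ᴴ * (ed d * U) ∧ ∑ i, d i = Real.log ‖X.det‖ := by
  have hP : (Xᴴ * X).PosDef := by
    refine Matrix.PosDef.conjTranspose_mul_self _ ?_
    exact Matrix.mulVec_injective_of_isUnit ((Matrix.isUnit_iff_isUnit_det _).2 (isUnit_iff_ne_zero.2 hX))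
  have hM := hP.isHermitian
  set W : Mat := (hM.eigenvectorUnitary : Mat) with hW
  have hWW : Wᴴ * W = 1 := by
    have := Matrix.mem_unitaryGroup_iff'.1 hM.eigenvectorUnitary.2
    simpa [Matrix.star_eq_conjTranspose] using this
  have hWW' : W * Wᴴ = 1 := mul_eq_one_comm.1 hWW
  have hs : Xᴴ * X = W * Matrix.diagonal (fun i => ((hM.eigenvalues i : ℝ) : ℂ)) * Wᴴ := by
    have := hM.spectral_theorem
    rw [Unitary.conjStarAlgAut_apply] at this
    simpa [Matrix.star_eq_conjTranspose, Function.comp_def] using this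
  have hpos := fun i => hP.eigenvalues_pos i
  refine ⟨Wᴴ, fun i => Real.log (hM.eigenvalues i) / 2, by rw [Matrix.conjTranspose_conjTranspose, hWW'], ?_, ?_⟩
  · refine hs.trans ?_
    rw [Matrix.conjTranspose_mul, Matrix.conjTranspose_conjTranspose, ed,
      Matrix.diagonal_conjTranspose]
    rw [Matrix.mul_assoc W _ (_ * _), ← Matrix.mul_assoc _ _ Wᴴ, Matrix.diagonal_mul_diagonal, ← Matrix.mul_assoc]
    congr 3
    funext i
    simp only [Pi.star_apply, RCLike.star_def, Complex.conj_ofReal]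
    rw [← Complex.ofReal_mul, ← Real.exp_add, add_halves, Real.exp_log (hpos i)]
  · rw [← Finset.sum_div, ← Real.log_prod (fun i _ => (hpos i).ne')]
    have h1 := hM.det_eq_prod_eigenvalues
    have h2 : ‖X.det‖ ^ 2 = ∏ i, hM.eigenvalues i := by
      rw [Matrix.det_mul, Matrix.det_conjTranspose, RCLike.star_def, Complex.conj_mul'] at h1
      have h3 := congrArg Complex.re h1
      rw [← Complex.ofReal_pow, Complex.ofReal_re] at h3
      rw [h3]
      have : ∏ i, ((hM.eigenvalues i : ℝ) : ℂ) = ((∏ i, hM.eigenvalues i : ℝ) : ℂ) := by push_cast; rfl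
      exact (congrArg Complex.re this).trans (Complex.ofReal_re _)
    rw [← h2, Real.log_pow]
    push_cast
    ring

lemma ghz_bound (X Y Z : Mat) (hX : X.det ≠ 0) (hY : Y.det ≠ 0) (hZ : Z.det ≠ 0) :
    2 * (Real.log ‖X.det‖ + Real.log ‖Y.det‖ + Real.log ‖Z.det‖) ≤
      3 * Real.log (nsq (act X Y Z ghz) / 3) := by
  obtain ⟨U, d, hU, hXU, hd⟩ := polar X hX
  obtain ⟨V, e, hV, hYV, he⟩ := polar Y hY
  obtain ⟨W, f, hW, hZW, hf⟩ := polar Z hZ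
  rw [nsq_act_congr hXU hYV hZW, ← act_act]
  set φ := act U V W ghz with hφ
  have m1 : ∀ i, ∑ j, ∑ k, ‖φ i j k‖ ^ 2 = 1 := by
    intro i
    have h := rho1_act U V W hV hW ghz
    rw [rho1_ghz, Matrix.mul_one, mul_eq_one_comm.1 hU, ← hφ] at h
    have := rho1_diag φ i
    rw [h, Matrix.one_apply_eq] at this
    exact_mod_cast this.symm
  have m2 : ∀ j, ∑ i, ∑ k, ‖φ i j k‖ ^ 2 = 1 := by
    intro i
    have h := rho2_act V U W hU hW ghz
    rw [rho2_ghz, Matrix.mul_one, mul_eq_one_comm.1 hV, ← hφ] at h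
    have := rho2_diag φ i
    rw [h, Matrix.one_apply_eq] at this
    exact_mod_cast this.symm
  have m3 : ∀ k, ∑ i, ∑ j, ‖φ i j k‖ ^ 2 = 1 := by
    intro i
    have h := rho3_act W U V hU hV ghz
    rw [rho3_ghz, Matrix.mul_one, mul_eq_one_comm.1 hW, ← hφ] at h
    have := rho3_diag φ i
    rw [h, Matrix.one_apply_eq] at this
    exact_mod_cast this.symm
  have hS : nsq (act (ed d) (ed e) (ed f) φ) =
      ∑ i, ∑ j, ∑ k, Real.exp (2 * (d i + e j + f k)) * ‖φ i j k‖ ^ 2 := by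
    unfold nsq
    refine Finset.sum_congr rfl fun i _ => Finset.sum_congr rfl fun j _ =>
      Finset.sum_congr rfl fun k _ => ?_
    have : act (ed d) (ed e) (ed f) φ i j k =
        (Real.exp (d i) : ℂ) * ((Real.exp (e j) : ℂ) * ((Real.exp (f k) : ℂ) * φ i j k)) := by
      simp [act, act1, act2, act3, ed, Matrix.diagonal_apply]
    rw [this, norm_mul, norm_mul, norm_mul, Complex.norm_real, Complex.norm_real, Complex.norm_real,
      Real.norm_eq_abs, Real.norm_eq_abs, Real.norm_eq_abs, Real.abs_exp, Real.abs_exp, Real.abs_exp,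
      mul_pow, mul_pow, mul_pow, two_mul, Real.exp_add, Real.exp_add, Real.exp_add]
    ring
  set S := nsq (act (ed d) (ed e) (ed f) φ) with hSdef
  have hφ1 : ∑ i, ∑ j, ∑ k, ‖φ i j k‖ ^ 2 = 3 := by simp [m1]
  have hSpos : 0 < S := by
    rw [hS]
    have hφne : φ ≠ 0 := by
      intro h0
      rw [h0] at hφ1
      simp at hφ1
    have hlow : ∀ i j k, 0 ≤ Real.exp (2 * (d i + e j + f k)) * ‖φ i j k‖ ^ 2 := by
      intros; positivity
    have : ∃ i j k, φ i j k ≠ 0 := by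
      by_contra hcon
      push Not at hcon
      exact hφne (by funext i j k; exact hcon i j k)
    obtain ⟨i, j, k, hijk⟩ := this
    refine Finset.sum_pos' (fun i _ => Finset.sum_nonneg fun j _ => Finset.sum_nonneg fun k _ => hlow i j k)
      ⟨i, Finset.mem_univ _, ?_⟩
    refine Finset.sum_pos' (fun j _ => Finset.sum_nonneg fun k _ => hlow i j k)
      ⟨j, Finset.mem_univ _, ?_⟩
    refine Finset.sum_pos' (fun k _ => hlow i j k) ⟨k, Finset.mem_univ _, ?_⟩
    have := norm_pos_iff.2 hijk
    positivity
  have hterm : ∀ i j k, ‖φ i j k‖ ^ 2 * (2 * (d i + e j + f k) - Real.log (S / 3)) ≤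
      (3 / S) * (Real.exp (2 * (d i + e j + f k)) * ‖φ i j k‖ ^ 2) - ‖φ i j k‖ ^ 2 := by
    intro i j k
    have h1 := Real.add_one_le_exp (2 * (d i + e j + f k) - Real.log (S / 3))
    rw [Real.exp_sub, Real.exp_log (by positivity)] at h1
    have e1 : Real.exp (2 * (d i + e j + f k)) / (S / 3) = (3 / S) * Real.exp (2 * (d i + e j + f k)) := by
      field_simp
    rw [e1] at h1
    nlinarith [mul_le_mul_of_nonneg_left h1 (sq_nonneg ‖φ i j k‖)]
  have hsum := Finset.sum_le_sum fun i (_ : i ∈ Finset.univ) => Finset.sum_le_sum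
    fun j (_ : j ∈ Finset.univ) => Finset.sum_le_sum fun k (_ : k ∈ Finset.univ) => hterm i j k
  have r : ∑ i, ∑ j, ∑ k, ((3 / S) * (Real.exp (2 * (d i + e j + f k)) * ‖φ i j k‖ ^ 2)
      - ‖φ i j k‖ ^ 2) = 0 := by
    simp only [Finset.sum_sub_distrib, ← Finset.mul_sum]
    rw [← hS, hφ1, div_mul_cancel₀ _ hSpos.ne', sub_self]
  have l : ∑ i, ∑ j, ∑ k, ‖φ i j k‖ ^ 2 * (2 * (d i + e j + f k) - Real.log (S / 3)) =
      2 * (∑ i, d i + ∑ i, e i + ∑ i, f i) - 3 * Real.log (S / 3) := by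
    have a1 : ∑ i, (∑ j, ∑ k, ‖φ i j k‖ ^ 2) * d i = ∑ i, d i := by simp [m1]
    have a2 : ∑ j, (∑ i, ∑ k, ‖φ i j k‖ ^ 2) * e j = ∑ i, e i := by simp [m2]
    have a3 : ∑ k, (∑ i, ∑ j, ‖φ i j k‖ ^ 2) * f k = ∑ i, f i := by simp [m3]
    rw [← a1, ← a2, ← a3]
    have a4 : (3 : ℝ) * Real.log (S / 3) = (∑ i, ∑ j, ∑ k, ‖φ i j k‖ ^ 2) * Real.log (S / 3) := by
      rw [hφ1]
    rw [a4]
    simp only [Fin.sum_univ_three]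
    ring
  rw [r, l] at hsum
  rw [← hd, ← he, ← hf]
  linarith

lemma UT.det {M : Mat} {t} (h : UT M t) : M.det = (Real.exp (t 0 + t 1 + t 2) : ℂ) := by
  rw [Matrix.det_fin_three, h.1 1 0 (by decide), h.1 2 0 (by decide), h.1 2 1 (by decide), h.2, h.2,
    h.2, Real.exp_add, Real.exp_add]
  push_cast
  ring

lemma good6 : Good psi 3 ![![1, 1, 1], ![1, 1, 1], ![1, 1, 1]] := by
  have nA : (!![0,1,0;1,0,-1;1,1,2] : Mat).det ≠ 0 := by
    rw [Matrix.det_fin_three]; simp; norm_num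
  have nB : (!![1,1,0;1,0,1;2,1,-1] : Mat).det ≠ 0 := by
    rw [Matrix.det_fin_three]; simp
  have nC : (!![2,0,0;2,1,0;1,1,1] : Mat).det ≠ 0 := by
    rw [Matrix.det_fin_three]; simp
  have pe := psi_eq
  set A : Mat := !![0,1,0;1,0,-1;1,1,2]
  set B : Mat := !![1,1,0;1,0,1;2,1,-1]
  set C : Mat := !![2,0,0;2,1,0;1,1,1]
  refine ⟨-(3 * Real.log 3) - 2 * (Real.log ‖A.det‖ + Real.log ‖B.det‖ + Real.log ‖C.det‖),
    fun M t hM => ?_⟩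
  have hp := nsq_pos (ac_ne_zero hM psi_ne)
  have e : ac M psi = act (M 0 * A) (M 1 * B) (M 2 * C) ghz := by
    rw [pe, ac, act_act]
  have hd : ∀ (a : Fin 3) (N : Mat), N.det ≠ 0 → (M a * N).det ≠ 0 ∧
      Real.log ‖(M a * N).det‖ = t a 0 + t a 1 + t a 2 + Real.log ‖N.det‖ := by
    intro a N hN
    have hM' : (M a).det ≠ 0 := (hM a).det_ne.ne_zero
    rw [Matrix.det_mul]
    refine ⟨mul_ne_zero hM' hN, ?_⟩
    rw [norm_mul, Real.log_mul (norm_ne_zero_iff.2 hM') (norm_ne_zero_iff.2 hN), (hM a).det,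
      Complex.norm_real, Real.norm_eq_abs, Real.abs_exp, Real.log_exp]
  obtain ⟨a1, a2⟩ := hd 0 A nA
  obtain ⟨b1, b2⟩ := hd 1 B nB
  obtain ⟨c1, c2⟩ := hd 2 C nC
  have := ghz_bound _ _ _ a1 b1 c1
  rw [← e, a2, b2, c2, Real.log_div hp.ne' (by norm_num)] at this
  have ep : pair ![![1, 1, 1], ![1, 1, 1], ![1, 1, 1]] t = (t 0 0 + t 0 1 + t 0 2) +
      (t 1 0 + t 1 1 + t 1 2) + (t 2 0 + t 2 1 + t 2 2) := by
    simp [pair, Fin.sum_univ_three]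
  rw [ep]
  linarith
/-- Coefficients of the 45 facets of the spectral cone. -/
def co : Fin 45 → Fin 3 → Fin 3 → ℤ := ![
  ![![1, 0, 0], ![0, 0, 0], ![0, 0, 0]],
  ![![-1, 1, 0], ![0, 0, 0], ![0, 0, 0]],
  ![![0, -1, 1], ![0, 0, 0], ![0, 0, 0]],
  ![![0, 0, 0], ![1, 0, 0], ![0, 0, 0]],
  ![![0, 0, 0], ![-1, 1, 0], ![0, 0, 0]],
  ![![0, 0, 0], ![0, -1, 1], ![0, 0, 0]],
  ![![0, 0, 0], ![0, 0, 0], ![1, 0, 0]],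
  ![![0, 0, 0], ![0, 0, 0], ![-1, 1, 0]],
  ![![0, 0, 0], ![0, 0, 0], ![0, -1, 1]],
  ![![-1, -1, 0], ![1, 1, 0], ![1, 1, 0]],
  ![![1, 1, 0], ![-1, -1, 0], ![1, 1, 0]],
  ![![1, 1, 0], ![1, 1, 0], ![-1, -1, 0]],
  ![![-1, 0, -1], ![1, 1, 0], ![1, 0, 1]],
  ![![-1, 0, -1], ![1, 0, 1], ![1, 1, 0]],
  ![![1, 1, 0], ![-1, 0, -1], ![1, 0, 1]],
  ![![1, 0, 1], ![-1, 0, -1], ![1, 1, 0]],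
  ![![1, 1, 0], ![1, 0, 1], ![-1, 0, -1]],
  ![![1, 0, 1], ![1, 1, 0], ![-1, 0, -1]],
  ![![0, -1, -1], ![1, 1, 0], ![0, 1, 1]],
  ![![0, -1, -1], ![0, 1, 1], ![1, 1, 0]],
  ![![1, 1, 0], ![0, -1, -1], ![0, 1, 1]],
  ![![0, 1, 1], ![0, -1, -1], ![1, 1, 0]],
  ![![1, 1, 0], ![0, 1, 1], ![0, -1, -1]],
  ![![0, 1, 1], ![1, 1, 0], ![0, -1, -1]],
  ![![-1, -2, 0], ![1, 2, 0], ![1, 2, 0]],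
  ![![1, 2, 0], ![-1, -2, 0], ![1, 2, 0]],
  ![![1, 2, 0], ![1, 2, 0], ![-1, -2, 0]],
  ![![-2, -1, 0], ![1, 2, 0], ![2, 1, 0]],
  ![![-2, -1, 0], ![2, 1, 0], ![1, 2, 0]],
  ![![1, 2, 0], ![-2, -1, 0], ![2, 1, 0]],
  ![![2, 1, 0], ![-2, -1, 0], ![1, 2, 0]],
  ![![1, 2, 0], ![2, 1, 0], ![-2, -1, 0]],
  ![![2, 1, 0], ![1, 2, 0], ![-2, -1, 0]],
  ![![0, -2, -1], ![1, 2, 0], ![0, 2, 1]],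
  ![![0, -2, -1], ![0, 2, 1], ![1, 2, 0]],
  ![![1, 2, 0], ![0, -2, -1], ![0, 2, 1]],
  ![![0, 2, 1], ![0, -2, -1], ![1, 2, 0]],
  ![![1, 2, 0], ![0, 2, 1], ![0, -2, -1]],
  ![![0, 2, 1], ![1, 2, 0], ![0, -2, -1]],
  ![![0, -2, -1], ![2, 1, 0], ![0, 1, 2]],
  ![![0, -2, -1], ![0, 1, 2], ![2, 1, 0]],
  ![![2, 1, 0], ![0, -2, -1], ![0, 1, 2]],
  ![![0, 1, 2], ![0, -2, -1], ![2, 1, 0]],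
  ![![2, 1, 0], ![0, 1, 2], ![0, -2, -1]],
  ![![0, 1, 2], ![2, 1, 0], ![0, -2, -1]]]

/-- Value of the `i`-th facet functional. -/
noncomputable def fc (i : Fin 45) (y : Fin 3 → Fin 3 → ℝ) : ℝ := ∑ a, ∑ k, (co i a k : ℝ) * y a k

/-- Value of the `i`-th facet functional on integer points. -/
def fz (i : Fin 45) (v : Fin 3 → Fin 3 → ℤ) : ℤ := ∑ a, ∑ k, co i a k * v a k

/-- The real point of an integer point. -/
def rl (v : Fin 3 → Fin 3 → ℤ) : Fin 3 → Fin 3 → ℝ := fun a k => (v a k : ℝ)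

/-- The spectral cone. -/
structure P (y : Fin 3 → Fin 3 → ℝ) : Prop where
  nn : ∀ i, 0 ≤ fc i y
  s : ∀ a b, y a 0 + y a 1 + y a 2 = y b 0 + y b 1 + y b 2

lemma fc_sub (i : Fin 45) (y : Fin 3 → Fin 3 → ℝ) (t : ℝ) (v : Fin 3 → Fin 3 → ℤ) :
    fc i (y - t • rl v) = fc i y - t * fz i v := by
  simp only [fc, fz, rl, Pi.sub_apply, Pi.smul_apply, smul_eq_mul, Fin.sum_univ_three]
  push_cast
  ring

lemma co_perm : ∀ p q r : Fin 3, p ≠ q → p ≠ r → q ≠ r → ∀ i, ∃ i', ∀ a k,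
    co i a k = co i' (![p, q, r] a) k := by
  decide +kernel

lemma P.perm {y : Fin 3 → Fin 3 → ℝ} (h : P y) (p q r : Fin 3) (h1 : p ≠ q) (h2 : p ≠ r)
    (h3 : q ≠ r) : P (fun a => y (![p, q, r] a)) := by
  refine ⟨fun i => ?_, fun a b => h.s _ _⟩
  obtain ⟨i', hi⟩ := co_perm p q r h1 h2 h3 i
  have hb : Function.Bijective ![p, q, r] := by
    clear hi
    revert p q r
    decide
  have : fc i (fun a => y (![p, q, r] a)) = fc i' y := by
    unfold fc
    rw [← hb.sum_comp (fun a => ∑ k, (co i' a k : ℝ) * y a k)]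
    exact Finset.sum_congr rfl fun a _ => Finset.sum_congr rfl fun k _ => by rw [hi a k]
  rw [this]
  exact h.nn i'

/-- Moving away from a vertex until some facet is hit. -/
lemma step (v : Fin 3 → Fin 3 → ℤ) (hv : ∀ i, 0 ≤ fz i v) (hp : ∃ i, 0 < fz i v)
    (hs : ∀ a b, v a 0 + v a 1 + v a 2 = v b 0 + v b 1 + v b 2)
    {y : Fin 3 → Fin 3 → ℝ} (h : P y) :
    ∃ t : ℝ, 0 ≤ t ∧ ∃ j, 0 < fz j v ∧ P (y - t • rl v) ∧ fc j (y - t • rl v) = 0 := by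
  obtain ⟨i0, hi0⟩ := hp
  obtain ⟨j, hj, hm⟩ := Finset.exists_min_image (Finset.univ.filter fun i => 0 < fz i v)
    (fun i => fc i y / (fz i v : ℝ)) ⟨i0, by simpa using hi0⟩
  have hj' : 0 < fz j v := by simpa using hj
  have hjr : (0 : ℝ) < fz j v := by exact_mod_cast hj'
  refine ⟨fc j y / (fz j v : ℝ), div_nonneg (h.nn j) hjr.le, j, hj', ⟨fun i => ?_, fun a b => ?_⟩, ?_⟩
  · rw [fc_sub]
    rcases (hv i).eq_or_lt with e | e
    · rw [← e]
      simpa using h.nn i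
    · have h1 := hm i (by simpa using e)
      have h2 : (0 : ℝ) < fz i v := by exact_mod_cast e
      rw [le_div_iff₀ h2] at h1
      linarith
  · have h1 := h.s a b
    have h2 : (v a 0 + v a 1 + v a 2 : ℝ) = v b 0 + v b 1 + v b 2 := by exact_mod_cast hs a b
    simp only [rl, Pi.sub_apply, Pi.smul_apply, smul_eq_mul]
    linear_combination h1 - (fc j y / (fz j v : ℝ)) * h2
  · rw [fc_sub]
    field_simp
    ring

/-- Attainability of `y` together with all its permutations. -/
def K (y : Fin 3 → Fin 3 → ℝ) : Prop := ∀ s : Fin 3 → Fin 3, Function.Injective s →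
  Good psi (y (s 0) 0 + y (s 0) 1 + y (s 0) 2) (fun a => y (s a))

lemma K.add {y z : Fin 3 → Fin 3 → ℝ} (h : K y) (h' : K z) : K (y + z) := by
  intro s hs
  have := (h s hs).add (h' s hs)
  convert this using 1
  · simp only [Pi.add_apply]
    ring
  · rfl

lemma K.smul {y : Fin 3 → Fin 3 → ℝ} (h : K y) {r : ℝ} (hr : 0 ≤ r) : K (r • y) := by
  intro s hs
  have := (h s hs).smul hr
  convert this using 1
  · simp only [Pi.smul_apply, smul_eq_mul]
    ring
  · rfl

lemma K.perm {y : Fin 3 → Fin 3 → ℝ} (p q r : Fin 3) (h : K (fun a => y (![p, q, r] a)))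
    (h1 : p ≠ q) (h2 : p ≠ r) (h3 : q ≠ r) : K y := by
  intro s hs
  have hb : Function.Bijective ![p, q, r] := by
    clear h
    revert p q r
    decide
  obtain ⟨g, hg1, hg2⟩ := Function.bijective_iff_has_inverse.1 hb
  have := h (fun a => g (s a)) (hg2.injective.comp hs)
  simpa only [hg2 _] using this

lemma K_of_Sy {m : ℝ} {u v w : Fin 3 → ℝ} (h : Sy m u v w) (hu : u 0 + u 1 + u 2 = m)
    (hv : v 0 + v 1 + v 2 = m) (hw : w 0 + w 1 + w 2 = m) : K ![u, v, w] := by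
  intro s hs
  have h01 : s 0 ≠ s 1 := hs.ne (by decide)
  have h02 : s 0 ≠ s 2 := hs.ne (by decide)
  have h12 : s 1 ≠ s 2 := hs.ne (by decide)
  have e : (fun a => (![u, v, w] : Fin 3 → Fin 3 → ℝ) (s a)) =
      ![(![u, v, w] : Fin 3 → Fin 3 → ℝ) (s 0), (![u, v, w] : Fin 3 → Fin 3 → ℝ) (s 1),
        (![u, v, w] : Fin 3 → Fin 3 → ℝ) (s 2)] := by
    funext a
    fin_cases a <;> rfl
  rw [e]
  obtain ⟨a1, a2, a3, a4, a5, a6⟩ := h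
  generalize s 0 = p at *
  generalize s 1 = q at *
  generalize s 2 = r at *
  clear e hs
  fin_cases p <;> fin_cases q <;> fin_cases r <;> simp_all


lemma f0 (y : Fin 3 → Fin 3 → ℝ) : fc 0 y = y 0 0 := by
  simp [fc, co, Fin.sum_univ_three]; try ring
lemma f1 (y : Fin 3 → Fin 3 → ℝ) : fc 1 y = - y 0 0 + y 0 1 := by
  simp [fc, co, Fin.sum_univ_three]; try ring
lemma f2 (y : Fin 3 → Fin 3 → ℝ) : fc 2 y = - y 0 1 + y 0 2 := by
  simp [fc, co, Fin.sum_univ_three]; try ring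
lemma f3 (y : Fin 3 → Fin 3 → ℝ) : fc 3 y = y 1 0 := by
  simp [fc, co, Fin.sum_univ_three]; try ring
lemma f4 (y : Fin 3 → Fin 3 → ℝ) : fc 4 y = - y 1 0 + y 1 1 := by
  simp [fc, co, Fin.sum_univ_three]; try ring
lemma f5 (y : Fin 3 → Fin 3 → ℝ) : fc 5 y = - y 1 1 + y 1 2 := by
  simp [fc, co, Fin.sum_univ_three]; try ring
lemma f6 (y : Fin 3 → Fin 3 → ℝ) : fc 6 y = y 2 0 := by
  simp [fc, co, Fin.sum_univ_three]; try ring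
lemma f7 (y : Fin 3 → Fin 3 → ℝ) : fc 7 y = - y 2 0 + y 2 1 := by
  simp [fc, co, Fin.sum_univ_three]; try ring
lemma f8 (y : Fin 3 → Fin 3 → ℝ) : fc 8 y = - y 2 1 + y 2 2 := by
  simp [fc, co, Fin.sum_univ_three]; try ring
lemma f9 (y : Fin 3 → Fin 3 → ℝ) : fc 9 y = - y 0 0 - y 0 1 + y 1 0 + y 1 1 + y 2 0 + y 2 1 := by
  simp [fc, co, Fin.sum_univ_three]; try ring
lemma f10 (y : Fin 3 → Fin 3 → ℝ) : fc 10 y = y 0 0 + y 0 1 - y 1 0 - y 1 1 + y 2 0 + y 2 1 := by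
  simp [fc, co, Fin.sum_univ_three]; try ring
lemma f11 (y : Fin 3 → Fin 3 → ℝ) : fc 11 y = y 0 0 + y 0 1 + y 1 0 + y 1 1 - y 2 0 - y 2 1 := by
  simp [fc, co, Fin.sum_univ_three]; try ring
lemma f12 (y : Fin 3 → Fin 3 → ℝ) : fc 12 y = - y 0 0 - y 0 2 + y 1 0 + y 1 1 + y 2 0 + y 2 2 := by
  simp [fc, co, Fin.sum_univ_three]; try ring
lemma f13 (y : Fin 3 → Fin 3 → ℝ) : fc 13 y = - y 0 0 - y 0 2 + y 1 0 + y 1 2 + y 2 0 + y 2 1 := by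
  simp [fc, co, Fin.sum_univ_three]; try ring
lemma f14 (y : Fin 3 → Fin 3 → ℝ) : fc 14 y = y 0 0 + y 0 1 - y 1 0 - y 1 2 + y 2 0 + y 2 2 := by
  simp [fc, co, Fin.sum_univ_three]; try ring
lemma f15 (y : Fin 3 → Fin 3 → ℝ) : fc 15 y = y 0 0 + y 0 2 - y 1 0 - y 1 2 + y 2 0 + y 2 1 := by
  simp [fc, co, Fin.sum_univ_three]; try ring
lemma f16 (y : Fin 3 → Fin 3 → ℝ) : fc 16 y = y 0 0 + y 0 1 + y 1 0 + y 1 2 - y 2 0 - y 2 2 := by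
  simp [fc, co, Fin.sum_univ_three]; try ring
lemma f17 (y : Fin 3 → Fin 3 → ℝ) : fc 17 y = y 0 0 + y 0 2 + y 1 0 + y 1 1 - y 2 0 - y 2 2 := by
  simp [fc, co, Fin.sum_univ_three]; try ring
lemma f18 (y : Fin 3 → Fin 3 → ℝ) : fc 18 y = - y 0 1 - y 0 2 + y 1 0 + y 1 1 + y 2 1 + y 2 2 := by
  simp [fc, co, Fin.sum_univ_three]; try ring
lemma f19 (y : Fin 3 → Fin 3 → ℝ) : fc 19 y = - y 0 1 - y 0 2 + y 1 1 + y 1 2 + y 2 0 + y 2 1 := by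
  simp [fc, co, Fin.sum_univ_three]; try ring
lemma f20 (y : Fin 3 → Fin 3 → ℝ) : fc 20 y = y 0 0 + y 0 1 - y 1 1 - y 1 2 + y 2 1 + y 2 2 := by
  simp [fc, co, Fin.sum_univ_three]; try ring
lemma f21 (y : Fin 3 → Fin 3 → ℝ) : fc 21 y = y 0 1 + y 0 2 - y 1 1 - y 1 2 + y 2 0 + y 2 1 := by
  simp [fc, co, Fin.sum_univ_three]; try ring
lemma f22 (y : Fin 3 → Fin 3 → ℝ) : fc 22 y = y 0 0 + y 0 1 + y 1 1 + y 1 2 - y 2 1 - y 2 2 := by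
  simp [fc, co, Fin.sum_univ_three]; try ring
lemma f23 (y : Fin 3 → Fin 3 → ℝ) : fc 23 y = y 0 1 + y 0 2 + y 1 0 + y 1 1 - y 2 1 - y 2 2 := by
  simp [fc, co, Fin.sum_univ_three]; try ring
lemma f24 (y : Fin 3 → Fin 3 → ℝ) : fc 24 y = - y 0 0 - 2 * y 0 1 + y 1 0 + 2 * y 1 1 + y 2 0 + 2 * y 2 1 := by
  simp [fc, co, Fin.sum_univ_three]; try ring
lemma f25 (y : Fin 3 → Fin 3 → ℝ) : fc 25 y = y 0 0 + 2 * y 0 1 - y 1 0 - 2 * y 1 1 + y 2 0 + 2 * y 2 1 := by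
  simp [fc, co, Fin.sum_univ_three]; try ring
lemma f26 (y : Fin 3 → Fin 3 → ℝ) : fc 26 y = y 0 0 + 2 * y 0 1 + y 1 0 + 2 * y 1 1 - y 2 0 - 2 * y 2 1 := by
  simp [fc, co, Fin.sum_univ_three]; try ring
lemma f27 (y : Fin 3 → Fin 3 → ℝ) : fc 27 y = - 2 * y 0 0 - y 0 1 + y 1 0 + 2 * y 1 1 + 2 * y 2 0 + y 2 1 := by
  simp [fc, co, Fin.sum_univ_three]; try ring
lemma f28 (y : Fin 3 → Fin 3 → ℝ) : fc 28 y = - 2 * y 0 0 - y 0 1 + 2 * y 1 0 + y 1 1 + y 2 0 + 2 * y 2 1 := by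
  simp [fc, co, Fin.sum_univ_three]; try ring
lemma f29 (y : Fin 3 → Fin 3 → ℝ) : fc 29 y = y 0 0 + 2 * y 0 1 - 2 * y 1 0 - y 1 1 + 2 * y 2 0 + y 2 1 := by
  simp [fc, co, Fin.sum_univ_three]; try ring
lemma f30 (y : Fin 3 → Fin 3 → ℝ) : fc 30 y = 2 * y 0 0 + y 0 1 - 2 * y 1 0 - y 1 1 + y 2 0 + 2 * y 2 1 := by
  simp [fc, co, Fin.sum_univ_three]; try ring
lemma f31 (y : Fin 3 → Fin 3 → ℝ) : fc 31 y = y 0 0 + 2 * y 0 1 + 2 * y 1 0 + y 1 1 - 2 * y 2 0 - y 2 1 := by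
  simp [fc, co, Fin.sum_univ_three]; try ring
lemma f32 (y : Fin 3 → Fin 3 → ℝ) : fc 32 y = 2 * y 0 0 + y 0 1 + y 1 0 + 2 * y 1 1 - 2 * y 2 0 - y 2 1 := by
  simp [fc, co, Fin.sum_univ_three]; try ring
lemma f33 (y : Fin 3 → Fin 3 → ℝ) : fc 33 y = - 2 * y 0 1 - y 0 2 + y 1 0 + 2 * y 1 1 + 2 * y 2 1 + y 2 2 := by
  simp [fc, co, Fin.sum_univ_three]; try ring
lemma f34 (y : Fin 3 → Fin 3 → ℝ) : fc 34 y = - 2 * y 0 1 - y 0 2 + 2 * y 1 1 + y 1 2 + y 2 0 + 2 * y 2 1 := by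
  simp [fc, co, Fin.sum_univ_three]; try ring
lemma f35 (y : Fin 3 → Fin 3 → ℝ) : fc 35 y = y 0 0 + 2 * y 0 1 - 2 * y 1 1 - y 1 2 + 2 * y 2 1 + y 2 2 := by
  simp [fc, co, Fin.sum_univ_three]; try ring
lemma f36 (y : Fin 3 → Fin 3 → ℝ) : fc 36 y = 2 * y 0 1 + y 0 2 - 2 * y 1 1 - y 1 2 + y 2 0 + 2 * y 2 1 := by
  simp [fc, co, Fin.sum_univ_three]; try ring
lemma f37 (y : Fin 3 → Fin 3 → ℝ) : fc 37 y = y 0 0 + 2 * y 0 1 + 2 * y 1 1 + y 1 2 - 2 * y 2 1 - y 2 2 := by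
  simp [fc, co, Fin.sum_univ_three]; try ring
lemma f38 (y : Fin 3 → Fin 3 → ℝ) : fc 38 y = 2 * y 0 1 + y 0 2 + y 1 0 + 2 * y 1 1 - 2 * y 2 1 - y 2 2 := by
  simp [fc, co, Fin.sum_univ_three]; try ring
lemma f39 (y : Fin 3 → Fin 3 → ℝ) : fc 39 y = - 2 * y 0 1 - y 0 2 + 2 * y 1 0 + y 1 1 + y 2 1 + 2 * y 2 2 := by
  simp [fc, co, Fin.sum_univ_three]; try ring
lemma f40 (y : Fin 3 → Fin 3 → ℝ) : fc 40 y = - 2 * y 0 1 - y 0 2 + y 1 1 + 2 * y 1 2 + 2 * y 2 0 + y 2 1 := by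
  simp [fc, co, Fin.sum_univ_three]; try ring
lemma f41 (y : Fin 3 → Fin 3 → ℝ) : fc 41 y = 2 * y 0 0 + y 0 1 - 2 * y 1 1 - y 1 2 + y 2 1 + 2 * y 2 2 := by
  simp [fc, co, Fin.sum_univ_three]; try ring
lemma f42 (y : Fin 3 → Fin 3 → ℝ) : fc 42 y = y 0 1 + 2 * y 0 2 - 2 * y 1 1 - y 1 2 + 2 * y 2 0 + y 2 1 := by
  simp [fc, co, Fin.sum_univ_three]; try ring
lemma f43 (y : Fin 3 → Fin 3 → ℝ) : fc 43 y = 2 * y 0 0 + y 0 1 + y 1 1 + 2 * y 1 2 - 2 * y 2 1 - y 2 2 := by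
  simp [fc, co, Fin.sum_univ_three]; try ring
lemma f44 (y : Fin 3 → Fin 3 → ℝ) : fc 44 y = y 0 1 + 2 * y 0 2 + 2 * y 1 0 + y 1 1 - 2 * y 2 1 - y 2 2 := by
  simp [fc, co, Fin.sum_univ_three]; try ring
lemma b_good1 : K (rl ![![0, 0, 1], ![0, 0, 1], ![0, 0, 1]]) := by
  have := (K_of_Sy good1 (by simp; try norm_num) (by simp; try norm_num) (by simp; try norm_num))
  convert this using 1
  funext a k
  fin_cases a <;> fin_cases k <;> norm_num [rl]

lemma kv0 : K (rl ![![0, 0, 1], ![0, 0, 1], ![0, 0, 1]]) := b_good1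

lemma b_good2 : K (rl ![![0, 0, 2], ![0, 1, 1], ![0, 1, 1]]) := by
  have := (K_of_Sy good2 (by simp; try norm_num) (by simp; try norm_num) (by simp; try norm_num))
  convert this using 1
  funext a k
  fin_cases a <;> fin_cases k <;> norm_num [rl]

lemma kv1 : K (rl ![![0, 0, 2], ![0, 1, 1], ![0, 1, 1]]) := b_good2

lemma kv2 : K (rl ![![0, 1, 1], ![0, 0, 2], ![0, 1, 1]]) := by
  refine K.perm 1 0 2 ?_ (by decide) (by decide) (by decide)
  convert b_good2 using 1
  funext a
  fin_cases a <;> rfl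

lemma b_good3 : K (rl ![![0, 1, 1], ![0, 1, 1], ![0, 1, 1]]) := by
  have := (K_of_Sy good3 (by simp; try norm_num) (by simp; try norm_num) (by simp; try norm_num)).smul (r := 1 / 2) (by norm_num)
  convert this using 1
  funext a k
  fin_cases a <;> fin_cases k <;> norm_num [rl]

lemma kv4 : K (rl ![![0, 1, 1], ![0, 1, 1], ![0, 1, 1]]) := b_good3

lemma b_good4 : K (rl ![![0, 0, 3], ![1, 1, 1], ![1, 1, 1]]) := by
  have := (K_of_Sy good4 (by simp; try norm_num) (by simp; try norm_num) (by simp; try norm_num))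
  convert this using 1
  funext a k
  fin_cases a <;> fin_cases k <;> norm_num [rl]

lemma kv5 : K (rl ![![0, 0, 3], ![1, 1, 1], ![1, 1, 1]]) := b_good4

lemma b_good5 : K (rl ![![0, 1, 2], ![0, 1, 2], ![1, 1, 1]]) := by
  have := (K_of_Sy good5 (by simp; try norm_num) (by simp; try norm_num) (by simp; try norm_num))
  convert this using 1
  funext a k
  fin_cases a <;> fin_cases k <;> norm_num [rl]

lemma kv6 : K (rl ![![0, 1, 2], ![0, 1, 2], ![1, 1, 1]]) := b_good5

lemma kv8 : K (rl ![![1, 1, 1], ![0, 0, 3], ![1, 1, 1]]) := by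
  refine K.perm 1 0 2 ?_ (by decide) (by decide) (by decide)
  convert b_good4 using 1
  funext a
  fin_cases a <;> rfl

lemma b_good7 : K (rl ![![0, 1, 3], ![0, 2, 2], ![1, 1, 2]]) := by
  have := (K_of_Sy good7 (by simp; try norm_num) (by simp; try norm_num) (by simp; try norm_num))
  convert this using 1
  funext a k
  fin_cases a <;> fin_cases k <;> norm_num [rl]

lemma kv12 : K (rl ![![0, 1, 3], ![0, 2, 2], ![1, 1, 2]]) := b_good7

lemma kv13 : K (rl ![![0, 1, 3], ![1, 1, 2], ![0, 2, 2]]) := by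
  refine K.perm 0 2 1 ?_ (by decide) (by decide) (by decide)
  convert b_good7 using 1
  funext a
  fin_cases a <;> rfl

lemma kv16 : K (rl ![![1, 1, 2], ![0, 1, 3], ![0, 2, 2]]) := by
  refine K.perm 1 2 0 ?_ (by decide) (by decide) (by decide)
  convert b_good7 using 1
  funext a
  fin_cases a <;> rfl

lemma b_good8 : K (rl ![![0, 3, 3], ![0, 3, 3], ![2, 2, 2]]) := by
  have := (K_of_Sy good8 (by simp; try norm_num) (by simp; try norm_num) (by simp; try norm_num))
  convert this using 1
  funext a k
  fin_cases a <;> fin_cases k <;> norm_num [rl]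

lemma kv18 : K (rl ![![0, 3, 3], ![0, 3, 3], ![2, 2, 2]]) := b_good8

lemma b_good10 : K (rl ![![0, 3, 3], ![1, 1, 4], ![2, 2, 2]]) := by
  have := (K_of_Sy good10 (by simp; try norm_num) (by simp; try norm_num) (by simp; try norm_num))
  convert this using 1
  funext a k
  fin_cases a <;> fin_cases k <;> norm_num [rl]

lemma kv20 : K (rl ![![0, 3, 3], ![1, 1, 4], ![2, 2, 2]]) := b_good10

lemma b_good11 : K (rl ![![0, 3, 3], ![2, 2, 2], ![2, 2, 2]]) := by
  have := (K_of_Sy good11 (by simp; try norm_num) (by simp; try norm_num) (by simp; try norm_num)).smul (r := 1 / 2) (by norm_num)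
  convert this using 1
  funext a k
  fin_cases a <;> fin_cases k <;> norm_num [rl]

lemma kv23 : K (rl ![![0, 3, 3], ![2, 2, 2], ![2, 2, 2]]) := b_good11

lemma b_good9 : K (rl ![![0, 3, 3], ![1, 1, 4], ![1, 1, 4]]) := by
  have := (K_of_Sy good9 (by simp; try norm_num) (by simp; try norm_num) (by simp; try norm_num))
  convert this using 1
  funext a k
  fin_cases a <;> fin_cases k <;> norm_num [rl]

lemma kv24 : K (rl ![![1, 1, 4], ![0, 3, 3], ![1, 1, 4]]) := by
  refine K.perm 1 0 2 ?_ (by decide) (by decide) (by decide)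
  convert b_good9 using 1
  funext a
  fin_cases a <;> rfl

lemma kv25 : K (rl ![![1, 1, 4], ![0, 3, 3], ![2, 2, 2]]) := by
  refine K.perm 1 0 2 ?_ (by decide) (by decide) (by decide)
  convert b_good10 using 1
  funext a
  fin_cases a <;> rfl

lemma kv26 : K (rl ![![1, 1, 4], ![1, 1, 4], ![0, 3, 3]]) := by
  refine K.perm 2 0 1 ?_ (by decide) (by decide) (by decide)
  convert b_good9 using 1
  funext a
  fin_cases a <;> rfl

lemma kv28 : K (rl ![![2, 2, 2], ![0, 3, 3], ![0, 3, 3]]) := by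
  refine K.perm 1 2 0 ?_ (by decide) (by decide) (by decide)
  convert b_good8 using 1
  funext a
  fin_cases a <;> rfl

lemma kv11 : K (rl ![![1, 1, 1], ![1, 1, 1], ![1, 1, 1]]) := by
  intro s hs
  convert good6 using 1
  · generalize s 0 = p
    fin_cases p <;> simp [rl] <;> norm_num
  · funext a k
    generalize s a = p
    fin_cases p <;> fin_cases a <;> fin_cases k <;> norm_num [rl]

lemma leaf0 {y : Fin 3 → Fin 3 → ℝ} (h : P y) (e26 : fc 26 y = 0) : K y := by
  have e : y = (fc 8 y / 1) • rl ![![0, 0, 1], ![0, 0, 1], ![0, 0, 1]] +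
      (fc 4 y / 1) • rl ![![0, 0, 2], ![0, 1, 1], ![0, 1, 1]] +
      (fc 1 y / 1) • rl ![![0, 1, 1], ![0, 0, 2], ![0, 1, 1]] +
      (fc 12 y / 1) • rl ![![0, 0, 3], ![1, 1, 1], ![1, 1, 1]] +
      (fc 14 y / 1) • rl ![![1, 1, 1], ![0, 0, 3], ![1, 1, 1]] +
      (fc 11 y / 1) • rl ![![1, 1, 4], ![1, 1, 4], ![0, 3, 3]] := by
    rw [f26] at e26
    have s1 := h.s 0 1
    have s2 := h.s 0 2
    rw [f1, f4, f8, f11, f12, f14]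
    funext a k
    fin_cases a <;> fin_cases k <;> simp [rl] <;> linarith
  rw [e]
  exact ((((((kv0.smul (div_nonneg (h.nn 8) (by norm_num))).add
    (kv1.smul (div_nonneg (h.nn 4) (by norm_num)))).add
    (kv2.smul (div_nonneg (h.nn 1) (by norm_num)))).add
    (kv5.smul (div_nonneg (h.nn 12) (by norm_num)))).add
    (kv8.smul (div_nonneg (h.nn 14) (by norm_num)))).add
    (kv26.smul (div_nonneg (h.nn 11) (by norm_num))))

lemma leaf1 {y : Fin 3 → Fin 3 → ℝ} (h : P y) (e31 : fc 31 y = 0) : K y := by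
  have e : y = (fc 8 y / 1) • rl ![![0, 0, 1], ![0, 0, 1], ![0, 0, 1]] +
      (fc 7 y / 1) • rl ![![0, 0, 2], ![0, 1, 1], ![0, 1, 1]] +
      (fc 3 y / 1) • rl ![![0, 0, 3], ![1, 1, 1], ![1, 1, 1]] +
      (fc 1 y / 1) • rl ![![0, 1, 2], ![0, 1, 2], ![1, 1, 1]] +
      (fc 20 y / 1) • rl ![![1, 1, 1], ![0, 0, 3], ![1, 1, 1]] +
      (fc 11 y / 1) • rl ![![1, 1, 4], ![0, 3, 3], ![2, 2, 2]] := by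
    rw [f31] at e31
    have s1 := h.s 0 1
    have s2 := h.s 0 2
    rw [f1, f3, f7, f8, f11, f20]
    funext a k
    fin_cases a <;> fin_cases k <;> simp [rl] <;> linarith
  rw [e]
  exact ((((((kv0.smul (div_nonneg (h.nn 8) (by norm_num))).add
    (kv1.smul (div_nonneg (h.nn 7) (by norm_num)))).add
    (kv5.smul (div_nonneg (h.nn 3) (by norm_num)))).add
    (kv6.smul (div_nonneg (h.nn 1) (by norm_num)))).add
    (kv8.smul (div_nonneg (h.nn 20) (by norm_num)))).add
    (kv25.smul (div_nonneg (h.nn 11) (by norm_num))))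

lemma leaf2 {y : Fin 3 → Fin 3 → ℝ} (h : P y) (e20 : fc 20 y = 0) : K y := by
  have e : y = (fc 41 y / 1) • rl ![![0, 0, 1], ![0, 0, 1], ![0, 0, 1]] +
      (fc 7 y / 1) • rl ![![0, 0, 2], ![0, 1, 1], ![0, 1, 1]] +
      (fc 3 y / 1) • rl ![![0, 0, 3], ![1, 1, 1], ![1, 1, 1]] +
      (fc 35 y / 1) • rl ![![0, 1, 2], ![0, 1, 2], ![1, 1, 1]] +
      (fc 31 y / 1) • rl ![![0, 1, 3], ![0, 2, 2], ![1, 1, 2]] +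
      (fc 0 y / 1) • rl ![![1, 1, 4], ![0, 3, 3], ![2, 2, 2]] := by
    rw [f20] at e20
    have s1 := h.s 0 1
    have s2 := h.s 0 2
    rw [f0, f3, f7, f31, f35, f41]
    funext a k
    fin_cases a <;> fin_cases k <;> simp [rl] <;> linarith
  rw [e]
  exact ((((((kv0.smul (div_nonneg (h.nn 41) (by norm_num))).add
    (kv1.smul (div_nonneg (h.nn 7) (by norm_num)))).add
    (kv5.smul (div_nonneg (h.nn 3) (by norm_num)))).add
    (kv6.smul (div_nonneg (h.nn 35) (by norm_num)))).add
    (kv12.smul (div_nonneg (h.nn 31) (by norm_num)))).add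
    (kv25.smul (div_nonneg (h.nn 0) (by norm_num))))

lemma leaf3 {y : Fin 3 → Fin 3 → ℝ} (h : P y) (e11 : fc 11 y = 0) : K y := by
  have e : y = (fc 8 y / 1) • rl ![![0, 0, 1], ![0, 0, 1], ![0, 0, 1]] +
      (fc 32 y / 1) • rl ![![0, 0, 2], ![0, 1, 1], ![0, 1, 1]] +
      (fc 31 y / 1) • rl ![![0, 1, 1], ![0, 0, 2], ![0, 1, 1]] +
      (fc 3 y / 1) • rl ![![0, 0, 3], ![1, 1, 1], ![1, 1, 1]] +
      (fc 26 y / 1) • rl ![![0, 1, 2], ![0, 1, 2], ![1, 1, 1]] +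
      (fc 0 y / 1) • rl ![![1, 1, 1], ![0, 0, 3], ![1, 1, 1]] := by
    rw [f11] at e11
    have s1 := h.s 0 1
    have s2 := h.s 0 2
    rw [f0, f3, f8, f26, f31, f32]
    funext a k
    fin_cases a <;> fin_cases k <;> simp [rl] <;> linarith
  rw [e]
  exact ((((((kv0.smul (div_nonneg (h.nn 8) (by norm_num))).add
    (kv1.smul (div_nonneg (h.nn 32) (by norm_num)))).add
    (kv2.smul (div_nonneg (h.nn 31) (by norm_num)))).add
    (kv5.smul (div_nonneg (h.nn 3) (by norm_num)))).add
    (kv6.smul (div_nonneg (h.nn 26) (by norm_num)))).add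
    (kv8.smul (div_nonneg (h.nn 0) (by norm_num))))

lemma leaf4 {y : Fin 3 → Fin 3 → ℝ} (h : P y) (e14 : fc 14 y = 0) : K y := by
  have e : y = (fc 8 y / 1) • rl ![![0, 0, 1], ![0, 0, 1], ![0, 0, 1]] +
      (fc 4 y / 1) • rl ![![0, 0, 2], ![0, 1, 1], ![0, 1, 1]] +
      (fc 37 y / 1) • rl ![![0, 1, 1], ![0, 0, 2], ![0, 1, 1]] +
      (fc 6 y / 1) • rl ![![0, 0, 3], ![1, 1, 1], ![1, 1, 1]] +
      (fc 26 y / 1) • rl ![![0, 1, 3], ![1, 1, 2], ![0, 2, 2]] +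
      (fc 0 y / 1) • rl ![![1, 1, 4], ![1, 1, 4], ![0, 3, 3]] := by
    rw [f14] at e14
    have s1 := h.s 0 1
    have s2 := h.s 0 2
    rw [f0, f4, f6, f8, f26, f37]
    funext a k
    fin_cases a <;> fin_cases k <;> simp [rl] <;> linarith
  rw [e]
  exact ((((((kv0.smul (div_nonneg (h.nn 8) (by norm_num))).add
    (kv1.smul (div_nonneg (h.nn 4) (by norm_num)))).add
    (kv2.smul (div_nonneg (h.nn 37) (by norm_num)))).add
    (kv5.smul (div_nonneg (h.nn 6) (by norm_num)))).add
    (kv13.smul (div_nonneg (h.nn 26) (by norm_num)))).add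
    (kv26.smul (div_nonneg (h.nn 0) (by norm_num))))

lemma leaf5 {y : Fin 3 → Fin 3 → ℝ} (h : P y) (e35 : fc 35 y = 0) : K y := by
  have e : y = (fc 5 y / 1) • rl ![![0, 0, 1], ![0, 0, 1], ![0, 0, 1]] +
      (fc 7 y / 1) • rl ![![0, 0, 2], ![0, 1, 1], ![0, 1, 1]] +
      (fc 3 y / 1) • rl ![![0, 0, 3], ![1, 1, 1], ![1, 1, 1]] +
      (fc 1 y / 1) • rl ![![0, 1, 3], ![0, 2, 2], ![1, 1, 2]] +
      (fc 20 y / 1) • rl ![![1, 1, 4], ![0, 3, 3], ![1, 1, 4]] +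
      (fc 16 y / 1) • rl ![![1, 1, 4], ![0, 3, 3], ![2, 2, 2]] := by
    rw [f35] at e35
    have s1 := h.s 0 1
    have s2 := h.s 0 2
    rw [f1, f3, f5, f7, f16, f20]
    funext a k
    fin_cases a <;> fin_cases k <;> simp [rl] <;> linarith
  rw [e]
  exact ((((((kv0.smul (div_nonneg (h.nn 5) (by norm_num))).add
    (kv1.smul (div_nonneg (h.nn 7) (by norm_num)))).add
    (kv5.smul (div_nonneg (h.nn 3) (by norm_num)))).add
    (kv12.smul (div_nonneg (h.nn 1) (by norm_num)))).add
    (kv24.smul (div_nonneg (h.nn 20) (by norm_num)))).add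
    (kv25.smul (div_nonneg (h.nn 16) (by norm_num))))

lemma leaf6 {y : Fin 3 → Fin 3 → ℝ} (h : P y) (e41 : fc 41 y = 0) : K y := by
  have e : y = (fc 7 y / 1) • rl ![![0, 0, 2], ![0, 1, 1], ![0, 1, 1]] +
      (fc 3 y / 1) • rl ![![0, 0, 3], ![1, 1, 1], ![1, 1, 1]] +
      (fc 5 y / 1) • rl ![![0, 1, 2], ![0, 1, 2], ![1, 1, 1]] +
      (fc 8 y / 1) • rl ![![0, 1, 3], ![0, 2, 2], ![1, 1, 2]] +
      (fc 20 y / 1) • rl ![![0, 3, 3], ![0, 3, 3], ![2, 2, 2]] +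
      (fc 0 y / 1) • rl ![![1, 1, 4], ![0, 3, 3], ![2, 2, 2]] := by
    rw [f41] at e41
    have s1 := h.s 0 1
    have s2 := h.s 0 2
    rw [f0, f3, f5, f7, f8, f20]
    funext a k
    fin_cases a <;> fin_cases k <;> simp [rl] <;> linarith
  rw [e]
  exact ((((((kv1.smul (div_nonneg (h.nn 7) (by norm_num))).add
    (kv5.smul (div_nonneg (h.nn 3) (by norm_num)))).add
    (kv6.smul (div_nonneg (h.nn 5) (by norm_num)))).add
    (kv12.smul (div_nonneg (h.nn 8) (by norm_num)))).add
    (kv18.smul (div_nonneg (h.nn 20) (by norm_num)))).add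
    (kv25.smul (div_nonneg (h.nn 0) (by norm_num))))

lemma leaf7 {y : Fin 3 → Fin 3 → ℝ} (h : P y) (e7 : fc 7 y = 0) (e20 : fc 20 y = 0) : K y := by
  have e : y = (fc 41 y / 1) • rl ![![0, 0, 1], ![0, 0, 1], ![0, 0, 1]] +
      (fc 3 y / 1) • rl ![![0, 0, 3], ![1, 1, 1], ![1, 1, 1]] +
      (fc 35 y / 1) • rl ![![0, 1, 2], ![0, 1, 2], ![1, 1, 1]] +
      (fc 31 y / 1) • rl ![![0, 1, 3], ![0, 2, 2], ![1, 1, 2]] +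
      (fc 0 y / 1) • rl ![![1, 1, 4], ![0, 3, 3], ![2, 2, 2]] := by
    rw [f7] at e7
    rw [f20] at e20
    have s1 := h.s 0 1
    have s2 := h.s 0 2
    rw [f0, f3, f31, f35, f41]
    funext a k
    fin_cases a <;> fin_cases k <;> simp [rl] <;> linarith
  rw [e]
  exact (((((kv0.smul (div_nonneg (h.nn 41) (by norm_num))).add
    (kv5.smul (div_nonneg (h.nn 3) (by norm_num)))).add
    (kv6.smul (div_nonneg (h.nn 35) (by norm_num)))).add
    (kv12.smul (div_nonneg (h.nn 31) (by norm_num)))).add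
    (kv25.smul (div_nonneg (h.nn 0) (by norm_num))))

lemma leaf8 {y : Fin 3 → Fin 3 → ℝ} (h : P y) (e7 : fc 7 y = 0) (e35 : fc 35 y = 0) : K y := by
  have e : y = (fc 5 y / 1) • rl ![![0, 0, 1], ![0, 0, 1], ![0, 0, 1]] +
      (fc 3 y / 1) • rl ![![0, 0, 3], ![1, 1, 1], ![1, 1, 1]] +
      (fc 1 y / 1) • rl ![![0, 1, 3], ![0, 2, 2], ![1, 1, 2]] +
      (fc 20 y / 1) • rl ![![1, 1, 4], ![0, 3, 3], ![1, 1, 4]] +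
      (fc 16 y / 1) • rl ![![1, 1, 4], ![0, 3, 3], ![2, 2, 2]] := by
    rw [f7] at e7
    rw [f35] at e35
    have s1 := h.s 0 1
    have s2 := h.s 0 2
    rw [f1, f3, f5, f16, f20]
    funext a k
    fin_cases a <;> fin_cases k <;> simp [rl] <;> linarith
  rw [e]
  exact (((((kv0.smul (div_nonneg (h.nn 5) (by norm_num))).add
    (kv5.smul (div_nonneg (h.nn 3) (by norm_num)))).add
    (kv12.smul (div_nonneg (h.nn 1) (by norm_num)))).add
    (kv24.smul (div_nonneg (h.nn 20) (by norm_num)))).add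
    (kv25.smul (div_nonneg (h.nn 16) (by norm_num))))

lemma leaf9 {y : Fin 3 → Fin 3 → ℝ} (h : P y) (e1 : fc 1 y = 0) (e31 : fc 31 y = 0) : K y := by
  have e : y = (fc 8 y / 1) • rl ![![0, 0, 1], ![0, 0, 1], ![0, 0, 1]] +
      (fc 7 y / 1) • rl ![![0, 0, 2], ![0, 1, 1], ![0, 1, 1]] +
      (fc 3 y / 1) • rl ![![0, 0, 3], ![1, 1, 1], ![1, 1, 1]] +
      (fc 20 y / 1) • rl ![![1, 1, 1], ![0, 0, 3], ![1, 1, 1]] +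
      (fc 11 y / 1) • rl ![![1, 1, 4], ![0, 3, 3], ![2, 2, 2]] := by
    rw [f1] at e1
    rw [f31] at e31
    have s1 := h.s 0 1
    have s2 := h.s 0 2
    rw [f3, f7, f8, f11, f20]
    funext a k
    fin_cases a <;> fin_cases k <;> simp [rl] <;> linarith
  rw [e]
  exact (((((kv0.smul (div_nonneg (h.nn 8) (by norm_num))).add
    (kv1.smul (div_nonneg (h.nn 7) (by norm_num)))).add
    (kv5.smul (div_nonneg (h.nn 3) (by norm_num)))).add
    (kv8.smul (div_nonneg (h.nn 20) (by norm_num)))).add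
    (kv25.smul (div_nonneg (h.nn 11) (by norm_num))))

lemma leaf10 {y : Fin 3 → Fin 3 → ℝ} (h : P y) (e1 : fc 1 y = 0) (e7 : fc 7 y = 0) (e35 : fc 35 y = 0) : K y := by
  have e : y = (fc 5 y / 1) • rl ![![0, 0, 1], ![0, 0, 1], ![0, 0, 1]] +
      (fc 3 y / 1) • rl ![![0, 0, 3], ![1, 1, 1], ![1, 1, 1]] +
      (fc 20 y / 1) • rl ![![1, 1, 4], ![0, 3, 3], ![1, 1, 4]] +
      (fc 16 y / 1) • rl ![![1, 1, 4], ![0, 3, 3], ![2, 2, 2]] := by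
    rw [f1] at e1
    rw [f7] at e7
    rw [f35] at e35
    have s1 := h.s 0 1
    have s2 := h.s 0 2
    rw [f3, f5, f16, f20]
    funext a k
    fin_cases a <;> fin_cases k <;> simp [rl] <;> linarith
  rw [e]
  exact ((((kv0.smul (div_nonneg (h.nn 5) (by norm_num))).add
    (kv5.smul (div_nonneg (h.nn 3) (by norm_num)))).add
    (kv24.smul (div_nonneg (h.nn 20) (by norm_num)))).add
    (kv25.smul (div_nonneg (h.nn 16) (by norm_num))))

lemma leaf11 {y : Fin 3 → Fin 3 → ℝ} (h : P y) (e4 : fc 4 y = 0) (e7 : fc 7 y = 0) (e32 : fc 32 y = 0) : K y := by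
  have e : y = (fc 8 y / 1) • rl ![![0, 0, 1], ![0, 0, 1], ![0, 0, 1]] +
      (fc 18 y / 1) • rl ![![0, 0, 3], ![1, 1, 1], ![1, 1, 1]] +
      (fc 0 y / 1) • rl ![![1, 1, 1], ![0, 0, 3], ![1, 1, 1]] +
      (fc 11 y / 1) • rl ![![0, 3, 3], ![1, 1, 4], ![2, 2, 2]] := by
    rw [f4] at e4
    rw [f7] at e7
    rw [f32] at e32
    have s1 := h.s 0 1
    have s2 := h.s 0 2
    rw [f0, f8, f11, f18]
    funext a k
    fin_cases a <;> fin_cases k <;> simp [rl] <;> linarith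
  rw [e]
  exact ((((kv0.smul (div_nonneg (h.nn 8) (by norm_num))).add
    (kv5.smul (div_nonneg (h.nn 18) (by norm_num)))).add
    (kv8.smul (div_nonneg (h.nn 0) (by norm_num)))).add
    (kv20.smul (div_nonneg (h.nn 11) (by norm_num))))

lemma leaf12 {y : Fin 3 → Fin 3 → ℝ} (h : P y) (e1 : fc 1 y = 0) (e4 : fc 4 y = 0) (e26 : fc 26 y = 0) : K y := by
  have e : y = (fc 8 y / 1) • rl ![![0, 0, 1], ![0, 0, 1], ![0, 0, 1]] +
      (fc 12 y / 1) • rl ![![0, 0, 3], ![1, 1, 1], ![1, 1, 1]] +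
      (fc 14 y / 1) • rl ![![1, 1, 1], ![0, 0, 3], ![1, 1, 1]] +
      (fc 11 y / 1) • rl ![![1, 1, 4], ![1, 1, 4], ![0, 3, 3]] := by
    rw [f1] at e1
    rw [f4] at e4
    rw [f26] at e26
    have s1 := h.s 0 1
    have s2 := h.s 0 2
    rw [f8, f11, f12, f14]
    funext a k
    fin_cases a <;> fin_cases k <;> simp [rl] <;> linarith
  rw [e]
  exact ((((kv0.smul (div_nonneg (h.nn 8) (by norm_num))).add
    (kv5.smul (div_nonneg (h.nn 12) (by norm_num)))).add
    (kv8.smul (div_nonneg (h.nn 14) (by norm_num)))).add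
    (kv26.smul (div_nonneg (h.nn 11) (by norm_num))))

lemma leaf13 {y : Fin 3 → Fin 3 → ℝ} (h : P y) (e1 : fc 1 y = 0) (e4 : fc 4 y = 0) (e7 : fc 7 y = 0) (e8 : fc 8 y = 0) : K y := by
  have e : y = (fc 2 y / 3) • rl ![![0, 0, 3], ![1, 1, 1], ![1, 1, 1]] +
      (fc 5 y / 3) • rl ![![1, 1, 1], ![0, 0, 3], ![1, 1, 1]] +
      (fc 11 y / 2) • rl ![![1, 1, 1], ![1, 1, 1], ![1, 1, 1]] := by
    rw [f1] at e1
    rw [f4] at e4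
    rw [f7] at e7
    rw [f8] at e8
    have s1 := h.s 0 1
    have s2 := h.s 0 2
    rw [f2, f5, f11]
    funext a k
    fin_cases a <;> fin_cases k <;> simp [rl] <;> linarith
  rw [e]
  exact (((kv5.smul (div_nonneg (h.nn 2) (by norm_num))).add
    (kv8.smul (div_nonneg (h.nn 5) (by norm_num)))).add
    (kv11.smul (div_nonneg (h.nn 11) (by norm_num))))

lemma leaf14 {y : Fin 3 → Fin 3 → ℝ} (h : P y) (e1 : fc 1 y = 0) (e26 : fc 26 y = 0) : K y := by
  have e : y = (fc 8 y / 1) • rl ![![0, 0, 1], ![0, 0, 1], ![0, 0, 1]] +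
      (fc 4 y / 1) • rl ![![0, 0, 2], ![0, 1, 1], ![0, 1, 1]] +
      (fc 12 y / 1) • rl ![![0, 0, 3], ![1, 1, 1], ![1, 1, 1]] +
      (fc 14 y / 1) • rl ![![1, 1, 1], ![0, 0, 3], ![1, 1, 1]] +
      (fc 11 y / 1) • rl ![![1, 1, 4], ![1, 1, 4], ![0, 3, 3]] := by
    rw [f1] at e1
    rw [f26] at e26
    have s1 := h.s 0 1
    have s2 := h.s 0 2
    rw [f4, f8, f11, f12, f14]
    funext a k
    fin_cases a <;> fin_cases k <;> simp [rl] <;> linarith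
  rw [e]
  exact (((((kv0.smul (div_nonneg (h.nn 8) (by norm_num))).add
    (kv1.smul (div_nonneg (h.nn 4) (by norm_num)))).add
    (kv5.smul (div_nonneg (h.nn 12) (by norm_num)))).add
    (kv8.smul (div_nonneg (h.nn 14) (by norm_num)))).add
    (kv26.smul (div_nonneg (h.nn 11) (by norm_num))))

lemma leaf15 {y : Fin 3 → Fin 3 → ℝ} (h : P y) (e1 : fc 1 y = 0) (e35 : fc 35 y = 0) : K y := by
  have e : y = (fc 5 y / 1) • rl ![![0, 0, 1], ![0, 0, 1], ![0, 0, 1]] +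
      (fc 7 y / 1) • rl ![![0, 0, 2], ![0, 1, 1], ![0, 1, 1]] +
      (fc 3 y / 1) • rl ![![0, 0, 3], ![1, 1, 1], ![1, 1, 1]] +
      (fc 20 y / 1) • rl ![![1, 1, 4], ![0, 3, 3], ![1, 1, 4]] +
      (fc 16 y / 1) • rl ![![1, 1, 4], ![0, 3, 3], ![2, 2, 2]] := by
    rw [f1] at e1
    rw [f35] at e35
    have s1 := h.s 0 1
    have s2 := h.s 0 2
    rw [f3, f5, f7, f16, f20]
    funext a k
    fin_cases a <;> fin_cases k <;> simp [rl] <;> linarith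
  rw [e]
  exact (((((kv0.smul (div_nonneg (h.nn 5) (by norm_num))).add
    (kv1.smul (div_nonneg (h.nn 7) (by norm_num)))).add
    (kv5.smul (div_nonneg (h.nn 3) (by norm_num)))).add
    (kv24.smul (div_nonneg (h.nn 20) (by norm_num)))).add
    (kv25.smul (div_nonneg (h.nn 16) (by norm_num))))

lemma leaf16 {y : Fin 3 → Fin 3 → ℝ} (h : P y) (e1 : fc 1 y = 0) (e12 : fc 12 y = 0) : K y := by
  have e : y = (fc 8 y / 1) • rl ![![0, 0, 1], ![0, 0, 1], ![0, 0, 1]] +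
      (fc 38 y / 1) • rl ![![0, 0, 2], ![0, 1, 1], ![0, 1, 1]] +
      (fc 6 y / 1) • rl ![![1, 1, 1], ![0, 0, 3], ![1, 1, 1]] +
      (fc 26 y / 1) • rl ![![1, 1, 2], ![0, 1, 3], ![0, 2, 2]] +
      (fc 3 y / 1) • rl ![![1, 1, 4], ![1, 1, 4], ![0, 3, 3]] := by
    rw [f1] at e1
    rw [f12] at e12
    have s1 := h.s 0 1
    have s2 := h.s 0 2
    rw [f3, f6, f8, f26, f38]
    funext a k
    fin_cases a <;> fin_cases k <;> simp [rl] <;> linarith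
  rw [e]
  exact (((((kv0.smul (div_nonneg (h.nn 8) (by norm_num))).add
    (kv1.smul (div_nonneg (h.nn 38) (by norm_num)))).add
    (kv8.smul (div_nonneg (h.nn 6) (by norm_num)))).add
    (kv16.smul (div_nonneg (h.nn 26) (by norm_num)))).add
    (kv26.smul (div_nonneg (h.nn 3) (by norm_num))))

lemma leaf17 {y : Fin 3 → Fin 3 → ℝ} (h : P y) (e7 : fc 7 y = 0) (e32 : fc 32 y = 0) : K y := by
  have e : y = (fc 8 y / 1) • rl ![![0, 0, 1], ![0, 0, 1], ![0, 0, 1]] +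
      (fc 18 y / 1) • rl ![![0, 0, 3], ![1, 1, 1], ![1, 1, 1]] +
      (fc 4 y / 1) • rl ![![0, 1, 2], ![0, 1, 2], ![1, 1, 1]] +
      (fc 0 y / 1) • rl ![![1, 1, 1], ![0, 0, 3], ![1, 1, 1]] +
      (fc 11 y / 1) • rl ![![0, 3, 3], ![1, 1, 4], ![2, 2, 2]] := by
    rw [f7] at e7
    rw [f32] at e32
    have s1 := h.s 0 1
    have s2 := h.s 0 2
    rw [f0, f4, f8, f11, f18]
    funext a k
    fin_cases a <;> fin_cases k <;> simp [rl] <;> linarith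
  rw [e]
  exact (((((kv0.smul (div_nonneg (h.nn 8) (by norm_num))).add
    (kv5.smul (div_nonneg (h.nn 18) (by norm_num)))).add
    (kv6.smul (div_nonneg (h.nn 4) (by norm_num)))).add
    (kv8.smul (div_nonneg (h.nn 0) (by norm_num)))).add
    (kv20.smul (div_nonneg (h.nn 11) (by norm_num))))

lemma node5_core {w : Fin 3 → Fin 3 → ℝ} (h : P w) (e1 : fc 1 w = 0) (e4 : fc 4 w = 0) (e7 : fc 7 w = 0) (j : Fin 45)
    (hj : 0 < fz j ![![0, 0, 1], ![0, 0, 1], ![0, 0, 1]]) (e : fc j w = 0) : K w := by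
  have s1 := h.s 0 1
  have s2 := h.s 0 2
  rw [f1] at e1
  rw [f4] at e4
  rw [f7] at e7
  have c2 : fc 2 w = 0 → K w := fun e => by
    rw [f2] at e
    exact K.perm 1 2 0 (leaf13 (h.perm 1 2 0 (by decide) (by decide) (by decide))
      (by rw [f1]; simp; linarith) (by rw [f4]; simp; linarith) (by rw [f7]; simp; linarith) (by rw [f8]; simp; linarith)) (by decide) (by decide) (by decide)
  have c5 : fc 5 w = 0 → K w := fun e => by
    rw [f5] at e
    exact K.perm 0 2 1 (leaf13 (h.perm 0 2 1 (by decide) (by decide) (by decide))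
      (by rw [f1]; simp; linarith) (by rw [f4]; simp; linarith) (by rw [f7]; simp; linarith) (by rw [f8]; simp; linarith)) (by decide) (by decide) (by decide)
  have c8 : fc 8 w = 0 → K w := fun e => by
    rw [f8] at e
    exact leaf13 h (by rw [f1]; linarith) (by rw [f4]; linarith) (by rw [f7]; linarith) (by rw [f8]; linarith)
  fin_cases j
  · exact absurd hj (by decide)
  · exact absurd hj (by decide)
  · exact c2 e
  · exact absurd hj (by decide)
  · exact absurd hj (by decide)
  · exact c5 e
  · exact absurd hj (by decide)
  · exact absurd hj (by decide)
  · exact c8 e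
  · exact absurd hj (by decide)
  · exact absurd hj (by decide)
  · exact absurd hj (by decide)
  · exact absurd hj (by decide)
  · exact absurd hj (by decide)
  · exact absurd hj (by decide)
  · exact absurd hj (by decide)
  · exact absurd hj (by decide)
  · exact absurd hj (by decide)
  · exact absurd hj (by decide)
  · exact absurd hj (by decide)
  · exact absurd hj (by decide)
  · exact absurd hj (by decide)
  · exact absurd hj (by decide)
  · exact absurd hj (by decide)
  · exact absurd hj (by decide)
  · exact absurd hj (by decide)
  · exact absurd hj (by decide)
  · exact absurd hj (by decide)
  · exact absurd hj (by decide)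
  · exact absurd hj (by decide)
  · exact absurd hj (by decide)
  · exact absurd hj (by decide)
  · exact absurd hj (by decide)
  · exact absurd hj (by decide)
  · exact absurd hj (by decide)
  · exact absurd hj (by decide)
  · exact absurd hj (by decide)
  · exact absurd hj (by decide)
  · exact absurd hj (by decide)
  · replace e := (f39 w).symm.trans e
    have n2 := h.nn 2
    have n11 := h.nn 11
    rw [f2] at n2
    rw [f11] at n11
    exact c2 (by rw [f2]; linarith)
  · replace e := (f40 w).symm.trans e
    have n2 := h.nn 2
    have n10 := h.nn 10
    rw [f2] at n2
    rw [f10] at n10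
    exact c2 (by rw [f2]; linarith)
  · replace e := (f41 w).symm.trans e
    have n5 := h.nn 5
    have n11 := h.nn 11
    rw [f5] at n5
    rw [f11] at n11
    exact c5 (by rw [f5]; linarith)
  · replace e := (f42 w).symm.trans e
    have n5 := h.nn 5
    have n9 := h.nn 9
    rw [f5] at n5
    rw [f9] at n9
    exact c5 (by rw [f5]; linarith)
  · replace e := (f43 w).symm.trans e
    have n8 := h.nn 8
    have n10 := h.nn 10
    rw [f8] at n8
    rw [f10] at n10
    exact c8 (by rw [f8]; linarith)
  · replace e := (f44 w).symm.trans e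
    have n8 := h.nn 8
    have n9 := h.nn 9
    rw [f8] at n8
    rw [f9] at n9
    exact c8 (by rw [f8]; linarith)

lemma node5 {y : Fin 3 → Fin 3 → ℝ} (h : P y) (e1 : fc 1 y = 0) (e4 : fc 4 y = 0) (e7 : fc 7 y = 0) : K y := by
  obtain ⟨t, ht, j, hj, hw, e⟩ := step ![![0, 0, 1], ![0, 0, 1], ![0, 0, 1]] (by decide) ⟨2, by decide⟩ (by decide) h
  have := (node5_core hw (by rw [fc_sub, e1, show fz 1 ![![0, 0, 1], ![0, 0, 1], ![0, 0, 1]] = 0 by decide]; simp) (by rw [fc_sub, e4, show fz 4 ![![0, 0, 1], ![0, 0, 1], ![0, 0, 1]] = 0 by decide]; simp) (by rw [fc_sub, e7, show fz 7 ![![0, 0, 1], ![0, 0, 1], ![0, 0, 1]] = 0 by decide]; simp) j hj e).add (kv0.smul ht)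
  rwa [sub_add_cancel] at this

lemma node9_core {w : Fin 3 → Fin 3 → ℝ} (h : P w) (e4 : fc 4 w = 0) (e7 : fc 7 w = 0) (j : Fin 45)
    (hj : 0 < fz j ![![0, 3, 3], ![2, 2, 2], ![2, 2, 2]]) (e : fc j w = 0) : K w := by
  have s1 := h.s 0 1
  have s2 := h.s 0 2
  rw [f4] at e4
  rw [f7] at e7
  have c1 : fc 1 w = 0 → K w := fun e => by
    rw [f1] at e
    exact node5 h (by rw [f1]; linarith) (by rw [f4]; linarith) (by rw [f7]; linarith)
  have c24 : fc 24 w = 0 → K w := fun e => by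
    rw [f24] at e
    exact K.perm 1 2 0 (leaf12 (h.perm 1 2 0 (by decide) (by decide) (by decide))
      (by rw [f1]; simp; linarith) (by rw [f4]; simp; linarith) (by rw [f26]; simp; linarith)) (by decide) (by decide) (by decide)
  have c30 : fc 30 w = 0 → K w := fun e => by
    rw [f30] at e
    exact K.perm 0 2 1 (leaf11 (h.perm 0 2 1 (by decide) (by decide) (by decide))
      (by rw [f4]; simp; linarith) (by rw [f7]; simp; linarith) (by rw [f32]; simp; linarith)) (by decide) (by decide) (by decide)
  have c32 : fc 32 w = 0 → K w := fun e => by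
    rw [f32] at e
    exact leaf11 h (by rw [f4]; linarith) (by rw [f7]; linarith) (by rw [f32]; linarith)
  have c33 : fc 33 w = 0 → K w := fun e => by
    rw [f33] at e
    exact K.perm 1 0 2 (leaf10 (h.perm 1 0 2 (by decide) (by decide) (by decide))
      (by rw [f1]; simp; linarith) (by rw [f7]; simp; linarith) (by rw [f35]; simp; linarith)) (by decide) (by decide) (by decide)
  have c34 : fc 34 w = 0 → K w := fun e => by
    rw [f34] at e
    exact K.perm 2 0 1 (leaf10 (h.perm 2 0 1 (by decide) (by decide) (by decide))
      (by rw [f1]; simp; linarith) (by rw [f7]; simp; linarith) (by rw [f35]; simp; linarith)) (by decide) (by decide) (by decide)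
  fin_cases j
  · exact absurd hj (by decide)
  · exact c1 e
  · exact absurd hj (by decide)
  · replace e := (f3 w).symm.trans e
    have n1 := h.nn 1
    have n33 := h.nn 33
    rw [f1] at n1
    rw [f33] at n33
    exact c1 (by rw [f1]; linarith)
  · exact absurd hj (by decide)
  · exact absurd hj (by decide)
  · replace e := (f6 w).symm.trans e
    have n1 := h.nn 1
    have n34 := h.nn 34
    rw [f1] at n1
    rw [f34] at n34
    exact c1 (by rw [f1]; linarith)
  · exact absurd hj (by decide)
  · exact absurd hj (by decide)
  · replace e := (f9 w).symm.trans e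
    have n1 := h.nn 1
    have n24 := h.nn 24
    rw [f1] at n1
    rw [f24] at n24
    exact c1 (by rw [f1]; linarith)
  · replace e := (f10 w).symm.trans e
    have n1 := h.nn 1
    have n30 := h.nn 30
    rw [f1] at n1
    rw [f30] at n30
    exact c1 (by rw [f1]; linarith)
  · replace e := (f11 w).symm.trans e
    have n1 := h.nn 1
    have n32 := h.nn 32
    rw [f1] at n1
    rw [f32] at n32
    exact c1 (by rw [f1]; linarith)
  · replace e := (f12 w).symm.trans e
    have n1 := h.nn 1
    have n24 := h.nn 24
    have n32 := h.nn 32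
    rw [f1] at n1
    rw [f24] at n24
    rw [f32] at n32
    exact c1 (by rw [f1]; linarith)
  · replace e := (f13 w).symm.trans e
    have n1 := h.nn 1
    have n24 := h.nn 24
    have n30 := h.nn 30
    rw [f1] at n1
    rw [f24] at n24
    rw [f30] at n30
    exact c1 (by rw [f1]; linarith)
  · replace e := (f14 w).symm.trans e
    have n0 := h.nn 0
    have n1 := h.nn 1
    have n32 := h.nn 32
    rw [f0] at n0
    rw [f1] at n1
    rw [f32] at n32
    exact c1 (by rw [f1]; linarith)
  · replace e := (f15 w).symm.trans e
    have n24 := h.nn 24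
    have n34 := h.nn 34
    rw [f24] at n24
    rw [f34] at n34
    exact c24 (by rw [f24]; linarith)
  · replace e := (f16 w).symm.trans e
    have n0 := h.nn 0
    have n1 := h.nn 1
    have n30 := h.nn 30
    rw [f0] at n0
    rw [f1] at n1
    rw [f30] at n30
    exact c1 (by rw [f1]; linarith)
  · replace e := (f17 w).symm.trans e
    have n24 := h.nn 24
    have n33 := h.nn 33
    rw [f24] at n24
    rw [f33] at n33
    exact c24 (by rw [f24]; linarith)
  · replace e := (f18 w).symm.trans e
    have n32 := h.nn 32
    have n33 := h.nn 33
    rw [f32] at n32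
    rw [f33] at n33
    exact c32 (by rw [f32]; linarith)
  · replace e := (f19 w).symm.trans e
    have n30 := h.nn 30
    have n34 := h.nn 34
    rw [f30] at n30
    rw [f34] at n34
    exact c30 (by rw [f30]; linarith)
  · replace e := (f20 w).symm.trans e
    have n0 := h.nn 0
    have n1 := h.nn 1
    have n32 := h.nn 32
    rw [f0] at n0
    rw [f1] at n1
    rw [f32] at n32
    exact c1 (by rw [f1]; linarith)
  · replace e := (f21 w).symm.trans e
    have n1 := h.nn 1
    have n24 := h.nn 24
    have n30 := h.nn 30
    rw [f1] at n1
    rw [f24] at n24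
    rw [f30] at n30
    exact c1 (by rw [f1]; linarith)
  · replace e := (f22 w).symm.trans e
    have n0 := h.nn 0
    have n1 := h.nn 1
    have n30 := h.nn 30
    rw [f0] at n0
    rw [f1] at n1
    rw [f30] at n30
    exact c1 (by rw [f1]; linarith)
  · replace e := (f23 w).symm.trans e
    have n1 := h.nn 1
    have n24 := h.nn 24
    have n32 := h.nn 32
    rw [f1] at n1
    rw [f24] at n24
    rw [f32] at n32
    exact c1 (by rw [f1]; linarith)
  · exact c24 e
  · replace e := (f25 w).symm.trans e
    have n1 := h.nn 1
    have n30 := h.nn 30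
    rw [f1] at n1
    rw [f30] at n30
    exact c1 (by rw [f1]; linarith)
  · replace e := (f26 w).symm.trans e
    have n1 := h.nn 1
    have n32 := h.nn 32
    rw [f1] at n1
    rw [f32] at n32
    exact c1 (by rw [f1]; linarith)
  · replace e := (f27 w).symm.trans e
    have n1 := h.nn 1
    have n24 := h.nn 24
    rw [f1] at n1
    rw [f24] at n24
    exact c1 (by rw [f1]; linarith)
  · replace e := (f28 w).symm.trans e
    have n1 := h.nn 1
    have n24 := h.nn 24
    rw [f1] at n1
    rw [f24] at n24
    exact c1 (by rw [f1]; linarith)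
  · replace e := (f29 w).symm.trans e
    have n1 := h.nn 1
    have n30 := h.nn 30
    rw [f1] at n1
    rw [f30] at n30
    exact c1 (by rw [f1]; linarith)
  · exact c30 e
  · replace e := (f31 w).symm.trans e
    have n1 := h.nn 1
    have n32 := h.nn 32
    rw [f1] at n1
    rw [f32] at n32
    exact c1 (by rw [f1]; linarith)
  · exact c32 e
  · exact c33 e
  · exact c34 e
  · replace e := (f35 w).symm.trans e
    have n0 := h.nn 0
    have n1 := h.nn 1
    rw [f0] at n0
    rw [f1] at n1
    exact c1 (by rw [f1]; linarith)
  · replace e := (f36 w).symm.trans e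
    have n1 := h.nn 1
    have n34 := h.nn 34
    rw [f1] at n1
    rw [f34] at n34
    exact c1 (by rw [f1]; linarith)
  · replace e := (f37 w).symm.trans e
    have n0 := h.nn 0
    have n1 := h.nn 1
    rw [f0] at n0
    rw [f1] at n1
    exact c1 (by rw [f1]; linarith)
  · replace e := (f38 w).symm.trans e
    have n1 := h.nn 1
    have n33 := h.nn 33
    rw [f1] at n1
    rw [f33] at n33
    exact c1 (by rw [f1]; linarith)
  · replace e := (f39 w).symm.trans e
    have n2 := h.nn 2
    have n32 := h.nn 32
    rw [f2] at n2
    rw [f32] at n32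
    exact c32 (by rw [f32]; linarith)
  · replace e := (f40 w).symm.trans e
    have n2 := h.nn 2
    have n30 := h.nn 30
    rw [f2] at n2
    rw [f30] at n30
    exact c30 (by rw [f30]; linarith)
  · replace e := (f41 w).symm.trans e
    have n5 := h.nn 5
    have n32 := h.nn 32
    rw [f5] at n5
    rw [f32] at n32
    exact c32 (by rw [f32]; linarith)
  · replace e := (f42 w).symm.trans e
    have n1 := h.nn 1
    have n2 := h.nn 2
    have n34 := h.nn 34
    rw [f1] at n1
    rw [f2] at n2
    rw [f34] at n34
    exact c1 (by rw [f1]; linarith)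
  · replace e := (f43 w).symm.trans e
    have n8 := h.nn 8
    have n30 := h.nn 30
    rw [f8] at n8
    rw [f30] at n30
    exact c30 (by rw [f30]; linarith)
  · replace e := (f44 w).symm.trans e
    have n1 := h.nn 1
    have n2 := h.nn 2
    have n33 := h.nn 33
    rw [f1] at n1
    rw [f2] at n2
    rw [f33] at n33
    exact c1 (by rw [f1]; linarith)

lemma node9 {y : Fin 3 → Fin 3 → ℝ} (h : P y) (e4 : fc 4 y = 0) (e7 : fc 7 y = 0) : K y := by
  obtain ⟨t, ht, j, hj, hw, e⟩ := step ![![0, 3, 3], ![2, 2, 2], ![2, 2, 2]] (by decide) ⟨1, by decide⟩ (by decide) h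
  have := (node9_core hw (by rw [fc_sub, e4, show fz 4 ![![0, 3, 3], ![2, 2, 2], ![2, 2, 2]] = 0 by decide]; simp) (by rw [fc_sub, e7, show fz 7 ![![0, 3, 3], ![2, 2, 2], ![2, 2, 2]] = 0 by decide]; simp) j hj e).add (kv23.smul ht)
  rwa [sub_add_cancel] at this

lemma node18_core {w : Fin 3 → Fin 3 → ℝ} (h : P w) (e1 : fc 1 w = 0) (j : Fin 45)
    (hj : 0 < fz j ![![2, 2, 2], ![0, 3, 3], ![0, 3, 3]]) (e : fc j w = 0) : K w := by
  have s1 := h.s 0 1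
  have s2 := h.s 0 2
  rw [f1] at e1
  have c4 : fc 4 w = 0 → K w := fun e => by
    rw [f4] at e
    exact K.perm 2 0 1 (node9 (h.perm 2 0 1 (by decide) (by decide) (by decide))
      (by rw [f4]; simp; linarith) (by rw [f7]; simp; linarith)) (by decide) (by decide) (by decide)
  have c7 : fc 7 w = 0 → K w := fun e => by
    rw [f7] at e
    exact K.perm 1 0 2 (node9 (h.perm 1 0 2 (by decide) (by decide) (by decide))
      (by rw [f4]; simp; linarith) (by rw [f7]; simp; linarith)) (by decide) (by decide) (by decide)
  have c12 : fc 12 w = 0 → K w := fun e => by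
    rw [f12] at e
    exact leaf16 h (by rw [f1]; linarith) (by rw [f12]; linarith)
  have c13 : fc 13 w = 0 → K w := fun e => by
    rw [f13] at e
    exact K.perm 0 2 1 (leaf16 (h.perm 0 2 1 (by decide) (by decide) (by decide))
      (by rw [f1]; simp; linarith) (by rw [f12]; simp; linarith)) (by decide) (by decide) (by decide)
  have c21 : fc 21 w = 0 → K w := fun e => by
    rw [f21] at e
    exact K.perm 2 1 0 (leaf7 (h.perm 2 1 0 (by decide) (by decide) (by decide))
      (by rw [f7]; simp; linarith) (by rw [f20]; simp; linarith)) (by decide) (by decide) (by decide)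
  have c23 : fc 23 w = 0 → K w := fun e => by
    rw [f23] at e
    exact K.perm 1 2 0 (leaf7 (h.perm 1 2 0 (by decide) (by decide) (by decide))
      (by rw [f7]; simp; linarith) (by rw [f20]; simp; linarith)) (by decide) (by decide) (by decide)
  have c25 : fc 25 w = 0 → K w := fun e => by
    rw [f25] at e
    exact K.perm 0 2 1 (leaf14 (h.perm 0 2 1 (by decide) (by decide) (by decide))
      (by rw [f1]; simp; linarith) (by rw [f26]; simp; linarith)) (by decide) (by decide) (by decide)
  have c26 : fc 26 w = 0 → K w := fun e => by
    rw [f26] at e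
    exact leaf14 h (by rw [f1]; linarith) (by rw [f26]; linarith)
  have c27 : fc 27 w = 0 → K w := fun e => by
    rw [f27] at e
    exact K.perm 2 1 0 (leaf17 (h.perm 2 1 0 (by decide) (by decide) (by decide))
      (by rw [f7]; simp; linarith) (by rw [f32]; simp; linarith)) (by decide) (by decide) (by decide)
  have c28 : fc 28 w = 0 → K w := fun e => by
    rw [f28] at e
    exact K.perm 1 2 0 (leaf17 (h.perm 1 2 0 (by decide) (by decide) (by decide))
      (by rw [f7]; simp; linarith) (by rw [f32]; simp; linarith)) (by decide) (by decide) (by decide)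
  have c29 : fc 29 w = 0 → K w := fun e => by
    rw [f29] at e
    exact K.perm 0 2 1 (leaf9 (h.perm 0 2 1 (by decide) (by decide) (by decide))
      (by rw [f1]; simp; linarith) (by rw [f31]; simp; linarith)) (by decide) (by decide) (by decide)
  have c31 : fc 31 w = 0 → K w := fun e => by
    rw [f31] at e
    exact leaf9 h (by rw [f1]; linarith) (by rw [f31]; linarith)
  have c35 : fc 35 w = 0 → K w := fun e => by
    rw [f35] at e
    exact leaf15 h (by rw [f1]; linarith) (by rw [f35]; linarith)
  have c36 : fc 36 w = 0 → K w := fun e => by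
    rw [f36] at e
    exact K.perm 2 1 0 (leaf8 (h.perm 2 1 0 (by decide) (by decide) (by decide))
      (by rw [f7]; simp; linarith) (by rw [f35]; simp; linarith)) (by decide) (by decide) (by decide)
  have c37 : fc 37 w = 0 → K w := fun e => by
    rw [f37] at e
    exact K.perm 0 2 1 (leaf15 (h.perm 0 2 1 (by decide) (by decide) (by decide))
      (by rw [f1]; simp; linarith) (by rw [f35]; simp; linarith)) (by decide) (by decide) (by decide)
  have c38 : fc 38 w = 0 → K w := fun e => by
    rw [f38] at e
    exact K.perm 1 2 0 (leaf8 (h.perm 1 2 0 (by decide) (by decide) (by decide))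
      (by rw [f7]; simp; linarith) (by rw [f35]; simp; linarith)) (by decide) (by decide) (by decide)
  fin_cases j
  · replace e := (f0 w).symm.trans e
    have n25 := h.nn 25
    have n26 := h.nn 26
    rw [f25] at n25
    rw [f26] at n26
    exact c25 (by rw [f25]; linarith)
  · exact absurd hj (by decide)
  · exact absurd hj (by decide)
  · exact absurd hj (by decide)
  · exact c4 e
  · exact absurd hj (by decide)
  · exact absurd hj (by decide)
  · exact c7 e
  · exact absurd hj (by decide)
  · replace e := (f9 w).symm.trans e
    have n27 := h.nn 27
    have n28 := h.nn 28
    rw [f27] at n27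
    rw [f28] at n28
    exact c27 (by rw [f27]; linarith)
  · replace e := (f10 w).symm.trans e
    have n25 := h.nn 25
    have n29 := h.nn 29
    rw [f25] at n25
    rw [f29] at n29
    exact c25 (by rw [f25]; linarith)
  · replace e := (f11 w).symm.trans e
    have n26 := h.nn 26
    have n31 := h.nn 31
    rw [f26] at n26
    rw [f31] at n31
    exact c26 (by rw [f26]; linarith)
  · exact c12 e
  · exact c13 e
  · replace e := (f14 w).symm.trans e
    have n26 := h.nn 26
    have n37 := h.nn 37
    rw [f26] at n26
    rw [f37] at n37
    exact c26 (by rw [f26]; linarith)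
  · replace e := (f15 w).symm.trans e
    have n4 := h.nn 4
    have n21 := h.nn 21
    rw [f4] at n4
    rw [f21] at n21
    exact c4 (by rw [f4]; linarith)
  · replace e := (f16 w).symm.trans e
    have n25 := h.nn 25
    have n35 := h.nn 35
    rw [f25] at n25
    rw [f35] at n35
    exact c25 (by rw [f25]; linarith)
  · replace e := (f17 w).symm.trans e
    have n7 := h.nn 7
    have n23 := h.nn 23
    rw [f7] at n7
    rw [f23] at n23
    exact c7 (by rw [f7]; linarith)
  · replace e := (f18 w).symm.trans e
    have n7 := h.nn 7
    have n12 := h.nn 12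
    rw [f7] at n7
    rw [f12] at n12
    exact c7 (by rw [f7]; linarith)
  · replace e := (f19 w).symm.trans e
    have n4 := h.nn 4
    have n13 := h.nn 13
    rw [f4] at n4
    rw [f13] at n13
    exact c4 (by rw [f4]; linarith)
  · replace e := (f20 w).symm.trans e
    have n31 := h.nn 31
    have n35 := h.nn 35
    rw [f31] at n31
    rw [f35] at n35
    exact c31 (by rw [f31]; linarith)
  · exact c21 e
  · replace e := (f22 w).symm.trans e
    have n29 := h.nn 29
    have n37 := h.nn 37
    rw [f29] at n29
    rw [f37] at n37
    exact c29 (by rw [f29]; linarith)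
  · exact c23 e
  · replace e := (f24 w).symm.trans e
    have n4 := h.nn 4
    have n28 := h.nn 28
    rw [f4] at n4
    rw [f28] at n28
    exact c4 (by rw [f4]; linarith)
  · exact c25 e
  · exact c26 e
  · exact c27 e
  · exact c28 e
  · exact c29 e
  · replace e := (f30 w).symm.trans e
    have n4 := h.nn 4
    have n25 := h.nn 25
    rw [f4] at n4
    rw [f25] at n25
    exact c4 (by rw [f4]; linarith)
  · exact c31 e
  · replace e := (f32 w).symm.trans e
    have n4 := h.nn 4
    have n31 := h.nn 31
    rw [f4] at n4
    rw [f31] at n31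
    exact c4 (by rw [f4]; linarith)
  · replace e := (f33 w).symm.trans e
    have n7 := h.nn 7
    have n38 := h.nn 38
    rw [f7] at n7
    rw [f38] at n38
    exact c7 (by rw [f7]; linarith)
  · replace e := (f34 w).symm.trans e
    have n4 := h.nn 4
    have n36 := h.nn 36
    rw [f4] at n4
    rw [f36] at n36
    exact c4 (by rw [f4]; linarith)
  · exact c35 e
  · exact c36 e
  · exact c37 e
  · exact c38 e
  · replace e := (f39 w).symm.trans e
    have n2 := h.nn 2
    have n31 := h.nn 31
    rw [f2] at n2
    rw [f31] at n31
    exact c31 (by rw [f31]; linarith)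
  · replace e := (f40 w).symm.trans e
    have n2 := h.nn 2
    have n29 := h.nn 29
    rw [f2] at n2
    rw [f29] at n29
    exact c29 (by rw [f29]; linarith)
  · replace e := (f41 w).symm.trans e
    have n5 := h.nn 5
    have n31 := h.nn 31
    rw [f5] at n5
    rw [f31] at n31
    exact c31 (by rw [f31]; linarith)
  · exact absurd hj (by decide)
  · replace e := (f43 w).symm.trans e
    have n5 := h.nn 5
    have n37 := h.nn 37
    rw [f5] at n5
    rw [f37] at n37
    exact c37 (by rw [f37]; linarith)
  · exact absurd hj (by decide)

lemma node18 {y : Fin 3 → Fin 3 → ℝ} (h : P y) (e1 : fc 1 y = 0) : K y := by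
  obtain ⟨t, ht, j, hj, hw, e⟩ := step ![![2, 2, 2], ![0, 3, 3], ![0, 3, 3]] (by decide) ⟨0, by decide⟩ (by decide) h
  have := (node18_core hw (by rw [fc_sub, e1, show fz 1 ![![2, 2, 2], ![0, 3, 3], ![0, 3, 3]] = 0 by decide]; simp) j hj e).add (kv28.smul ht)
  rwa [sub_add_cancel] at this

lemma node33_core {w : Fin 3 → Fin 3 → ℝ} (h : P w)  (j : Fin 45)
    (hj : 0 < fz j ![![0, 1, 1], ![0, 1, 1], ![0, 1, 1]]) (e : fc j w = 0) : K w := by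
  have s1 := h.s 0 1
  have s2 := h.s 0 2
  have c1 : fc 1 w = 0 → K w := fun e => by
    rw [f1] at e
    exact node18 h (by rw [f1]; linarith)
  have c4 : fc 4 w = 0 → K w := fun e => by
    rw [f4] at e
    exact K.perm 1 0 2 (node18 (h.perm 1 0 2 (by decide) (by decide) (by decide))
      (by rw [f1]; simp; linarith)) (by decide) (by decide) (by decide)
  have c7 : fc 7 w = 0 → K w := fun e => by
    rw [f7] at e
    exact K.perm 2 0 1 (node18 (h.perm 2 0 1 (by decide) (by decide) (by decide))
      (by rw [f1]; simp; linarith)) (by decide) (by decide) (by decide)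
  have c9 : fc 9 w = 0 → K w := fun e => by
    rw [f9] at e
    exact K.perm 1 2 0 (leaf3 (h.perm 1 2 0 (by decide) (by decide) (by decide))
      (by rw [f11]; simp; linarith)) (by decide) (by decide) (by decide)
  have c10 : fc 10 w = 0 → K w := fun e => by
    rw [f10] at e
    exact K.perm 0 2 1 (leaf3 (h.perm 0 2 1 (by decide) (by decide) (by decide))
      (by rw [f11]; simp; linarith)) (by decide) (by decide) (by decide)
  have c11 : fc 11 w = 0 → K w := fun e => by
    rw [f11] at e
    exact leaf3 h (by rw [f11]; linarith)
  have c12 : fc 12 w = 0 → K w := fun e => by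
    rw [f12] at e
    exact K.perm 1 0 2 (leaf4 (h.perm 1 0 2 (by decide) (by decide) (by decide))
      (by rw [f14]; simp; linarith)) (by decide) (by decide) (by decide)
  have c13 : fc 13 w = 0 → K w := fun e => by
    rw [f13] at e
    exact K.perm 2 0 1 (leaf4 (h.perm 2 0 1 (by decide) (by decide) (by decide))
      (by rw [f14]; simp; linarith)) (by decide) (by decide) (by decide)
  have c14 : fc 14 w = 0 → K w := fun e => by
    rw [f14] at e
    exact leaf4 h (by rw [f14]; linarith)
  have c15 : fc 15 w = 0 → K w := fun e => by
    rw [f15] at e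
    exact K.perm 2 1 0 (leaf4 (h.perm 2 1 0 (by decide) (by decide) (by decide))
      (by rw [f14]; simp; linarith)) (by decide) (by decide) (by decide)
  have c16 : fc 16 w = 0 → K w := fun e => by
    rw [f16] at e
    exact K.perm 0 2 1 (leaf4 (h.perm 0 2 1 (by decide) (by decide) (by decide))
      (by rw [f14]; simp; linarith)) (by decide) (by decide) (by decide)
  have c17 : fc 17 w = 0 → K w := fun e => by
    rw [f17] at e
    exact K.perm 1 2 0 (leaf4 (h.perm 1 2 0 (by decide) (by decide) (by decide))
      (by rw [f14]; simp; linarith)) (by decide) (by decide) (by decide)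
  have c18 : fc 18 w = 0 → K w := fun e => by
    rw [f18] at e
    exact K.perm 1 0 2 (leaf2 (h.perm 1 0 2 (by decide) (by decide) (by decide))
      (by rw [f20]; simp; linarith)) (by decide) (by decide) (by decide)
  have c19 : fc 19 w = 0 → K w := fun e => by
    rw [f19] at e
    exact K.perm 2 0 1 (leaf2 (h.perm 2 0 1 (by decide) (by decide) (by decide))
      (by rw [f20]; simp; linarith)) (by decide) (by decide) (by decide)
  have c20 : fc 20 w = 0 → K w := fun e => by
    rw [f20] at e
    exact leaf2 h (by rw [f20]; linarith)
  have c21 : fc 21 w = 0 → K w := fun e => by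
    rw [f21] at e
    exact K.perm 2 1 0 (leaf2 (h.perm 2 1 0 (by decide) (by decide) (by decide))
      (by rw [f20]; simp; linarith)) (by decide) (by decide) (by decide)
  have c22 : fc 22 w = 0 → K w := fun e => by
    rw [f22] at e
    exact K.perm 0 2 1 (leaf2 (h.perm 0 2 1 (by decide) (by decide) (by decide))
      (by rw [f20]; simp; linarith)) (by decide) (by decide) (by decide)
  have c23 : fc 23 w = 0 → K w := fun e => by
    rw [f23] at e
    exact K.perm 1 2 0 (leaf2 (h.perm 1 2 0 (by decide) (by decide) (by decide))
      (by rw [f20]; simp; linarith)) (by decide) (by decide) (by decide)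
  have c24 : fc 24 w = 0 → K w := fun e => by
    rw [f24] at e
    exact K.perm 1 2 0 (leaf0 (h.perm 1 2 0 (by decide) (by decide) (by decide))
      (by rw [f26]; simp; linarith)) (by decide) (by decide) (by decide)
  have c25 : fc 25 w = 0 → K w := fun e => by
    rw [f25] at e
    exact K.perm 0 2 1 (leaf0 (h.perm 0 2 1 (by decide) (by decide) (by decide))
      (by rw [f26]; simp; linarith)) (by decide) (by decide) (by decide)
  have c26 : fc 26 w = 0 → K w := fun e => by
    rw [f26] at e
    exact leaf0 h (by rw [f26]; linarith)
  have c27 : fc 27 w = 0 → K w := fun e => by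
    rw [f27] at e
    exact K.perm 1 2 0 (leaf1 (h.perm 1 2 0 (by decide) (by decide) (by decide))
      (by rw [f31]; simp; linarith)) (by decide) (by decide) (by decide)
  have c28 : fc 28 w = 0 → K w := fun e => by
    rw [f28] at e
    exact K.perm 2 1 0 (leaf1 (h.perm 2 1 0 (by decide) (by decide) (by decide))
      (by rw [f31]; simp; linarith)) (by decide) (by decide) (by decide)
  have c29 : fc 29 w = 0 → K w := fun e => by
    rw [f29] at e
    exact K.perm 0 2 1 (leaf1 (h.perm 0 2 1 (by decide) (by decide) (by decide))
      (by rw [f31]; simp; linarith)) (by decide) (by decide) (by decide)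
  have c30 : fc 30 w = 0 → K w := fun e => by
    rw [f30] at e
    exact K.perm 2 0 1 (leaf1 (h.perm 2 0 1 (by decide) (by decide) (by decide))
      (by rw [f31]; simp; linarith)) (by decide) (by decide) (by decide)
  have c31 : fc 31 w = 0 → K w := fun e => by
    rw [f31] at e
    exact leaf1 h (by rw [f31]; linarith)
  have c32 : fc 32 w = 0 → K w := fun e => by
    rw [f32] at e
    exact K.perm 1 0 2 (leaf1 (h.perm 1 0 2 (by decide) (by decide) (by decide))
      (by rw [f31]; simp; linarith)) (by decide) (by decide) (by decide)
  have c33 : fc 33 w = 0 → K w := fun e => by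
    rw [f33] at e
    exact K.perm 1 0 2 (leaf5 (h.perm 1 0 2 (by decide) (by decide) (by decide))
      (by rw [f35]; simp; linarith)) (by decide) (by decide) (by decide)
  have c34 : fc 34 w = 0 → K w := fun e => by
    rw [f34] at e
    exact K.perm 2 0 1 (leaf5 (h.perm 2 0 1 (by decide) (by decide) (by decide))
      (by rw [f35]; simp; linarith)) (by decide) (by decide) (by decide)
  have c35 : fc 35 w = 0 → K w := fun e => by
    rw [f35] at e
    exact leaf5 h (by rw [f35]; linarith)
  have c36 : fc 36 w = 0 → K w := fun e => by
    rw [f36] at e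
    exact K.perm 2 1 0 (leaf5 (h.perm 2 1 0 (by decide) (by decide) (by decide))
      (by rw [f35]; simp; linarith)) (by decide) (by decide) (by decide)
  have c37 : fc 37 w = 0 → K w := fun e => by
    rw [f37] at e
    exact K.perm 0 2 1 (leaf5 (h.perm 0 2 1 (by decide) (by decide) (by decide))
      (by rw [f35]; simp; linarith)) (by decide) (by decide) (by decide)
  have c38 : fc 38 w = 0 → K w := fun e => by
    rw [f38] at e
    exact K.perm 1 2 0 (leaf5 (h.perm 1 2 0 (by decide) (by decide) (by decide))
      (by rw [f35]; simp; linarith)) (by decide) (by decide) (by decide)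
  have c39 : fc 39 w = 0 → K w := fun e => by
    rw [f39] at e
    exact K.perm 1 0 2 (leaf6 (h.perm 1 0 2 (by decide) (by decide) (by decide))
      (by rw [f41]; simp; linarith)) (by decide) (by decide) (by decide)
  have c40 : fc 40 w = 0 → K w := fun e => by
    rw [f40] at e
    exact K.perm 2 0 1 (leaf6 (h.perm 2 0 1 (by decide) (by decide) (by decide))
      (by rw [f41]; simp; linarith)) (by decide) (by decide) (by decide)
  have c41 : fc 41 w = 0 → K w := fun e => by
    rw [f41] at e
    exact leaf6 h (by rw [f41]; linarith)
  have c42 : fc 42 w = 0 → K w := fun e => by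
    rw [f42] at e
    exact K.perm 2 1 0 (leaf6 (h.perm 2 1 0 (by decide) (by decide) (by decide))
      (by rw [f41]; simp; linarith)) (by decide) (by decide) (by decide)
  have c43 : fc 43 w = 0 → K w := fun e => by
    rw [f43] at e
    exact K.perm 0 2 1 (leaf6 (h.perm 0 2 1 (by decide) (by decide) (by decide))
      (by rw [f41]; simp; linarith)) (by decide) (by decide) (by decide)
  have c44 : fc 44 w = 0 → K w := fun e => by
    rw [f44] at e
    exact K.perm 1 2 0 (leaf6 (h.perm 1 2 0 (by decide) (by decide) (by decide))
      (by rw [f41]; simp; linarith)) (by decide) (by decide) (by decide)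
  fin_cases j
  · exact absurd hj (by decide)
  · exact c1 e
  · exact absurd hj (by decide)
  · exact absurd hj (by decide)
  · exact c4 e
  · exact absurd hj (by decide)
  · exact absurd hj (by decide)
  · exact c7 e
  · exact absurd hj (by decide)
  · exact c9 e
  · exact c10 e
  · exact c11 e
  · exact c12 e
  · exact c13 e
  · exact c14 e
  · exact c15 e
  · exact c16 e
  · exact c17 e
  · exact c18 e
  · exact c19 e
  · exact c20 e
  · exact c21 e
  · exact c22 e
  · exact c23 e
  · exact c24 e
  · exact c25 e
  · exact c26 e
  · exact c27 e
  · exact c28 e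
  · exact c29 e
  · exact c30 e
  · exact c31 e
  · exact c32 e
  · exact c33 e
  · exact c34 e
  · exact c35 e
  · exact c36 e
  · exact c37 e
  · exact c38 e
  · exact c39 e
  · exact c40 e
  · exact c41 e
  · exact c42 e
  · exact c43 e
  · exact c44 e

lemma node33 {y : Fin 3 → Fin 3 → ℝ} (h : P y)  : K y := by
  obtain ⟨t, ht, j, hj, hw, e⟩ := step ![![0, 1, 1], ![0, 1, 1], ![0, 1, 1]] (by decide) ⟨1, by decide⟩ (by decide) h
  have := (node33_core hw j hj e).add (kv4.smul ht)
  rwa [sub_add_cancel] at this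
lemma P_of {l : Fin 3 → Fin 3 → ℝ} (hnonneg : ∀ a i, 0 ≤ l a i)
    (hord : ∀ a, l a 0 ≤ l a 1 ∧ l a 1 ≤ l a 2)
    (hsum : ∀ a, l a 0 + l a 1 + l a 2 = 1)
    (h : ∀ a b c : Fin 3, a ≠ b → a ≠ c → b ≠ c → Seven (l a) (l b) (l c)) : P l := by
  refine ⟨fun i => ?_, fun a b => by rw [hsum, hsum]⟩
  obtain ⟨h012_0, h012_1, h012_2, h012_3, h012_4, h012_5, h012_6⟩ := h 0 1 2 (by decide) (by decide) (by decide)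
  obtain ⟨h021_0, h021_1, h021_2, h021_3, h021_4, h021_5, h021_6⟩ := h 0 2 1 (by decide) (by decide) (by decide)
  obtain ⟨h102_0, h102_1, h102_2, h102_3, h102_4, h102_5, h102_6⟩ := h 1 0 2 (by decide) (by decide) (by decide)
  obtain ⟨h120_0, h120_1, h120_2, h120_3, h120_4, h120_5, h120_6⟩ := h 1 2 0 (by decide) (by decide) (by decide)
  obtain ⟨h201_0, h201_1, h201_2, h201_3, h201_4, h201_5, h201_6⟩ := h 2 0 1 (by decide) (by decide) (by decide)
  obtain ⟨h210_0, h210_1, h210_2, h210_3, h210_4, h210_5, h210_6⟩ := h 2 1 0 (by decide) (by decide) (by decide)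
  fin_cases i
  · exact (f0 l).ge.trans' (by linarith only [hnonneg 0 0])
  · exact (f1 l).ge.trans' (by linarith only [(hord 0).1])
  · exact (f2 l).ge.trans' (by linarith only [(hord 0).2])
  · exact (f3 l).ge.trans' (by linarith only [hnonneg 1 0])
  · exact (f4 l).ge.trans' (by linarith only [(hord 1).1])
  · exact (f5 l).ge.trans' (by linarith only [(hord 1).2])
  · exact (f6 l).ge.trans' (by linarith only [hnonneg 2 0])
  · exact (f7 l).ge.trans' (by linarith only [(hord 2).1])
  · exact (f8 l).ge.trans' (by linarith only [(hord 2).2])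
  · exact (f9 l).ge.trans' (by linarith only [h012_0])
  · exact (f10 l).ge.trans' (by linarith only [h102_0])
  · exact (f11 l).ge.trans' (by linarith only [h201_0])
  · exact (f12 l).ge.trans' (by linarith only [h012_1])
  · exact (f13 l).ge.trans' (by linarith only [h021_1])
  · exact (f14 l).ge.trans' (by linarith only [h102_1])
  · exact (f15 l).ge.trans' (by linarith only [h120_1])
  · exact (f16 l).ge.trans' (by linarith only [h201_1])
  · exact (f17 l).ge.trans' (by linarith only [h210_1])
  · exact (f18 l).ge.trans' (by linarith only [h012_2])
  · exact (f19 l).ge.trans' (by linarith only [h021_2])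
  · exact (f20 l).ge.trans' (by linarith only [h102_2])
  · exact (f21 l).ge.trans' (by linarith only [h120_2])
  · exact (f22 l).ge.trans' (by linarith only [h201_2])
  · exact (f23 l).ge.trans' (by linarith only [h210_2])
  · exact (f24 l).ge.trans' (by linarith only [h012_3])
  · exact (f25 l).ge.trans' (by linarith only [h102_3])
  · exact (f26 l).ge.trans' (by linarith only [h201_3])
  · exact (f27 l).ge.trans' (by linarith only [h012_4])
  · exact (f28 l).ge.trans' (by linarith only [h021_4])
  · exact (f29 l).ge.trans' (by linarith only [h102_4])
  · exact (f30 l).ge.trans' (by linarith only [h120_4])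
  · exact (f31 l).ge.trans' (by linarith only [h201_4])
  · exact (f32 l).ge.trans' (by linarith only [h210_4])
  · exact (f33 l).ge.trans' (by linarith only [h012_5])
  · exact (f34 l).ge.trans' (by linarith only [h021_5])
  · exact (f35 l).ge.trans' (by linarith only [h102_5])
  · exact (f36 l).ge.trans' (by linarith only [h120_5])
  · exact (f37 l).ge.trans' (by linarith only [h201_5])
  · exact (f38 l).ge.trans' (by linarith only [h210_5])
  · exact (f39 l).ge.trans' (by linarith only [h012_6])
  · exact (f40 l).ge.trans' (by linarith only [h021_6])
  · exact (f41 l).ge.trans' (by linarith only [h102_6])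
  · exact (f42 l).ge.trans' (by linarith only [h120_6])
  · exact (f43 l).ge.trans' (by linarith only [h201_6])
  · exact (f44 l).ge.trans' (by linarith only [h210_6])
lemma mono3 {f : Fin 3 → ℝ} (h : f 0 ≤ f 1 ∧ f 1 ≤ f 2) : Monotone f := by
  intro i j hij
  fin_cases i <;> fin_cases j <;> first | exact le_rfl | exact h.1 | exact h.2 | exact h.1.trans h.2 | exact absurd hij (by decide)

lemma sufficiency {l : Fin 3 → Fin 3 → ℝ} (hnonneg : ∀ a i, 0 ≤ l a i)
    (hord : ∀ a, l a 0 ≤ l a 1 ∧ l a 1 ≤ l a 2)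
    (hsum : ∀ a, l a 0 + l a 1 + l a 2 = 1)
    (h : ∀ a b c : Fin 3, a ≠ b → a ≠ c → b ≠ c → Seven (l a) (l b) (l c)) :
    ∃ c : Fin 3 → Fin 3 → Fin 3 → ℂ,
        (∑ i : Fin 3, ∑ j : Fin 3, ∑ k : Fin 3, ‖c i j k‖ ^ 2) = 1 ∧
        IsOrderedSpectrum (rho1 c) (l 0) ∧
        IsOrderedSpectrum (rho2 c) (l 1) ∧
        IsOrderedSpectrum (rho3 c) (l 2) := by
  have hK := node33 (P_of hnonneg hord hsum h) (fun a => a) Function.injective_id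
  rw [hsum] at hK
  obtain ⟨c, hc⟩ := exists_state psi_ne hK
  exact ⟨c, hc.n, spectrum_diag _ (mono3 (hord 0)) hc.r1, spectrum_diag _ (mono3 (hord 1)) hc.r2,
    spectrum_diag _ (mono3 (hord 2)) hc.r3⟩

end TQ

/-- Theorem 1: nine ordered nonnegative numbers summing to one for each qutrit are the
eigenvalues of the three one-particle reduced density matrices of a pure three-qutrit
state if and only if the seven families of inequalities hold. -/
theorem three_qutrit_main (l : Fin 3 → Fin 3 → ℝ)
    (hnonneg : ∀ a i, 0 ≤ l a i)
    (hord : ∀ a, l a 0 ≤ l a 1 ∧ l a 1 ≤ l a 2)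
    (hsum : ∀ a, l a 0 + l a 1 + l a 2 = 1) :
    (∃ c : Fin 3 → Fin 3 → Fin 3 → ℂ,
        (∑ i : Fin 3, ∑ j : Fin 3, ∑ k : Fin 3, ‖c i j k‖ ^ 2) = 1 ∧
        IsOrderedSpectrum (rho1 c) (l 0) ∧
        IsOrderedSpectrum (rho2 c) (l 1) ∧
        IsOrderedSpectrum (rho3 c) (l 2)) ↔
      (∀ a b c : Fin 3, a ≠ b → a ≠ c → b ≠ c →
        (l a 1 + l a 0 ≤ l b 1 + l b 0 + l c 1 + l c 0) ∧
        (l a 2 + l a 0 ≤ l b 1 + l b 0 + l c 2 + l c 0) ∧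
        (l a 1 + l a 2 ≤ l b 1 + l b 0 + l c 1 + l c 2) ∧
        (2 * l a 1 + l a 0 ≤ 2 * l b 1 + l b 0 + 2 * l c 1 + l c 0) ∧
        (2 * l a 0 + l a 1 ≤ 2 * l b 1 + l b 0 + 2 * l c 0 + l c 1) ∧
        (2 * l a 1 + l a 2 ≤ 2 * l b 1 + l b 0 + 2 * l c 1 + l c 2) ∧
        (2 * l a 1 + l a 2 ≤ 2 * l b 0 + l b 1 + 2 * l c 2 + l c 1)) := by
  constructor
  · rintro ⟨c', hn, h1, h2, h3⟩ a b c hab hac hbc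
    obtain ⟨c'', h⟩ := TQ.IsR_of hn h1 h2 h3
    exact TQ.necessity l hord hsum h a b c hab hac hbc
  · intro h
    exact TQ.sufficiency hnonneg hord hsum h
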